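/- arXiv:1304.0562 — 4 statements merged into one kernel-verified Lean document; each statement's English description precedes it below -/
import Mathlib

section
/- For every c > 0 there exists a constant C, depending only on c, such that for every a > 0, all x, y ∈ (0,a) and every t with 0 < t ≤ a²: ∫_0^t ∫_0^a p^a_s(x,z)·e^{−cz}·p^a_{t−s}(z,y) dz ds ≤ C·p^a_t(x,y). -/
open Real MeasureTheory Set Filter

/-- Transition density of Brownian motion killed upon exiting `(0,a)`. -/
noncomputable def pker (a t x y : ℝ) : ℝ :=
  (2/a) * ∑' n : ℕ, Real.exp (-(π^2) * ((n : ℝ) + 1)^2 * t / (2 * a^2)) *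
    Real.sin (π * ((n : ℝ) + 1) * x / a) * Real.sin (π * ((n : ℝ) + 1) * y / a)



lemma pker_image (t x y : ℝ) (ht : 0 < t) :
    ∃ S : ℝ, HasSum (fun k : ℤ => Real.exp (-(2/t) * ((k:ℝ) * (k + y - x)))
        - Real.exp (-(2/t) * ((x + k) * (y + k)))) S ∧
      pker 1 t x y = 1 / √(2 * π * t) * Real.exp (-(y - x)^2 / (2*t)) * S := by
  have hτ : 0 < π * t / 2 := by positivity
  have hτ' : 0 < 1 / (π * t / 2) := by positivity
  have c1 := HurwitzZeta.hasSum_nat_cosKernel₀ ((y - x)/2) hτ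
  have c2 := HurwitzZeta.hasSum_nat_cosKernel₀ ((y + x)/2) hτ
  have e1 := HurwitzZeta.hasSum_int_evenKernel ((y - x)/2) hτ'
  have e2 := HurwitzZeta.hasSum_int_evenKernel ((y + x)/2) hτ'
  have f1 := HurwitzZeta.evenKernel_functional_equation (((y - x)/2 : ℝ) : UnitAddCircle) (1 / (π * t / 2))
  have f2 := HurwitzZeta.evenKernel_functional_equation (((y + x)/2 : ℝ) : UnitAddCircle) (1 / (π * t / 2))
  rw [one_div_one_div] at f1 f2
  have hsq : 1 / (1 / (π * t / 2)) ^ (1/2 : ℝ) = √(π * t / 2) := by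
    rw [← Real.sqrt_eq_rpow, Real.sqrt_div zero_le_one, Real.sqrt_one, one_div_one_div]
  rw [hsq] at f1 f2
  have hpk : pker 1 t x y = (1/2) * (HurwitzZeta.cosKernel (((y - x)/2 : ℝ) : UnitAddCircle) (π * t / 2)
      - HurwitzZeta.cosKernel (((y + x)/2 : ℝ) : UnitAddCircle) (π * t / 2)) := by
    have h := (c1.sub c2).mul_left (1/4)
    unfold pker
    rw [show (fun n : ℕ => Real.exp (-(π^2) * ((n : ℝ) + 1)^2 * t / (2 * 1^2)) *
      Real.sin (π * ((n : ℝ) + 1) * x / 1) * Real.sin (π * ((n : ℝ) + 1) * y / 1)) = _ from ?_, h.tsum_eq]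
    · ring
    · funext n
      have a1 : 2 * π * ((y - x)/2) * ((n:ℝ) + 1) = π * (n+1) * y - π * (n+1) * x := by ring
      have a2 : 2 * π * ((y + x)/2) * ((n:ℝ) + 1) = π * (n+1) * y + π * (n+1) * x := by ring
      have a3 : -π * ((n:ℝ) + 1)^2 * (π * t / 2) = -(π^2) * ((n : ℝ) + 1)^2 * t / (2 * 1^2) := by ring
      rw [a1, a2, a3, Real.cos_sub, Real.cos_add]
      simp only [div_one]
      ring
  have hd := (e1.sub e2).mul_left (Real.exp ((y - x)^2/(2*t)))
  refine ⟨_, hd.congr_fun ?_, ?_⟩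
  · intro k
    rw [mul_sub (Real.exp _), ← Real.exp_add, ← Real.exp_add]
    congr 2
    · field_simp
      ring
    · field_simp
      ring
  · rw [hpk, f1, f2]
    have hs : √(2*π*t) = 2 * √(π * t / 2) := by
      rw [show 2*π*t = 2^2 * (π * t/2) by ring, Real.sqrt_mul (by norm_num), Real.sqrt_sq (by norm_num)]
    have hs0 : √(π * t / 2) ≠ 0 := (Real.sqrt_pos.2 hτ).ne'
    rw [hs]
    have : Real.exp (-(y - x)^2/(2*t)) = (Real.exp ((y - x)^2/(2*t)))⁻¹ := by
      rw [← Real.exp_neg]; congr 1; ring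
    rw [this]
    have := Real.exp_ne_zero ((y - x)^2/(2*t))
    field_simp

lemma pker_symm (a t x y : ℝ) : pker a t x y = pker a t y x := by
  unfold pker
  congr 1
  exact tsum_congr fun n => by ring

lemma pker_refl (t x y : ℝ) : pker 1 t (1 - x) (1 - y) = pker 1 t x y := by
  unfold pker
  congr 1
  refine tsum_congr fun n => ?_
  have h : ∀ x : ℝ, Real.sin (π * ((n : ℝ) + 1) * (1 - x) / 1) = (-1)^n * Real.sin (π * ((n : ℝ) + 1) * x / 1) := by
    intro x
    have : π * ((n : ℝ) + 1) * (1 - x) / 1 = ((n+1 : ℕ):ℝ) * π - π * ((n : ℝ) + 1) * x / 1 := by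
      push_cast; ring
    rw [this, Real.sin_nat_mul_pi_sub]
    ring
  rw [h, h]
  have : ((-1:ℝ)^n) * (-1)^n = 1 := by rw [← mul_pow]; simp
  linear_combination (Real.exp (-(π^2) * ((n : ℝ) + 1)^2 * t / (2 * 1^2)) *
    Real.sin (π * ((n : ℝ) + 1) * x / 1) * Real.sin (π * ((n : ℝ) + 1) * y / 1)) * this

lemma pker_scale (a t x y : ℝ) (ha : 0 < a) :
    pker a t x y = (1/a) * pker 1 (t/a^2) (x/a) (y/a) := by
  unfold pker
  rw [← mul_assoc]
  congr 1
  · ring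
  refine tsum_congr fun n => ?_
  have h1 : -(π^2) * ((n : ℝ) + 1)^2 * t / (2 * a^2) = -(π^2) * ((n : ℝ) + 1)^2 * (t/a^2) / (2 * 1^2) := by
    field_simp
  have h2 : ∀ x : ℝ, π * ((n : ℝ) + 1) * x / a = π * ((n : ℝ) + 1) * (x/a) / 1 := by
    intro x
    field_simp
  rw [h1, h2, h2]


lemma bern (l w : ℝ) (hl : 1 ≤ l) : 1 - Real.exp (-(l*w)) ≤ l * (1 - Real.exp (-w)) := by
  have h := one_add_mul_self_le_rpow_one_add (s := Real.exp (-w) - 1) (by linarith [Real.exp_pos (-w)]) hl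
  have h2 : (1 + (Real.exp (-w) - 1)) ^ l = Real.exp (-(l*w)) := by
    rw [add_sub_cancel, ← Real.exp_mul]; congr 1; ring
  rw [h2] at h
  linarith

lemma omexp_nonneg {w : ℝ} (hw : 0 ≤ w) : 0 ≤ 1 - Real.exp (-w) := by
  have : Real.exp (-w) ≤ 1 := Real.exp_le_one_iff.2 (by linarith)
  linarith

lemma omexp_le (w : ℝ) : 1 - Real.exp (-w) ≤ w := by
  linarith [Real.add_one_le_exp (-w)]

lemma mulexp_le_omexp (w : ℝ) : w * Real.exp (-w) ≤ 1 - Real.exp (-w) := by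
  have h : Real.exp w * Real.exp (-w) = 1 := by rw [← Real.exp_add]; simp
  have := mul_le_mul_of_nonneg_right (Real.add_one_le_exp w) (Real.exp_pos (-w)).le
  linarith

lemma mulexp_le_one (w : ℝ) : w * Real.exp (-w) ≤ 1 := by
  linarith [mulexp_le_omexp w, Real.exp_pos (-w)]

lemma bracket_bd (s u v α β : ℝ) (hs : 16 ≤ s) (hu : 0 ≤ u) (hv : 0 ≤ v) (hα : u ≤ 2 * α) (hβ : v ≤ 2 * β) :
    (1/2) * ((1 - Real.exp (-(s*α))) * (1 - Real.exp (-(s*β)))) ≤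
      1 + Real.exp (-(s*(α+β+2*(u*v)))) - Real.exp (-(s*α)) - Real.exp (-(s*β)) ∧
    1 + Real.exp (-(s*(α+β+2*(u*v)))) - Real.exp (-(s*α)) - Real.exp (-(s*β)) ≤
      ((1 - Real.exp (-(s*α))) * (1 - Real.exp (-(s*β)))) := by
  have e1 : Real.exp (-(s*(α+β+2*(u*v)))) = Real.exp (-(s*α)) * Real.exp (-(s*β)) * Real.exp (-(2*s*(u*v))) := by
    rw [← Real.exp_add, ← Real.exp_add]; congr 1; ring
  rw [e1]
  have hα0 : 0 ≤ α := by linarith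
  have hβ0 : 0 ≤ β := by linarith
  have hsα : 0 ≤ s * α := by positivity
  have hsβ : 0 ≤ s * β := by positivity
  have p1 := omexp_nonneg hsα
  have p2 := omexp_nonneg hsβ
  have q1 := Real.exp_pos (-(s*α))
  have q2 := Real.exp_pos (-(s*β))
  have huv : 0 ≤ 2 * s * (u*v) := by positivity
  have p3 := omexp_nonneg huv
  have p4 := omexp_le (2 * s * (u*v))
  constructor
  · have k1 : Real.exp (-(s*α)) * Real.exp (-(s*β)) * (1 - Real.exp (-(2*s*(u*v)))) ≤
        Real.exp (-(s*α)) * Real.exp (-(s*β)) * (2 * s * ((2*α) * (2*β))) := by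
      apply mul_le_mul_of_nonneg_left _ (by positivity)
      refine p4.trans ?_
      gcongr
    have k2 : (s*α * Real.exp (-(s*α))) * (s*β * Real.exp (-(s*β))) ≤ (1 - Real.exp (-(s*α))) * (1 - Real.exp (-(s*β))) := by
      apply mul_le_mul (mulexp_le_omexp _) (mulexp_le_omexp _) (by positivity) p1
    have k3 : Real.exp (-(s*α)) * Real.exp (-(s*β)) * (2 * s * ((2*α) * (2*β))) ≤
        (1/2) * ((s*α * Real.exp (-(s*α))) * (s*β * Real.exp (-(s*β)))) := by
      have : 0 ≤ Real.exp (-(s*α)) * Real.exp (-(s*β)) * (α * β * s) := by positivity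
      nlinarith
    nlinarith
  · have : 0 ≤ Real.exp (-(s*α)) * Real.exp (-(s*β)) * (1 - Real.exp (-(2*s*(u*v)))) := by positivity
    nlinarith

lemma sum_opp (s : ℝ) (hs : 16 ≤ s) (x y S : ℝ) (hx : 0 < x) (hx2 : x ≤ 1/2) (hy : y < 1) (hy2 : 1/2 ≤ y)
    (h : HasSum (fun k : ℤ => Real.exp (-s * ((k:ℝ) * (k + y - x)))
        - Real.exp (-s * ((x + k) * (y + k)))) S) :
    (1/2) * ((1 - Real.exp (-(s*(x*y)))) * (1 - Real.exp (-(s*((1-x)*(1-y)))))) ≤ S ∧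
    S ≤ (∑' k : ℕ, 4 * (2*(k:ℝ)+1)^2 * Real.exp (-(k:ℝ))) *
      ((1 - Real.exp (-(s*(x*y)))) * (1 - Real.exp (-(s*((1-x)*(1-y)))))) := by
  obtain ⟨v, rfl⟩ : ∃ v, y = 1 - v := ⟨1 - y, by ring⟩
  have hv : 0 < v := by linarith
  have hv2 : v ≤ 1/2 := by linarith
  have h1 := h.nat_add_neg_add_one
  have hsum : Summable (fun k : ℕ => 4 * (2*(k:ℝ)+1)^2 * Real.exp (-(k:ℝ))) := by
    have a0 := Real.summable_pow_mul_exp_neg_nat_mul 0 one_pos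
    have a1 := Real.summable_pow_mul_exp_neg_nat_mul 1 one_pos
    have a2 := Real.summable_pow_mul_exp_neg_nat_mul 2 one_pos
    refine (((a2.mul_left 16).add (a1.mul_left 16)).add (a0.mul_left 4)).congr ?_
    intro k
    simp only [neg_one_mul]
    ring
  have hA : 0 ≤ 1 - Real.exp (-(s*(x*(1-v)))) := omexp_nonneg (by
    have : 0 < 1 - v := by linarith
    positivity)
  have hB : 0 ≤ 1 - Real.exp (-(s*((1-x)*(1-(1-v))))) := omexp_nonneg (by
    have : 0 < 1 - x := by linarith
    have : 0 < 1 - (1 - v) := by linarith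
    positivity)
  have key : ∀ k : ℕ, (Real.exp (-s * (((k:ℤ):ℝ) * (((k:ℤ):ℝ) + (1 - v) - x)))
        - Real.exp (-s * ((x + ((k:ℤ):ℝ)) * (1 - v + ((k:ℤ):ℝ))))) +
      (Real.exp (-s * (((-((k:ℤ)+1):ℤ):ℝ) * (((-((k:ℤ)+1):ℤ):ℝ) + (1 - v) - x)))
        - Real.exp (-s * ((x + ((-((k:ℤ)+1):ℤ):ℝ)) * (1 - v + ((-((k:ℤ)+1):ℤ):ℝ))))) =
      Real.exp (-s * ((k:ℝ) * (k + 1 - v - x))) * (1 + Real.exp (-(s*(((2*k+1)*x - x*v)+((2*k+1)*v-x*v)+2*(x*v))))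
        - Real.exp (-(s*((2*k+1)*x - x*v))) - Real.exp (-(s*((2*k+1)*v-x*v)))) := by
    intro k
    push_cast
    have c1 : -s * ((k:ℝ) * (k + (1 - v) - x)) = -s * ((k:ℝ) * (k + 1 - v - x)) := by ring
    have c2 : -s * (-((k:ℝ)+1) * (-((k:ℝ)+1) + (1 - v) - x)) = -s * ((k:ℝ) * (k + 1 - v - x)) + -(s*(((2*k+1)*x - x*v)+((2*k+1)*v-x*v)+2*(x*v))) := by ring
    have c3 : -s * ((x + k) * (1 - v + k)) = -s * ((k:ℝ) * (k + 1 - v - x)) + -(s*((2*k+1)*x - x*v)) := by ring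
    have c4 : -s * ((x + -((k:ℝ)+1)) * (1 - v + -((k:ℝ)+1))) = -s * ((k:ℝ) * (k + 1 - v - x)) + -(s*((2*k+1)*v - x*v)) := by ring
    rw [c1, c2, c3, c4, Real.exp_add, Real.exp_add, Real.exp_add]
    ring
  have hb : ∀ k : ℕ, _ := fun k : ℕ => bracket_bd s x v ((2*k+1)*x - x*v) ((2*k+1)*v-x*v) hs hx.le hv.le
    (by nlinarith [mul_nonneg (Nat.cast_nonneg (α := ℝ) k) hx.le]) (by nlinarith [mul_nonneg (Nat.cast_nonneg (α := ℝ) k) hv.le])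
  have h2 : HasSum (fun k : ℕ => Real.exp (-s * ((k:ℝ) * (k + 1 - v - x))) * (1 + Real.exp (-(s*(((2*k+1)*x - x*v)+((2*k+1)*v-x*v)+2*(x*v))))
        - Real.exp (-(s*((2*k+1)*x - x*v))) - Real.exp (-(s*((2*k+1)*v-x*v))))) S :=
    h1.congr_fun fun k => (key k).symm
  have pn : ∀ k : ℕ, 0 ≤ (1 - Real.exp (-(s*((2*(k:ℝ)+1)*x - x*v)))) * (1 - Real.exp (-(s*((2*k+1)*v-x*v)))) := by
    intro k
    apply mul_nonneg <;> apply omexp_nonneg <;> apply mul_nonneg (by linarith)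
    · nlinarith [mul_nonneg (Nat.cast_nonneg (α := ℝ) k) hx.le]
    · nlinarith [mul_nonneg (Nat.cast_nonneg (α := ℝ) k) hv.le]
  constructor
  · have := h2.summable.le_tsum 0 (fun k _ => mul_nonneg (Real.exp_pos _).le (le_trans (by linarith [pn k]) (hb k).1))
    rw [h2.tsum_eq] at this
    refine le_trans ?_ this
    have h0 := (hb 0).1
    simp only [Nat.cast_zero, mul_zero, zero_add, one_mul, zero_mul, Real.exp_zero] at h0 ⊢
    refine le_trans (le_of_eq ?_) h0
    ring_nf
  · rw [← hsum.tsum_mul_right, ← h2.tsum_eq]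
    refine h2.summable.tsum_le_tsum ?_ (hsum.mul_right _)
    intro k
    have hk : (0:ℝ) ≤ k := Nat.cast_nonneg k
    have hkk : (k:ℝ) ≤ k * k := by exact_mod_cast Nat.le_mul_self k
    have E1 : Real.exp (-s * ((k:ℝ) * (k + 1 - v - x))) ≤ Real.exp (-(k:ℝ)) := by
      apply Real.exp_le_exp.2
      have : (k:ℝ) ≤ k * (k + 1 - v - x) := by nlinarith
      nlinarith
    have g : ∀ x v : ℝ, 0 < x → 0 < v → v ≤ 1/2 → 1 - Real.exp (-(s*((2*k+1)*x - x*v))) ≤ 2*(2*k+1) * (1 - Real.exp (-(s*(x*(1-v))))) := by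
      intro x v hx hv hv2
      have h1v : 0 < 1 - v := by linarith
      have hl : 1 ≤ (2*k+1-v)/(1-v) := by rw [le_div_iff₀ h1v]; linarith
      have := bern ((2*k+1-v)/(1-v)) (s*(x*(1-v))) hl
      rw [show (2*k+1-v)/(1-v) * (s*(x*(1-v))) = s*((2*k+1)*x - x*v) by field_simp] at this
      refine this.trans ?_
      apply mul_le_mul_of_nonneg_right _ (omexp_nonneg (by positivity))
      rw [div_le_iff₀ h1v]
      nlinarith [mul_nonneg hk hv.le]
    have g1 := g x v hx hv hv2
    have g2 := g v x hv hx hx2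
    rw [mul_comm v x, show v * (1-x) = (1-x)*(1-(1-v)) by ring] at g2
    have hvv : 0 ≤ 1 - Real.exp (-(s*((2*(k:ℝ)+1)*v - x*v))) := omexp_nonneg (mul_nonneg (by linarith) (by nlinarith [mul_nonneg hk hv.le]))
    calc _ ≤ Real.exp (-(k:ℝ)) * ((1 - Real.exp (-(s*((2*(k:ℝ)+1)*x - x*v)))) * (1 - Real.exp (-(s*((2*k+1)*v-x*v))))) := by
          apply mul_le_mul E1 (hb k).2 (le_trans (by linarith [pn k]) (hb k).1) (Real.exp_pos _).le
      _ ≤ Real.exp (-(k:ℝ)) * ((2*(2*k+1) * (1 - Real.exp (-(s*(x*(1-v)))))) * (2*(2*k+1) * (1 - Real.exp (-(s*((1-x)*(1-(1-v)))))))) := by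
          apply mul_le_mul_of_nonneg_left _ (Real.exp_pos _).le
          apply mul_le_mul g1 g2 hvv (by positivity)
      _ = _ := by ring


lemma exp_neg_four : Real.exp (-4) ≤ 1/32 := by
  have h : (2.7:ℝ)^4 ≤ Real.exp 4 := by
    rw [show (4:ℝ) = ((4:ℕ):ℝ) * 1 by norm_num, Real.exp_nat_mul]
    gcongr
    linarith [Real.exp_one_gt_d9]
  rw [Real.exp_neg, ← one_div]
  apply one_div_le_one_div_of_le (by norm_num)
  norm_num at h ⊢
  linarith

lemma exp_neg_five : Real.exp (-5) ≤ 1/64 := by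
  have h : (2.7:ℝ)^5 ≤ Real.exp 5 := by
    rw [show (5:ℝ) = ((5:ℕ):ℝ) * 1 by norm_num, Real.exp_nat_mul]
    gcongr
    linarith [Real.exp_one_gt_d9]
  rw [Real.exp_neg, ← one_div]
  apply one_div_le_one_div_of_le (by norm_num)
  norm_num at h ⊢
  linarith

lemma exp_neg_one_le_half : Real.exp (-1) ≤ 1/2 := by
  rw [Real.exp_neg, ← one_div]
  apply one_div_le_one_div_of_le (by norm_num)
  linarith [Real.exp_one_gt_d9]

lemma exp_neg_nat_le (n : ℕ) : Real.exp (-(n:ℝ)) ≤ (1/2)^n := by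
  rw [show -(n:ℝ) = n * (-1) by ring, Real.exp_nat_mul]
  gcongr
  exact exp_neg_one_le_half

/-- error term for both points in the lower half -/
lemma err_bd (s y : ℝ) (n : ℕ) (hs : 16 ≤ s) (hy : 0 < y) (hy2 : y ≤ 1/2) :
    (2*((n:ℝ)+1)/y) * (1 - Real.exp (-(2*s*((n:ℝ)+1)*y))) * Real.exp (-(s*((n:ℝ)+1-y)^2)) ≤ (1/4)*(1/2)^n := by
  have hn : (0:ℝ) ≤ n := Nat.cast_nonneg n
  have hE := exp_neg_nat_le n
  have hn1 : (n:ℝ) + 1 ≤ Real.exp n := Real.add_one_le_exp _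
  have hexp2 : ((n:ℝ)+1)^2 * Real.exp (-(3*(n:ℝ))) ≤ Real.exp (-(n:ℝ)) := by
    have : Real.exp (-(n:ℝ)) = (Real.exp n)^2 * Real.exp (-(3*(n:ℝ))) := by
      rw [← Real.exp_nat_mul, ← Real.exp_add]; congr 1; push_cast; ring
    rw [this]
    gcongr
  have hexp1 : ((n:ℝ)+1) * Real.exp (-(3*(n:ℝ))) ≤ Real.exp (-(n:ℝ)) := by
    refine le_trans ?_ hexp2
    gcongr
    nlinarith
  rcases le_total (1/4) y with h4 | h4
  · have a1 : (2*((n:ℝ)+1)/y) ≤ 8 * ((n:ℝ)+1) := by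
      rw [div_le_iff₀ hy]; nlinarith
    have a2 : (1 - Real.exp (-(2*s*((n:ℝ)+1)*y))) ≤ 1 := by linarith [Real.exp_pos (-(2*s*((n:ℝ)+1)*y))]
    have a3 : Real.exp (-(s*((n:ℝ)+1-y)^2)) ≤ Real.exp (-4) * Real.exp (-(3*(n:ℝ))) := by
      rw [← Real.exp_add]
      apply Real.exp_le_exp.2
      have : 1/4 + (n:ℝ) ≤ ((n:ℝ)+1-y)^2 := by nlinarith
      nlinarith
    calc _ ≤ 8 * ((n:ℝ)+1) * 1 * (Real.exp (-4) * Real.exp (-(3*(n:ℝ)))) := by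
          gcongr
          exact omexp_nonneg (by positivity)
      _ = 8 * Real.exp (-4) * (((n:ℝ)+1) * Real.exp (-(3*(n:ℝ)))) := by ring
      _ ≤ 8 * (1/32) * (1/2)^n := by
        gcongr
        · exact exp_neg_four
        · exact hexp1.trans hE
      _ = _ := by ring
  · have a2 : (1 - Real.exp (-(2*s*((n:ℝ)+1)*y))) ≤ 2*s*((n:ℝ)+1)*y := omexp_le _
    have a3 : Real.exp (-(s*((n:ℝ)+1-y)^2)) ≤ Real.exp (-(s/4)) * (Real.exp (-5) * Real.exp (-(3*(n:ℝ)))) := by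
      rw [← Real.exp_add, ← Real.exp_add]
      apply Real.exp_le_exp.2
      have : 9/16 + (n:ℝ) ≤ ((n:ℝ)+1-y)^2 := by nlinarith
      nlinarith
    have a4 := mulexp_le_one (s/4)
    calc _ ≤ (2*((n:ℝ)+1)/y) * (2*s*((n:ℝ)+1)*y) * (Real.exp (-(s/4)) * (Real.exp (-5) * Real.exp (-(3*(n:ℝ))))) := by gcongr
      _ = 16 * (s/4 * Real.exp (-(s/4))) * Real.exp (-5) * (((n:ℝ)+1)^2 * Real.exp (-(3*(n:ℝ)))) := by field_simp; ring
      _ ≤ 16 * 1 * (1/64) * (1/2)^n := by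
        gcongr
        · exact exp_neg_five
        · exact hexp2.trans hE
      _ = _ := by ring

lemma sum_same (s : ℝ) (hs : 16 ≤ s) (x y S : ℝ) (hx : 0 < x) (hxy : x ≤ y) (hy2 : y ≤ 1/2)
    (h : HasSum (fun k : ℤ => Real.exp (-s * ((k:ℝ) * (k + y - x)))
        - Real.exp (-s * ((x + k) * (y + k)))) S) :
    (1/2) * (1 - Real.exp (-(s*(x*y)))) ≤ S ∧
    S ≤ 5 * (1 - Real.exp (-(s*(x*y)))) := by
  have hy : 0 < y := by linarith
  have h1 := h.nat_add_neg
  rw [← hasSum_nat_add_iff' 1] at h1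
  have hw0 : 0 ≤ 1 - Real.exp (-(s*(x*y))) := omexp_nonneg (by positivity)
  set w := Real.exp (-(s*(x*y))) with hw
  have hwpos : 0 < w := Real.exp_pos _
  have key : ∀ n : ℕ, (Real.exp (-s * ((((n+1:ℕ):ℤ):ℝ) * ((((n+1:ℕ):ℤ):ℝ) + y - x)))
        - Real.exp (-s * ((x + (((n+1:ℕ):ℤ):ℝ)) * (y + (((n+1:ℕ):ℤ):ℝ))))) +
      (Real.exp (-s * (((-((n+1:ℕ):ℤ):ℤ):ℝ) * (((-((n+1:ℕ):ℤ):ℤ):ℝ) + y - x)))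
        - Real.exp (-s * ((x + ((-((n+1:ℕ):ℤ):ℤ):ℝ)) * (y + ((-((n+1:ℕ):ℤ):ℤ):ℝ))))) =
      (1 - w) * (Real.exp (-(s*((n:ℝ)+1)*((n:ℝ)+1-(y-x)))) * (1 + Real.exp (-(2*s*((n:ℝ)+1)*(y-x)))))
       - Real.exp (-(s*(((n:ℝ)+1-x)*((n:ℝ)+1-y)))) * (1 - Real.exp (-(2*s*((n:ℝ)+1)*x))) * (1 - Real.exp (-(2*s*((n:ℝ)+1)*y))) := by
    intro n
    push_cast
    generalize (n:ℝ) + 1 = k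
    have c1 : -s * (k * (k + y - x)) = -(s*k*(k-(y-x))) + -(2*s*k*(y-x)) := by ring
    have c2 : -s * (-k * (-k + y - x)) = -(s*k*(k-(y-x))) := by ring
    have c3 : -s * ((x + k) * (y + k)) = -(s*((k-x)*(k-y))) + -(2*s*k*x) + -(2*s*k*y) := by ring
    have c4 : -s * ((x + -k) * (y + -k)) = -(s*((k-x)*(k-y))) := by ring
    have d1 : w * Real.exp (-(s*k*(k-(y-x)))) = Real.exp (-(s*((k-x)*(k-y)))) * Real.exp (-(2*s*k*x)) := by
      rw [hw, ← Real.exp_add, ← Real.exp_add]; congr 1; ring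
    have d2 : w * (Real.exp (-(s*k*(k-(y-x)))) * Real.exp (-(2*s*k*(y-x)))) = Real.exp (-(s*((k-x)*(k-y)))) * Real.exp (-(2*s*k*y)) := by
      rw [hw, ← Real.exp_add, ← Real.exp_add, ← Real.exp_add]; congr 1; ring
    rw [c1, c2, c3, c4, Real.exp_add, Real.exp_add, Real.exp_add]
    linear_combination d1 + d2
  have h2 := h1.congr_fun fun n => (key n).symm
  have hval : S + (Real.exp (-s * (((0:ℤ):ℝ) * (((0:ℤ):ℝ) + y - x))) - Real.exp (-s * ((x + ((0:ℤ):ℝ)) * (y + ((0:ℤ):ℝ))))) -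
     ∑ i ∈ Finset.range 1, ((Real.exp (-s * (((i:ℤ):ℝ) * (((i:ℤ):ℝ) + y - x)))
        - Real.exp (-s * ((x + ((i:ℤ):ℝ)) * (y + ((i:ℤ):ℝ))))) +
      (Real.exp (-s * (((-(i:ℤ):ℤ):ℝ) * (((-(i:ℤ):ℤ):ℝ) + y - x)))
        - Real.exp (-s * ((x + ((-(i:ℤ):ℤ):ℝ)) * (y + ((-(i:ℤ):ℤ):ℝ))))))
      = S - (1 - w) := by
    rw [Finset.sum_range_one]
    simp only [Nat.cast_zero, Int.cast_zero, neg_zero, zero_mul, mul_zero, add_zero, Real.exp_zero, hw]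
    rw [neg_mul]
    ring
  rw [hval] at h2
  have hgeo : HasSum (fun n : ℕ => ((1:ℝ)/2)^n) 2 := hasSum_geometric_two
  have b1 : ∀ n : ℕ, 0 ≤ 1 - Real.exp (-(2*s*((n:ℝ)+1)*x)) := fun n => omexp_nonneg (by positivity)
  have b2 : ∀ n : ℕ, 0 ≤ 1 - Real.exp (-(2*s*((n:ℝ)+1)*y)) := fun n => omexp_nonneg (by positivity)
  constructor
  · have := hasSum_le (f := fun n : ℕ => -((1-w) * (1/4)) * (1/2)^n) ?_ (hgeo.mul_left (-((1-w) * (1/4)))) h2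
    · linarith
    · intro n
      have hn : (0:ℝ) ≤ n := Nat.cast_nonneg n
      have e := err_bd s y n hs hy hy2
      have l1 : 1 ≤ 2*((n:ℝ)+1)/y := by rw [le_div_iff₀ hy]; nlinarith
      have l2 := bern _ (s*(x*y)) l1
      rw [show 2*((n:ℝ)+1)/y * (s*(x*y)) = 2*s*((n:ℝ)+1)*x by field_simp] at l2
      have l3 : Real.exp (-(s*(((n:ℝ)+1-x)*((n:ℝ)+1-y)))) ≤ Real.exp (-(s*((n:ℝ)+1-y)^2)) := by
        apply Real.exp_le_exp.2
        have : ((n:ℝ)+1-y)^2 ≤ ((n:ℝ)+1-x)*((n:ℝ)+1-y) := by nlinarith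
        nlinarith
      have l4 : Real.exp (-(s*(((n:ℝ)+1-x)*((n:ℝ)+1-y)))) * (1 - Real.exp (-(2*s*((n:ℝ)+1)*x))) * (1 - Real.exp (-(2*s*((n:ℝ)+1)*y)))
          ≤ (1-w) * ((1/4)*(1/2)^n) := by
        calc _ ≤ Real.exp (-(s*((n:ℝ)+1-y)^2)) * (2*((n:ℝ)+1)/y * (1 - w)) * (1 - Real.exp (-(2*s*((n:ℝ)+1)*y))) := by
              gcongr
              · exact b2 n
              · exact b1 n
          _ = (1 - w) * ((2*((n:ℝ)+1)/y) * (1 - Real.exp (-(2*s*((n:ℝ)+1)*y))) * Real.exp (-(s*((n:ℝ)+1-y)^2))) := by ring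
          _ ≤ _ := by gcongr
      have l5 : 0 ≤ (1 - w) * (Real.exp (-(s*((n:ℝ)+1)*((n:ℝ)+1-(y-x)))) * (1 + Real.exp (-(2*s*((n:ℝ)+1)*(y-x))))) := by positivity
      linarith
  · have := hasSum_le (g := fun n : ℕ => ((1-w) * 2) * (1/2)^n) ?_ h2 (hgeo.mul_left ((1-w) * 2))
    · linarith
    · intro n
      have hn : (0:ℝ) ≤ n := Nat.cast_nonneg n
      have l4 : 0 ≤ Real.exp (-(s*(((n:ℝ)+1-x)*((n:ℝ)+1-y)))) * (1 - Real.exp (-(2*s*((n:ℝ)+1)*x))) * (1 - Real.exp (-(2*s*((n:ℝ)+1)*y))) :=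
        mul_nonneg (mul_nonneg (Real.exp_pos _).le (b1 n)) (b2 n)
      have l5 : Real.exp (-(s*((n:ℝ)+1)*((n:ℝ)+1-(y-x)))) ≤ (1/2)^n := by
        refine le_trans (Real.exp_le_exp.2 ?_) (exp_neg_nat_le n)
        have : (n:ℝ)/2 ≤ ((n:ℝ)+1)*((n:ℝ)+1-(y-x)) := by nlinarith
        nlinarith
      have l6 : Real.exp (-(2*s*((n:ℝ)+1)*(y-x))) ≤ 1 := Real.exp_le_one_iff.2 (by
        have : 0 ≤ y - x := by linarith
        have : 0 ≤ 2*s*((n:ℝ)+1)*(y-x) := by positivity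
        linarith)
      have l7 : (1 - w) * (Real.exp (-(s*((n:ℝ)+1)*((n:ℝ)+1-(y-x)))) * (1 + Real.exp (-(2*s*((n:ℝ)+1)*(y-x))))) ≤ (1-w) * ((1/2)^n * (1 + 1)) := by
        gcongr
      linarith


noncomputable def phi (a t x y : ℝ) : ℝ :=
  min 1 (x*y/t) * min 1 ((a-x)*(a-y)/t) * ((1/√t) * Real.exp (-(x-y)^2/(2*t)))

lemma phi_symm (a t x y : ℝ) : phi a t x y = phi a t y x := by
  unfold phi
  rw [mul_comm x y, mul_comm (a-x) (a-y), show (x-y)^2 = (y-x)^2 by ring]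

lemma phi_refl (t x y : ℝ) : phi 1 t (1-x) (1-y) = phi 1 t x y := by
  unfold phi
  rw [show (1 - (1-x)) = x by ring, show (1-(1-y)) = y by ring, show (1-x-(1-y))^2 = (x-y)^2 by ring]
  ring

lemma omexp_min (t A : ℝ) (ht : 0 < t) (hA : 0 ≤ A) :
    (1/2) * min 1 (A/t) ≤ 1 - Real.exp (-((2/t)*A)) ∧ 1 - Real.exp (-((2/t)*A)) ≤ 2 * min 1 (A/t) := by
  have e : (2/t)*A = 2*(A/t) := by ring
  rw [e]
  have hα : 0 ≤ A/t := by positivity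
  generalize A/t = α at *
  have m0 : 0 ≤ min 1 α := le_min zero_le_one hα
  constructor
  · have h1 : Real.exp (-(2*α)) ≤ Real.exp (-(min 1 α)) := by
      apply Real.exp_le_exp.2
      have := min_le_right 1 α
      linarith
    have h2 := mulexp_le_omexp (min 1 α)
    have h3 : 1 - min 1 α ≤ Real.exp (-(min 1 α)) := Real.one_sub_le_exp_neg _
    have h4 : min 1 α ≤ 1 := min_le_left _ _
    -- 1 - e^{-m} ≥ m/(1+m)
    have h5 : Real.exp (-(min 1 α)) * (1 + min 1 α) ≤ 1 := by nlinarith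
    nlinarith [Real.exp_pos (-(min 1 α))]
  · rcases le_total 1 α with h | h
    · rw [min_eq_left h]; linarith [Real.exp_pos (-(2*α))]
    · rw [min_eq_right h]; exact omexp_le _

lemma small_bd : ∃ K : ℝ, 0 < K ∧ ∀ t x y : ℝ, 0 < t → t ≤ 1/8 → 0 < x → x < 1 → 0 < y → y < 1 →
    (1/8) * (1/√(2*π)) * phi 1 t x y ≤ pker 1 t x y ∧ pker 1 t x y ≤ K * phi 1 t x y := by
  set K0 := (∑' k : ℕ, 4 * (2*(k:ℝ)+1)^2 * Real.exp (-(k:ℝ))) with hK0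
  have hK00 : 0 ≤ K0 := tsum_nonneg fun k => by positivity
  have main : ∀ t x y : ℝ, 0 < t → t ≤ 1/8 → 0 < x → x ≤ y → x ≤ 1/2 → y < 1 →
    (1/8) * (1/√(2*π)) * phi 1 t x y ≤ pker 1 t x y ∧ pker 1 t x y ≤ ((4*K0 + 10) * (1/√(2*π))) * phi 1 t x y := by
    intro t x y ht ht8 hx hxy hx2 hy
    have hy0 : 0 < y := by linarith
    have hx1 : 0 < 1 - x := by linarith
    have hy1 : 0 < 1 - y := by linarith
    obtain ⟨S, hS, hp⟩ := pker_image t x y ht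
    have hs : 16 ≤ 2/t := by rw [le_div_iff₀ ht]; linarith
    have oA := omexp_min t (x*y) ht (by positivity)
    have oB := omexp_min t ((1-x)*(1-y)) ht (by positivity)
    have mA : 0 ≤ min 1 (x*y/t) := le_min zero_le_one (by positivity)
    have mB : 0 ≤ min 1 ((1-x)*(1-y)/t) := le_min zero_le_one (by positivity)
    have hfac : pker 1 t x y = (1/√(2*π)) * ((1/√t) * Real.exp (-(x-y)^2/(2*t))) * S := by
      rw [hp, Real.sqrt_mul (by positivity), show (y-x)^2 = (x-y)^2 by ring]
      ring
    have hSb : (1/8) * (min 1 (x*y/t) * min 1 ((1-x)*(1-y)/t)) ≤ S ∧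
        S ≤ (4*K0+10) * (min 1 (x*y/t) * min 1 ((1-x)*(1-y)/t)) := by
      rcases le_total y (1/2) with h | h
      · have := sum_same (2/t) hs x y S hx hxy h hS
        have hB : min 1 ((1-x)*(1-y)/t) = 1 := by
          apply min_eq_left
          rw [le_div_iff₀ ht]
          nlinarith
        rw [hB, mul_one]
        constructor
        · linarith [this.1, oA.1]
        · have : 0 ≤ K0 * min 1 (x*y/t) := by positivity
          linarith [oA.2]
      · have := sum_opp (2/t) hs x y S hx hx2 hy h hS
        rw [← hK0] at this
        have l1 : ((1/2) * min 1 (x*y/t)) * ((1/2) * min 1 ((1-x)*(1-y)/t)) ≤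
          (1 - Real.exp (-(2/t*(x*y)))) * (1 - Real.exp (-(2/t*((1-x)*(1-y))))) :=
          mul_le_mul oA.1 oB.1 (by positivity) (le_trans (by positivity) oA.1)
        have l2 : (1 - Real.exp (-(2/t*(x*y)))) * (1 - Real.exp (-(2/t*((1-x)*(1-y))))) ≤ (2 * min 1 (x*y/t)) * (2 * min 1 ((1-x)*(1-y)/t)) :=
          mul_le_mul oA.2 oB.2 (le_trans (by positivity) oB.1) (by positivity)
        have l3 := mul_le_mul_of_nonneg_left l2 hK00
        have l4 : 0 ≤ min 1 (x*y/t) * min 1 ((1-x)*(1-y)/t) := by positivity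
        constructor
        · linarith [this.1]
        · linarith [this.2]
    have hc : 0 ≤ (1/√(2*π)) * ((1/√t) * Real.exp (-(x-y)^2/(2*t))) := by positivity
    rw [hfac]
    unfold phi
    constructor
    · have := mul_le_mul_of_nonneg_left hSb.1 hc
      refine le_trans (le_of_eq ?_) this
      ring
    · have := mul_le_mul_of_nonneg_left hSb.2 hc
      refine le_trans this (le_of_eq ?_)
      ring
  refine ⟨(4*K0 + 10) * (1/√(2*π)), by positivity, ?_⟩
  have main2 : ∀ t x y : ℝ, 0 < t → t ≤ 1/8 → 0 < x → x ≤ y → y < 1 →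
    (1/8) * (1/√(2*π)) * phi 1 t x y ≤ pker 1 t x y ∧ pker 1 t x y ≤ ((4*K0 + 10) * (1/√(2*π))) * phi 1 t x y := by
    intro t x y ht ht8 hx hxy hy
    rcases le_total x (1/2) with h | h
    · exact main t x y ht ht8 hx hxy h hy
    · have := main t (1-y) (1-x) ht ht8 (by linarith) (by linarith) (by linarith) (by linarith)
      rwa [pker_refl, phi_refl, pker_symm, phi_symm] at this
  intro t x y ht ht8 hx hx1 hy hy1
  rcases le_total x y with h | h
  · exact main2 t x y ht ht8 hx h hy1
  · have := main2 t y x ht ht8 hy h hx1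
    rwa [pker_symm, phi_symm] at this


lemma abs_sin_nat_mul (n : ℕ) (θ : ℝ) : |Real.sin (n * θ)| ≤ n * |Real.sin θ| := by
  induction n with
  | zero => simp
  | succ n ih =>
    push_cast
    rw [add_mul, one_mul, Real.sin_add]
    calc _ ≤ |Real.sin (n*θ) * Real.cos θ| + |Real.cos (n*θ) * Real.sin θ| := abs_add_le _ _
      _ = |Real.sin (n*θ)| * |Real.cos θ| + |Real.cos (n*θ)| * |Real.sin θ| := by rw [abs_mul, abs_mul]
      _ ≤ |Real.sin (n*θ)| * 1 + 1 * |Real.sin θ| := by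
        gcongr
        · exact Real.abs_cos_le_one _
        · exact Real.abs_cos_le_one _
      _ ≤ _ := by linarith

lemma sin_pi_bd (x : ℝ) (hx : 0 < x) (hx1 : x < 1) :
    2 * (x*(1-x)) ≤ Real.sin (π*x) ∧ Real.sin (π*x) ≤ 8 * (x*(1-x)) := by
  have main : ∀ x : ℝ, 0 < x → x ≤ 1/2 → 2 * (x*(1-x)) ≤ Real.sin (π*x) ∧ Real.sin (π*x) ≤ 8 * (x*(1-x)) := by
    intro x hx hx2
    have hp := Real.pi_pos
    have h1 := Real.mul_le_sin (x := π*x) (by positivity) (by nlinarith)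
    have h2 := Real.sin_le (x := π*x) (by positivity)
    have h3 := Real.pi_lt_d2
    have e : 2/π*(π*x) = 2*x := by field_simp
    rw [e] at h1
    constructor
    · nlinarith
    · nlinarith
  rcases le_total x (1/2) with h | h
  · exact main x hx h
  · have := main (1-x) (by linarith) (by linarith)
    rw [show π*(1-x) = π - π*x by ring, Real.sin_pi_sub, show (1-x)*(1-(1-x)) = x*(1-x) by ring] at this
    exact this

lemma tail_bd (m : ℕ) (t : ℝ) (ht : 1/8 ≤ t) :
    ((m:ℝ)+2)^2 * Real.exp (-(π^2) * ((m:ℝ) + 2)^2 * t / 2) ≤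
      Real.exp (-(π^2) * t / 2) * ((4/5) * (1/8)^m) := by
  have hm : (0:ℝ) ≤ m := Nat.cast_nonneg m
  have hmm : (m:ℝ) ≤ m * m := by exact_mod_cast Nat.le_mul_self m
  have e1 : ((m:ℝ)+2)^2 ≤ 4 * (9/4)^m := by
    induction m with
    | zero => norm_num
    | succ k ih =>
      have hk : (0:ℝ) ≤ k := Nat.cast_nonneg k
      have := ih hk (by exact_mod_cast Nat.le_mul_self k)
      rw [pow_succ (9/4:ℝ)]
      push_cast
      nlinarith
  have hp : 9.6 ≤ π^2 := by nlinarith [Real.pi_gt_d2]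
  have hpt : 0.6 ≤ π^2 * t / 2 := by nlinarith
  have e2 : Real.exp (-(π^2) * ((m:ℝ) + 2)^2 * t / 2) ≤ Real.exp (-(π^2) * t / 2) * (Real.exp (-(9/5)) * (Real.exp (-3))^m) := by
    rw [← Real.exp_nat_mul, ← Real.exp_add, ← Real.exp_add]
    apply Real.exp_le_exp.2
    have : 0.6 * (3 + 5*m) ≤ π^2*t/2 * (((m:ℝ)+2)^2 - 1) := by
      apply mul_le_mul hpt _ (by positivity) (by linarith)
      nlinarith
    nlinarith
  have e3 : Real.exp (-(9/5)) ≤ 1/5 := by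
    rw [Real.exp_neg, ← one_div]
    apply one_div_le_one_div_of_le (by norm_num)
    have h9 : (2.7:ℝ)^9 ≤ (Real.exp (9/5))^5 := by
      rw [← Real.exp_nat_mul, show ((5:ℕ):ℝ) * (9/5) = ((9:ℕ):ℝ) * 1 by norm_num, Real.exp_nat_mul]
      gcongr
      linarith [Real.exp_one_gt_d9]
    by_contra hlt
    push Not at hlt
    have : (Real.exp (9/5))^5 ≤ 5^5 := by gcongr
    norm_num at h9
    linarith
  have e4 : Real.exp (-3) ≤ 1/18 := by
    rw [Real.exp_neg, ← one_div]
    apply one_div_le_one_div_of_le (by norm_num)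
    have : (2.7:ℝ)^3 ≤ Real.exp 3 := by
      rw [show (3:ℝ) = ((3:ℕ):ℝ) * 1 by norm_num, Real.exp_nat_mul]
      gcongr
      linarith [Real.exp_one_gt_d9]
    norm_num at this
    linarith
  calc _ ≤ (4 * (9/4)^m) * (Real.exp (-(π^2) * t / 2) * ((1/5) * (1/18)^m)) := by
        refine mul_le_mul e1 (e2.trans ?_) (Real.exp_pos _).le (by positivity)
        gcongr
    _ = Real.exp (-(π^2) * t / 2) * ((4/5) * ((9/4)^m * (1/18)^m)) := by ring
    _ = _ := by rw [← mul_pow]; norm_num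

lemma large_main (t x y : ℝ) (ht : 1/8 ≤ t) (hx : 0 < x) (hx1 : x < 1) (hy : 0 < y) (hy1 : y < 1) :
    |pker 1 t x y - 2 * (Real.exp (-(π^2) * t / 2) * (Real.sin (π*x) * Real.sin (π*y)))| ≤
      2 * (Real.exp (-(π^2) * t / 2) * (Real.sin (π*x) * Real.sin (π*y))) * (32/35) := by
  have hX : 0 ≤ Real.sin (π*x) := le_trans (by nlinarith) (sin_pi_bd x hx hx1).1
  have hY : 0 ≤ Real.sin (π*y) := le_trans (by nlinarith) (sin_pi_bd y hy hy1).1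
  set f : ℕ → ℝ := fun n => Real.exp (-(π^2) * ((n : ℝ) + 1)^2 * t / (2 * 1^2)) *
    Real.sin (π * ((n : ℝ) + 1) * x / 1) * Real.sin (π * ((n : ℝ) + 1) * y / 1) with hf
  set Q := Real.exp (-(π^2) * t / 2) * (Real.sin (π*x) * Real.sin (π*y)) with hQ
  have hb : ∀ n : ℕ, ‖f (n+1)‖ ≤ Q * (4/5) * (1/8)^n := by
    intro n
    have s1 := abs_sin_nat_mul (n+2) (π*x)
    have s2 := abs_sin_nat_mul (n+2) (π*y)
    rw [abs_of_nonneg hX] at s1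
    rw [abs_of_nonneg hY] at s2
    have tb := tail_bd n t ht
    simp only [hf]
    rw [Real.norm_eq_abs, abs_mul, abs_mul, abs_of_pos (Real.exp_pos _)]
    push_cast at s1 s2 ⊢
    rw [show π * ((n:ℝ) + 1 + 1) * x / 1 = ((n:ℝ)+2) * (π*x) by ring, show π * ((n:ℝ) + 1 + 1) * y / 1 = ((n:ℝ)+2) * (π*y) by ring,
      show -(π^2) * ((n:ℝ)+1+1)^2 * t / (2*1^2) = -(π^2) * ((n:ℝ) + 2)^2 * t / 2 by ring]
    calc _ ≤ Real.exp (-(π^2) * ((n:ℝ) + 2)^2 * t / 2) * (((n:ℝ)+2) * Real.sin (π*x)) * (((n:ℝ)+2) * Real.sin (π*y)) := by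
          gcongr
      _ = (((n:ℝ)+2)^2 * Real.exp (-(π^2) * ((n:ℝ) + 2)^2 * t / 2)) * (Real.sin (π*x) * Real.sin (π*y)) := by ring
      _ ≤ (Real.exp (-(π^2) * t / 2) * ((4/5) * (1/8)^n)) * (Real.sin (π*x) * Real.sin (π*y)) := by gcongr
      _ = _ := by rw [hQ]; ring
  have hg : HasSum (fun n : ℕ => Q * (4/5) * ((1:ℝ)/8)^n) (Q * (4/5) * (1 - 1/8)⁻¹) :=
    (hasSum_geometric_of_lt_one (by norm_num) (by norm_num)).mul_left _
  have hsf : Summable f := (summable_nat_add_iff 1).1 (Summable.of_norm_bounded hg.summable hb)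
  have hle := tsum_of_norm_bounded hg hb
  have h0 : f 0 = Q := by
    simp only [hf, hQ]
    norm_num
    ring
  have hpk : pker 1 t x y = 2 * (Q + ∑' n, f (n+1)) := by
    unfold pker
    rw [show (2:ℝ)/1 = 2 by norm_num]
    change 2 * ∑' n, f n = _
    rw [hsf.tsum_eq_zero_add, h0]
  rw [hpk, show 2 * (Q + ∑' n, f (n+1)) - 2 * Q = 2 * ∑' n, f (n+1) by ring, abs_mul, abs_two]
  rw [Real.norm_eq_abs] at hle
  norm_num at hle
  linarith

lemma phi_large (t x y : ℝ) (ht : 1/8 ≤ t) (ht1 : t ≤ 1) (hx : 0 < x) (hx1 : x < 1) (hy : 0 < y) (hy1 : y < 1) :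
    Real.exp (-4) * ((x*(1-x)) * (y*(1-y))) ≤ phi 1 t x y ∧ phi 1 t x y ≤ 512 * ((x*(1-x)) * (y*(1-y))) := by
  have ht0 : 0 < t := by linarith
  have hx' : 0 < 1 - x := by linarith
  have hy' : 0 < 1 - y := by linarith
  have m : ∀ u : ℝ, 0 < u → u < 1 → u ≤ min 1 (u/t) ∧ min 1 (u/t) ≤ 8 * u := by
    intro u hu hu1
    constructor
    · apply le_min hu1.le
      rw [le_div_iff₀ ht0]; nlinarith
    · refine (min_le_right _ _).trans ?_
      rw [div_le_iff₀ ht0]; nlinarith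
  have m1 := m (x*y) (by positivity) (by nlinarith)
  have m2 := m ((1-x)*(1-y)) (by positivity) (by nlinarith)
  have s0 : 0 < √t := Real.sqrt_pos.2 ht0
  have s1 : √t ≤ 1 := Real.sqrt_le_one.2 ht1
  have s2 : 1/8 ≤ √t := Real.le_sqrt_of_sq_le (by linarith)
  have r1 : 1 ≤ 1/√t := by rw [le_div_iff₀ s0]; linarith
  have r2 : 1/√t ≤ 8 := by rw [div_le_iff₀ s0]; linarith
  have xy2 : (x-y)^2 ≤ 1 := by nlinarith
  have e1 : Real.exp (-4) ≤ Real.exp (-(x-y)^2/(2*t)) := by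
    apply Real.exp_le_exp.2
    rw [le_div_iff₀ (by positivity)]
    nlinarith
  have e2 : Real.exp (-(x-y)^2/(2*t)) ≤ 1 := by
    apply Real.exp_le_one_iff.2
    apply div_nonpos_of_nonpos_of_nonneg
    · nlinarith
    · positivity
  unfold phi
  constructor
  · calc _ = (x*y) * ((1-x)*(1-y)) * (1 * Real.exp (-4)) := by ring
      _ ≤ _ := by
        gcongr
        · exact m1.1
        · exact m2.1
  · calc _ ≤ (8*(x*y)) * (8*((1-x)*(1-y))) * (8 * 1) := by
          gcongr
          · exact m1.2
          · exact m2.2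
      _ = _ := by ring

lemma large_bd : ∃ k K : ℝ, 0 < k ∧ 0 < K ∧ ∀ t x y : ℝ, 1/8 ≤ t → t ≤ 1 → 0 < x → x < 1 → 0 < y → y < 1 →
    k * phi 1 t x y ≤ pker 1 t x y ∧ pker 1 t x y ≤ K * phi 1 t x y := by
  refine ⟨(3/35) * 8 * Real.exp (-(π^2)/2) / 512, 256 / Real.exp (-4), by positivity, by positivity, ?_⟩
  intro t x y ht ht1 hx hx1 hy hy1
  have hx' : 0 < 1 - x := by linarith
  have hy' : 0 < 1 - y := by linarith
  have hm := abs_le.1 (large_main t x y ht hx hx1 hy hy1)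
  obtain ⟨f1, f2⟩ := phi_large t x y ht ht1 hx hx1 hy hy1
  obtain ⟨a1, a2⟩ := sin_pi_bd x hx hx1
  obtain ⟨b1, b2⟩ := sin_pi_bd y hy hy1
  have hZ : 0 < (x*(1-x)) * (y*(1-y)) := by positivity
  have c1 : 4 * ((x*(1-x)) * (y*(1-y))) ≤ Real.sin (π*x) * Real.sin (π*y) := by
    have := mul_le_mul a1 b1 (by positivity) (le_trans (by positivity) a1)
    linarith
  have c2 : Real.sin (π*x) * Real.sin (π*y) ≤ 64 * ((x*(1-x)) * (y*(1-y))) := by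
    have := mul_le_mul a2 b2 (le_trans (by positivity) b1) (by positivity)
    linarith
  have d1 : Real.exp (-(π^2)/2) ≤ Real.exp (-(π^2) * t / 2) := by
    apply Real.exp_le_exp.2
    nlinarith [sq_nonneg π]
  have d2 : Real.exp (-(π^2) * t / 2) ≤ 1 := by
    apply Real.exp_le_one_iff.2
    nlinarith [sq_nonneg π]
  have q1 : Real.exp (-(π^2)/2) * (4 * ((x*(1-x)) * (y*(1-y)))) ≤ Real.exp (-(π^2) * t / 2) * (Real.sin (π*x) * Real.sin (π*y)) := by
    gcongr
  have q2 : Real.exp (-(π^2) * t / 2) * (Real.sin (π*x) * Real.sin (π*y)) ≤ 1 * (64 * ((x*(1-x)) * (y*(1-y)))) := by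
    apply mul_le_mul d2 c2 (le_trans (by positivity) c1) zero_le_one
  constructor
  · have := mul_le_mul_of_nonneg_left f2 (show 0 ≤ (3/35) * 8 * Real.exp (-(π^2)/2) / 512 by positivity)
    nlinarith [hm.1]
  · have := mul_le_mul_of_nonneg_left f1 (show 0 ≤ 256 / Real.exp (-4) by positivity)
    rw [← mul_assoc, div_mul_cancel₀ _ (Real.exp_ne_zero _)] at this
    nlinarith [hm.2]

lemma kernel_bd1 : ∃ k K : ℝ, 0 < k ∧ 0 < K ∧ ∀ t x y : ℝ, 0 < t → t ≤ 1 → 0 < x → x < 1 → 0 < y → y < 1 →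
    k * phi 1 t x y ≤ pker 1 t x y ∧ pker 1 t x y ≤ K * phi 1 t x y := by
  obtain ⟨K1, hK1, h1⟩ := small_bd
  obtain ⟨k2, K2, hk2, hK2, h2⟩ := large_bd
  have hk1 : 0 < (1/8) * (1/√(2*π)) := by positivity
  refine ⟨min ((1/8) * (1/√(2*π))) k2, max K1 K2, lt_min hk1 hk2, lt_max_of_lt_left hK1, ?_⟩
  intro t x y ht ht1 hx hx1 hy hy1
  have hx' : 0 < 1 - x := by linarith
  have hy' : 0 < 1 - y := by linarith
  have hphi : 0 ≤ phi 1 t x y := by unfold phi; positivity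
  rcases le_total t (1/8) with h | h
  · obtain ⟨u, v⟩ := h1 t x y ht h hx hx1 hy hy1
    exact ⟨(mul_le_mul_of_nonneg_right (min_le_left _ _) hphi).trans u, v.trans (mul_le_mul_of_nonneg_right (le_max_left _ _) hphi)⟩
  · obtain ⟨u, v⟩ := h2 t x y h ht1 hx hx1 hy hy1
    exact ⟨(mul_le_mul_of_nonneg_right (min_le_right _ _) hphi).trans u, v.trans (mul_le_mul_of_nonneg_right (le_max_right _ _) hphi)⟩

lemma phi_scale (a t x y : ℝ) (ha : 0 < a) :
    phi a t x y = (1/a) * phi 1 (t/a^2) (x/a) (y/a) := by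
  unfold phi
  have e1 : x/a*(y/a)/(t/a^2) = x*y/t := by field_simp
  have e2 : (1-x/a)*(1-y/a)/(t/a^2) = (a-x)*(a-y)/t := by field_simp
  have e3 : -(x/a-y/a)^2/(2*(t/a^2)) = -(x-y)^2/(2*t) := by field_simp
  have e4 : √(t/a^2) = √t / a := by rw [Real.sqrt_div' _ (by positivity), Real.sqrt_sq ha.le]
  rw [e1, e2, e3, e4]
  field_simp

lemma kernel_bd : ∃ k K : ℝ, 0 < k ∧ 0 < K ∧ ∀ a t x y : ℝ, 0 < a → 0 < t → t ≤ a^2 → 0 < x → x < a → 0 < y → y < a →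
    k * phi a t x y ≤ pker a t x y ∧ pker a t x y ≤ K * phi a t x y := by
  obtain ⟨k, K, hk, hK, h⟩ := kernel_bd1
  refine ⟨k, K, hk, hK, ?_⟩
  intro a t x y ha ht hta hx hxa hy hya
  obtain ⟨u, v⟩ := h (t/a^2) (x/a) (y/a) (by positivity) (by rw [div_le_one (by positivity)]; exact hta)
    (by positivity) (by rw [div_lt_one ha]; exact hxa) (by positivity) (by rw [div_lt_one ha]; exact hya)
  rw [pker_scale a t x y ha, phi_scale a t x y ha]
  have ha' : 0 ≤ 1/a := by positivity
  have u' := mul_le_mul_of_nonneg_left u ha'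
  have v' := mul_le_mul_of_nonneg_left v ha'
  constructor <;> linarith


lemma min_scale (l α β : ℝ) (hl : 1 ≤ l) (h : β ≤ l * α) : min 1 β ≤ l * min 1 α := by
  rcases le_total 1 α with h1 | h1
  · rw [min_eq_left h1]; exact (min_le_left _ _).trans (by linarith)
  · rw [min_eq_right h1]; exact (min_le_right _ _).trans h

/-- the case `x ≤ 4 z` -/
lemma core_low (s t x y z : ℝ) (hs : 0 < s) (hst : 2*s ≤ t) (hx : 0 < x) (hy : 0 < y) (hz : 0 < z) (hxz : x ≤ 4*z) :
    min 1 (x*z/s) * min 1 (z*y/t) * Real.exp (-(z - (x + (y-x)*s/t))^2/(2*s)) ≤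
      16 * min 1 (x*y/t) * ((1+z^2)/(1+s)) := by
  have ht : 0 < t := by linarith
  set g := Real.exp (-(z - (x + (y-x)*s/t))^2/(2*s)) with hg
  have hg0 : 0 < g := Real.exp_pos _
  have hg1 : g ≤ 1 := by
    apply Real.exp_le_one_iff.2
    apply div_nonpos_of_nonpos_of_nonneg
    · nlinarith [sq_nonneg (z - (x + (y-x)*s/t))]
    · positivity
  have M0 : 0 < min 1 (x*z/s) := lt_min one_pos (by positivity)
  have N20 : 0 < min 1 (z*y/t) := lt_min one_pos (by positivity)
  have N0 : 0 < min 1 (x*y/t) := lt_min one_pos (by positivity)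
  have M1 : min 1 (x*z/s) ≤ 1 := min_le_left _ _
  have M2 : min 1 (x*z/s) * s ≤ x*z := by
    have := min_le_right 1 (x*z/s)
    rwa [le_div_iff₀ hs] at this
  suffices H : min 1 (x*z/s) * min 1 (z*y/t) * g ≤ 16 * min 1 (x*y/t) ∧
      (min 1 (x*z/s) * min 1 (z*y/t) * g) * s ≤ 16 * min 1 (x*y/t) * z^2 by
    rw [← mul_div_assoc, le_div_iff₀ (by linarith)]
    linarith [H.1, H.2]
  have easy : min 1 (z*y/t) ≤ 4 * min 1 (x*y/t) → min 1 (x*z/s) * min 1 (z*y/t) * g ≤ 16 * min 1 (x*y/t) ∧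
      (min 1 (x*z/s) * min 1 (z*y/t) * g) * s ≤ 16 * min 1 (x*y/t) * z^2 := by
    intro hR
    constructor
    · calc _ ≤ 1 * (4 * min 1 (x*y/t)) * 1 := by gcongr
        _ ≤ _ := by linarith
    · calc _ = (min 1 (x*z/s) * s) * min 1 (z*y/t) * g := by ring
        _ ≤ (x*z) * (4 * min 1 (x*y/t)) * 1 := by gcongr
        _ ≤ ((4*z)*z) * (4 * min 1 (x*y/t)) * 1 := by gcongr
        _ = _ := by ring
  rcases le_total z (4*x) with hc | hc
  · apply easy
    apply min_scale _ _ _ (by norm_num)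
    rw [← mul_div_assoc, ← mul_assoc]
    gcongr
  rcases le_total (1/4) (x*y/t) with hd | hd
  · apply easy
    have : 1/4 ≤ min 1 (x*y/t) := le_min (by norm_num) hd
    have := min_le_left 1 (z*y/t)
    linarith
  have hN : min 1 (x*y/t) = x*y/t := min_eq_right (by linarith)
  have N2a : min 1 (z*y/t) ≤ 1 := min_le_left _ _
  have N2b : min 1 (z*y/t) ≤ z*y/t := min_le_right _ _
  have M2' : min 1 (x*z/s) ≤ x*z/s := min_le_right _ _
  have hzN : (x*z) * (z*y/t) = (x*y/t) * z^2 := by ring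
  have P : min 1 (x*z/s) * min 1 (z*y/t) ≤ (x*y/t) * (z^2/s) := by
    calc _ ≤ (x*z/s) * (z*y/t) := by gcongr
      _ = _ := by ring
  have hq : 0 < x*y/t := by positivity
  rw [hN]
  constructor
  · rcases le_total (z^2/4) s with h1 | h1
    · have : z^2/s ≤ 4 := by rw [div_le_iff₀ hs]; linarith
      calc _ ≤ (x*y/t) * (z^2/s) * g := by gcongr
        _ ≤ (x*y/t) * 4 * 1 := by gcongr
        _ ≤ _ := by linarith
    rcases le_total (z*t) (4*(y*s)) with h2 | h2
    · have : x*z/s ≤ 4 * (x*y/t) := by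
        rw [div_le_iff₀ hs]
        have : 4 * (x*y/t) * s = x * (4*(y*s)/t) := by ring
        rw [this]
        gcongr
        rw [le_div_iff₀ ht]; exact h2
      calc _ ≤ (x*z/s) * 1 * 1 := by gcongr
        _ ≤ _ := by linarith
    · have hm : (y-x)*s/t ≤ z/4 := by
        rw [div_le_iff₀ ht]
        nlinarith
      have hm2 : z/2 ≤ z - (x + (y-x)*s/t) := by linarith
      have hg2 : g ≤ Real.exp (-(z^2/s/8)) := by
        apply Real.exp_le_exp.2
        rw [neg_div, neg_le_neg_iff, div_div, div_le_div_iff₀ (by positivity) (by positivity)]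
        have : z^2/4 ≤ (z - (x + (y-x)*s/t))^2 := by nlinarith
        nlinarith
      have := mulexp_le_one (z^2/s/8)
      calc _ ≤ (x*y/t) * (z^2/s) * Real.exp (-(z^2/s/8)) := by gcongr
        _ = 8 * (x*y/t) * (z^2/s/8 * Real.exp (-(z^2/s/8))) := by ring
        _ ≤ 8 * (x*y/t) * 1 := by gcongr
        _ ≤ _ := by linarith
  · calc _ = (min 1 (x*z/s) * s) * min 1 (z*y/t) * g := by ring
      _ ≤ (x*z) * (z*y/t) * 1 := by gcongr
      _ = (x*y/t) * z^2 := by rw [hzN]; ring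
      _ ≤ _ := by nlinarith [mul_pos hq (pow_pos hz 2)]

lemma core_high (s t x y z : ℝ) (hs : 0 < s) (hst : 2*s ≤ t) (hx : 0 < x) (hy : 0 < y) (hz : 0 < z) (hxz : 4*z ≤ x) :
    min 1 (x*z/s) * min 1 (z*y/t) * Real.exp (-(z - (x + (y-x)*s/t))^2/(2*s)) * (1 + 4*(x^2/s)) ≤
      32768 * min 1 (x*y/t) * (x*z/(s+x^2)) := by
  have ht : 0 < t := by linarith
  have N0 : 0 < min 1 (x*y/t) := lt_min one_pos (by positivity)
  have N20 : 0 < min 1 (z*y/t) := lt_min one_pos (by positivity)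
  have hR : min 1 (z*y/t) ≤ min 1 (x*y/t) := by
    apply min_le_min_left
    gcongr
    linarith
  have hm : z - (x + (y-x)*s/t) ≤ -(x/4) := by
    have e : x + (y-x)*s/t = x*(1-s/t) + y*s/t := by ring
    have h1 : s/t ≤ 1/2 := by rw [div_le_iff₀ ht]; linarith
    have h2 : 0 < y*s/t := by positivity
    rw [e]
    nlinarith
  set v := x^2/s with hv
  have hv0 : 0 < v := by positivity
  have hg2 : Real.exp (-(z - (x + (y-x)*s/t))^2/(2*s)) ≤ Real.exp (-(v/32)) := by
    apply Real.exp_le_exp.2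
    rw [neg_div, neg_le_neg_iff, hv, div_div, div_le_div_iff₀ (by positivity) (by positivity)]
    have : x^2/16 ≤ (z - (x + (y-x)*s/t))^2 := by nlinarith
    nlinarith
  have e0 : (1+v)^2 * Real.exp (-(v/32)) ≤ 4096 := by
    have h1 : 1 + v ≤ 64 * Real.exp (v/64) := by linarith [Real.add_one_le_exp (v/64)]
    have h2 : (Real.exp (v/64))^2 * Real.exp (-(v/32)) = 1 := by
      rw [← Real.exp_nat_mul, ← Real.exp_add]
      rw [Real.exp_eq_one_iff]; push_cast; ring
    calc _ ≤ (64 * Real.exp (v/64))^2 * Real.exp (-(v/32)) := by gcongr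
      _ = 4096 * ((Real.exp (v/64))^2 * Real.exp (-(v/32))) := by ring
      _ = _ := by rw [h2]; norm_num
  have e1 : Real.exp (-(v/32)) * (1 + 4*v) ≤ 32768 / (1+v) := by
    rw [le_div_iff₀ (by linarith)]
    have := Real.exp_pos (-(v/32))
    nlinarith
  calc _ ≤ (x*z/s) * min 1 (x*y/t) * Real.exp (-(v/32)) * (1 + 4*v) := by
        gcongr
        exact min_le_right _ _
    _ = (x*z/s) * min 1 (x*y/t) * (Real.exp (-(v/32)) * (1 + 4*v)) := by ring
    _ ≤ (x*z/s) * min 1 (x*y/t) * (32768 / (1+v)) := by gcongr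
    _ = _ := by rw [hv]; field_simp

lemma upper_fac (s t X Y Z A : ℝ) (hs : 0 < s) (ht : 0 < t) (hX : 0 < X) (hY : 0 < Y) (hZ : 0 < Z) (hA : Z^2 ≤ A) :
    min 1 (X*Z/s) * min 1 (Z*Y/t) ≤ min 1 (X*Y/t) * (1 + A/s) := by
  have N0 : 0 < min 1 (X*Y/t) := lt_min one_pos (by positivity)
  have hA0 : 0 ≤ A := (sq_nonneg Z).trans hA
  rcases le_total Z X with h | h
  · have hR : min 1 (Z*Y/t) ≤ min 1 (X*Y/t) := by
      apply min_le_min_left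
      gcongr
    have : 0 ≤ A/s := by positivity
    calc _ ≤ 1 * min 1 (X*Y/t) := by
          gcongr
          exact min_le_left _ _
      _ ≤ _ := by nlinarith
  · have hR : min 1 (Z*Y/t) ≤ (Z/X) * min 1 (X*Y/t) := by
      apply min_scale
      · rw [le_div_iff₀ hX]; linarith
      · apply le_of_eq; field_simp
    calc _ ≤ (X*Z/s) * ((Z/X) * min 1 (X*Y/t)) := by
          gcongr
          exact min_le_right _ _
      _ = min 1 (X*Y/t) * (Z^2/s) := by field_simp
      _ ≤ min 1 (X*Y/t) * (1 + A/s) := by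
          gcongr
          have : Z^2/s ≤ A/s := by gcongr
          linarith

lemma gauss_bd (s t x y z : ℝ) (hs : 0 < s) (hst : 2*s ≤ t) :
    Real.exp (-(x-z)^2/(2*s)) * Real.exp (-(z-y)^2/(2*(t-s))) ≤
      Real.exp (-(x-y)^2/(2*t)) * Real.exp (-(z - (x + (y-x)*s/t))^2/(2*s)) := by
  have ht : 0 < t := by linarith
  have hts : 0 < t - s := by linarith
  rw [← Real.exp_add, ← Real.exp_add]
  apply Real.exp_le_exp.2
  have key : -(x-z)^2/(2*s) + -(z-y)^2/(2*(t-s)) = -(x-y)^2/(2*t) + -(z - (x + (y-x)*s/t))^2/(2*s) * (t/(t-s)) := by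
    field_simp
    ring
  rw [key]
  have h1 : 1 ≤ t/(t-s) := by rw [le_div_iff₀ hts]; linarith
  have h2 : -(z - (x + (y-x)*s/t))^2/(2*s) ≤ 0 := by
    apply div_nonpos_of_nonpos_of_nonneg
    · nlinarith [sq_nonneg (z - (x + (y-x)*s/t))]
    · positivity
  nlinarith

lemma phi_core (a s t x y z : ℝ) (hs : 0 < s) (hst : 2*s ≤ t) (hx : 0 < x) (hxa : x < a)
    (hy : 0 < y) (hya : y < a) (hz : 0 < z) (hza : z ≤ a/8) :
    phi a s x z * phi a (t-s) z y ≤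
      524288 * phi a t x y * ((1/√s) * ((1+z^2)/(1+s) + x*z/(s+x^2))) := by
  have ha : 0 < a := by linarith
  have ht : 0 < t := by linarith
  have hts : 0 < t - s := by linarith
  have hx' : 0 < a - x := by linarith
  have hy' : 0 < a - y := by linarith
  have hz' : 0 < a - z := by linarith
  have g := gauss_bd s t x y z hs hst
  set G := Real.exp (-(z - (x + (y-x)*s/t))^2/(2*s)) with hG
  have hG0 : 0 < G := Real.exp_pos _
  have dbl : ∀ A : ℝ, 0 < A → min 1 (A/(t-s)) ≤ 2 * min 1 (A/t) := by
    intro A hA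
    apply min_scale _ _ _ (by norm_num)
    rw [← mul_div_assoc, div_le_div_iff₀ hts ht]
    nlinarith
  have d1 := dbl (z*y) (by positivity)
  have d2 := dbl ((a-z)*(a-y)) (by positivity)
  have sq : 1/√(t-s) ≤ 2 * (1/√t) := by
    have : √t ≤ 2 * √(t-s) := by
      rw [show (2:ℝ) = √4 by rw [show (4:ℝ) = 2^2 by norm_num, Real.sqrt_sq (by norm_num)], ← Real.sqrt_mul (by norm_num)]
      apply Real.sqrt_le_sqrt; linarith
    rw [← mul_div_assoc, div_le_div_iff₀ (Real.sqrt_pos.2 hts) (Real.sqrt_pos.2 ht)]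
    linarith
  have N0 : 0 < min 1 (x*y/t) := lt_min one_pos (by positivity)
  have W0 : 0 < min 1 ((a-x)*(a-y)/t) := lt_min one_pos (by positivity)
  have st0 : 0 < 1/√t := by have := Real.sqrt_pos.2 ht; positivity
  have ss0 : 0 < 1/√s := by have := Real.sqrt_pos.2 hs; positivity
  -- main comparison
  have main : (min 1 (x*z/s) * min 1 (z*y/t) * G) * (min 1 ((a-x)*(a-z)/s) * min 1 ((a-z)*(a-y)/t)) ≤
      65536 * (min 1 (x*y/t) * min 1 ((a-x)*(a-y)/t)) * ((1+z^2)/(1+s) + x*z/(s+x^2)) := by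
    have L0 : 0 ≤ min 1 (x*z/s) * min 1 (z*y/t) * G := by positivity
    have b1 : 0 < (1+z^2)/(1+s) := by positivity
    have b2 : 0 < x*z/(s+x^2) := by positivity
    have mild : x ≤ a/2 → min 1 ((a-x)*(a-z)/s) * min 1 ((a-z)*(a-y)/t) ≤ 2 * min 1 ((a-x)*(a-y)/t) := by
      intro h
      calc _ ≤ 1 * (2 * min 1 ((a-x)*(a-y)/t)) := by
            apply mul_le_mul (min_le_left _ _) _ (by positivity) zero_le_one
            apply min_scale _ _ _ (by norm_num)
            rw [← mul_div_assoc, ← mul_assoc]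
            gcongr
            linarith
        _ = _ := by ring
    rcases le_total x (4*z) with h | h
    · have c := core_low s t x y z hs hst hx hy hz h
      have m := mild (by linarith)
      calc _ ≤ (16 * min 1 (x*y/t) * ((1+z^2)/(1+s))) * (2 * min 1 ((a-x)*(a-y)/t)) := by
            apply mul_le_mul c m (by positivity) (by positivity)
        _ = 32 * (min 1 (x*y/t) * min 1 ((a-x)*(a-y)/t)) * ((1+z^2)/(1+s)) := by ring
        _ ≤ _ := by
            gcongr
            · norm_num
            · linarith
    · have c := core_high s t x y z hs hst hx hy hz h
      have m : min 1 ((a-x)*(a-z)/s) * min 1 ((a-z)*(a-y)/t) ≤ 2 * min 1 ((a-x)*(a-y)/t) * (1 + 4*(x^2/s)) := by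
        have : 0 < x^2/s := by positivity
        rcases le_total x (a/2) with h2 | h2
        · refine (mild h2).trans ?_
          nlinarith
        · have := upper_fac s t (a-x) (a-y) (a-z) (4*x^2) hs ht hx' hy' hz' (by nlinarith)
          rw [mul_div_assoc (4:ℝ) (x^2) s] at this
          refine this.trans ?_
          nlinarith
      calc _ ≤ (min 1 (x*z/s) * min 1 (z*y/t) * G) * (2 * min 1 ((a-x)*(a-y)/t) * (1 + 4*(x^2/s))) := by gcongr
        _ = (min 1 (x*z/s) * min 1 (z*y/t) * G * (1 + 4*(x^2/s))) * (2 * min 1 ((a-x)*(a-y)/t)) := by ring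
        _ ≤ (32768 * min 1 (x*y/t) * (x*z/(s+x^2))) * (2 * min 1 ((a-x)*(a-y)/t)) := by gcongr
        _ = 65536 * (min 1 (x*y/t) * min 1 ((a-x)*(a-y)/t)) * (x*z/(s+x^2)) := by ring
        _ ≤ _ := by
            gcongr
            linarith
  unfold phi
  calc _ = (min 1 (x*z/s) * min 1 ((a-x)*(a-z)/s)) * (min 1 (z*y/(t-s)) * min 1 ((a-z)*(a-y)/(t-s))) * ((1/√s) * (1/√(t-s)))
        * (Real.exp (-(x-z)^2/(2*s)) * Real.exp (-(z-y)^2/(2*(t-s)))) := by ring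
    _ ≤ (min 1 (x*z/s) * min 1 ((a-x)*(a-z)/s)) * ((2 * min 1 (z*y/t)) * (2 * min 1 ((a-z)*(a-y)/t))) * ((1/√s) * (2 * (1/√t)))
        * (Real.exp (-(x-y)^2/(2*t)) * G) := by gcongr
    _ = 8 * ((1/√s) * (1/√t) * Real.exp (-(x-y)^2/(2*t))) *
        ((min 1 (x*z/s) * min 1 (z*y/t) * G) * (min 1 ((a-x)*(a-z)/s) * min 1 ((a-z)*(a-y)/t))) := by ring
    _ ≤ 8 * ((1/√s) * (1/√t) * Real.exp (-(x-y)^2/(2*t))) *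
        (65536 * (min 1 (x*y/t) * min 1 ((a-x)*(a-y)/t)) * ((1+z^2)/(1+s) + x*z/(s+x^2))) := by gcongr
    _ = _ := by ring


lemma int_cos (a : ℝ) (ha : 0 < a) (j : ℤ) :
    ∫ z in (0:ℝ)..a, Real.cos (π * j / a * z) = if j = 0 then a else 0 := by
  split_ifs with h
  · subst h; simp
  · have hj : (j:ℝ) ≠ 0 := by exact_mod_cast h
    have hne : π * j / a ≠ 0 := by positivity
    rw [intervalIntegral.integral_comp_mul_left (fun z => Real.cos z) hne, integral_cos]
    rw [show π * j / a * a = j * π by field_simp, Real.sin_int_mul_pi]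
    simp

lemma int_sin_sin (a : ℝ) (ha : 0 < a) (n m : ℕ) :
    ∫ z in (0:ℝ)..a, Real.sin (π * ((m : ℝ) + 1) * z / a) * Real.sin (π * ((n : ℝ) + 1) * z / a)
      = if m = n then a/2 else 0 := by
  have h : ∀ z : ℝ, Real.sin (π * ((m : ℝ) + 1) * z / a) * Real.sin (π * ((n : ℝ) + 1) * z / a)
      = (1/2) * (Real.cos (π * ((m - n : ℤ) : ℝ) / a * z) - Real.cos (π * ((m + n + 2 : ℤ):ℝ) / a * z)) := by
    intro z
    have a1 : π * ((m - n : ℤ) : ℝ) / a * z = π * ((m : ℝ) + 1) * z / a - π * ((n : ℝ) + 1) * z / a := by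
      push_cast; ring
    have a2 : π * ((m + n + 2 : ℤ) : ℝ) / a * z = π * ((m : ℝ) + 1) * z / a + π * ((n : ℝ) + 1) * z / a := by
      push_cast; ring
    rw [a1, a2, Real.cos_sub, Real.cos_add]
    ring
  simp_rw [h]
  rw [intervalIntegral.integral_const_mul, intervalIntegral.integral_sub
    (Continuous.intervalIntegrable (by fun_prop) _ _) (Continuous.intervalIntegrable (by fun_prop) _ _),
    int_cos a ha, int_cos a ha]
  have : (m + n + 2 : ℤ) ≠ 0 := by omega
  rw [if_neg this]
  by_cases e : m = n
  · simp [e]; ring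
  · rw [if_neg (by omega), if_neg e]; simp

lemma sum_e (a s : ℝ) (ha : 0 < a) (hs : 0 < s) :
    Summable fun n : ℕ => Real.exp (-(π^2) * ((n : ℝ) + 1)^2 * s / (2 * a^2)) := by
  have h := Real.summable_exp_nat_mul_of_ge (c := -(π^2 * s/(2*a^2)))
    (by have : 0 < π^2 * s/(2*a^2) := by positivity
        linarith) (f := fun n => ((n:ℝ)+1)^2) (fun i => by nlinarith [(Nat.cast_nonneg i : (0:ℝ) ≤ i)])
  refine h.congr fun n => ?_
  congr 1; ring

lemma pker_cont (a s x : ℝ) (ha : 0 < a) (hs : 0 < s) : Continuous fun z => pker a s x z := by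
  unfold pker
  refine continuous_const.mul (continuous_tsum (fun n => by fun_prop) (sum_e a s ha hs) ?_)
  intro n z
  rw [norm_mul, norm_mul, Real.norm_of_nonneg (Real.exp_pos _).le]
  have h1 := Real.abs_sin_le_one (π * ((n : ℝ) + 1) * x / a)
  have h2 := Real.abs_sin_le_one (π * ((n : ℝ) + 1) * z / a)
  simp only [Real.norm_eq_abs]
  calc _ ≤ Real.exp (-(π^2) * ((n : ℝ) + 1)^2 * s / (2 * a^2)) * 1 * 1 := by gcongr
    _ = _ := by ring

lemma swap_int (a s x : ℝ) (ha : 0 < a) (hs : 0 < s) (f : ℝ → ℝ) (hf : Continuous f) :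
    ∫ z in (0:ℝ)..a, pker a s x z * f z =
      (2/a) * ∑' n : ℕ, Real.exp (-(π^2) * ((n : ℝ) + 1)^2 * s / (2 * a^2)) *
        Real.sin (π * ((n : ℝ) + 1) * x / a) * ∫ z in (0:ℝ)..a, Real.sin (π * ((n : ℝ) + 1) * z / a) * f z := by
  obtain ⟨M, hM⟩ := (isCompact_uIcc (a := (0:ℝ)) (b := a)).exists_bound_of_continuousOn hf.continuousOn
  have h := intervalIntegral.hasSum_integral_of_dominated_convergence (μ := volume) (a := 0) (b := a)
    (F := fun (n : ℕ) (z : ℝ) => Real.exp (-(π^2) * ((n : ℝ) + 1)^2 * s / (2 * a^2)) *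
        Real.sin (π * ((n : ℝ) + 1) * x / a) * (Real.sin (π * ((n : ℝ) + 1) * z / a) * f z))
    (f := fun z => ∑' n : ℕ, Real.exp (-(π^2) * ((n : ℝ) + 1)^2 * s / (2 * a^2)) *
        Real.sin (π * ((n : ℝ) + 1) * x / a) * (Real.sin (π * ((n : ℝ) + 1) * z / a) * f z))
    (fun n _ => Real.exp (-(π^2) * ((n : ℝ) + 1)^2 * s / (2 * a^2)) * M)
    (fun n => Continuous.aestronglyMeasurable (by fun_prop)) ?_ ?_ ?_ ?_
  · have h' := h.tsum_eq
    simp only [intervalIntegral.integral_const_mul] at h'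
    rw [h', ← intervalIntegral.integral_const_mul]
    · congr 1; funext z
      unfold pker
      rw [mul_assoc, ← tsum_mul_right]
      congr 1
      exact tsum_congr fun n => by ring
  · intro n
    refine Eventually.of_forall fun z hz => ?_
    have hz' := hM z (uIoc_subset_uIcc hz)
    have h1 := Real.abs_sin_le_one (π * ((n : ℝ) + 1) * x / a)
    have h2 := Real.abs_sin_le_one (π * ((n : ℝ) + 1) * z / a)
    rw [norm_mul, norm_mul, norm_mul, Real.norm_of_nonneg (Real.exp_pos _).le]
    simp only [Real.norm_eq_abs] at hz' ⊢
    calc _ ≤ Real.exp (-(π^2) * ((n : ℝ) + 1)^2 * s / (2 * a^2)) * 1 * (1 * M) := by gcongr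
      _ = _ := by ring
  · exact Eventually.of_forall fun z hz => (sum_e a s ha hs).mul_right M
  · simp
  · refine Eventually.of_forall fun z hz => Summable.hasSum ?_
    refine Summable.of_norm_bounded ((sum_e a s ha hs).mul_right |f z|) fun n => ?_
    have h1 := Real.abs_sin_le_one (π * ((n : ℝ) + 1) * x / a)
    have h2 := Real.abs_sin_le_one (π * ((n : ℝ) + 1) * z / a)
    rw [norm_mul, norm_mul, norm_mul, Real.norm_of_nonneg (Real.exp_pos _).le]
    simp only [Real.norm_eq_abs]
    calc _ ≤ Real.exp (-(π^2) * ((n : ℝ) + 1)^2 * s / (2 * a^2)) * 1 * (1 * |f z|) := by gcongr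
      _ = _ := by ring

lemma int_sin_pker (a r y : ℝ) (ha : 0 < a) (hr : 0 < r) (n : ℕ) :
    ∫ z in (0:ℝ)..a, Real.sin (π * ((n : ℝ) + 1) * z / a) * pker a r z y =
      Real.exp (-(π^2) * ((n : ℝ) + 1)^2 * r / (2 * a^2)) * Real.sin (π * ((n : ℝ) + 1) * y / a) := by
  have h := swap_int a r y ha hr (fun z => Real.sin (π * ((n : ℝ) + 1) * z / a)) (by fun_prop)
  calc _ = ∫ z in (0:ℝ)..a, pker a r y z * Real.sin (π * ((n : ℝ) + 1) * z / a) := by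
        congr 1; funext z; rw [pker_symm a r z y]; ring
    _ = _ := by
        rw [h, tsum_eq_single n]
        · rw [int_sin_sin a ha, if_pos rfl]
          field_simp
        · intro m hm
          rw [int_sin_sin a ha, if_neg hm, mul_zero]

lemma chapman (a s r x y : ℝ) (ha : 0 < a) (hs : 0 < s) (hr : 0 < r) :
    ∫ z in (0:ℝ)..a, pker a s x z * pker a r z y = pker a (s + r) x y := by
  have hcont : Continuous fun z => pker a r z y := by
    simp_rw [pker_symm a r _ y]; exact pker_cont a r y ha hr
  rw [swap_int a s x ha hs _ hcont]
  unfold pker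
  congr 1
  refine tsum_congr fun n => ?_
  have := int_sin_pker a r y ha hr n
  unfold pker at this
  rw [this]
  rw [show -(π^2) * ((n : ℝ) + 1)^2 * (s+r) / (2 * a^2) = -(π^2) * ((n : ℝ) + 1)^2 * s / (2 * a^2)
    + -(π^2) * ((n : ℝ) + 1)^2 * r / (2 * a^2) by ring, Real.exp_add]
  ring


noncomputable def beta (r s : ℝ) : ℝ := (1/√s) * (r/(s+r^2))

lemma beta_nonneg (r s : ℝ) (hr : 0 < r) (hs : 0 < s) : 0 ≤ beta r s := by
  unfold beta; positivity

lemma beta_int (r t : ℝ) (hr : 0 < r) (ht : 0 < t) :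
    IntervalIntegrable (beta r) volume 0 t ∧ ∫ s in (0:ℝ)..t, beta r s ≤ π := by
  have hc : ContinuousOn (fun s => 2 * Real.arctan (√s/r)) (Icc 0 t) :=
    Continuous.continuousOn (by fun_prop)
  have hd : ∀ s ∈ Ioo 0 t, HasDerivAt (fun s => 2 * Real.arctan (√s/r)) (beta r s) s := by
    intro s hs
    have h := (((Real.hasDerivAt_sqrt hs.1.ne').div_const r).arctan).const_mul 2
    refine h.congr_deriv ?_
    unfold beta
    have h0 : 0 < √s := Real.sqrt_pos.2 hs.1
    have h1 : √s^2 = s := Real.sq_sqrt hs.1.le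
    have h2 := hs.1
    rw [div_pow, h1]
    field_simp
    try ring
  have hi : IntervalIntegrable (beta r) volume 0 t := by
    rw [intervalIntegrable_iff_integrableOn_Ioc_of_le ht.le]
    exact intervalIntegral.integrableOn_deriv_of_nonneg hc hd fun s hs => beta_nonneg r s hr hs.1
  refine ⟨hi, ?_⟩
  rw [intervalIntegral.integral_eq_sub_of_hasDerivAt_of_le ht.le hc hd hi]
  simp
  linarith [Real.arctan_lt_pi_div_two (√t/r)]

lemma beta_int' (r t : ℝ) (hr : 0 < r) (ht : 0 < t) :
    IntervalIntegrable (fun s => beta r (t - s)) volume 0 t ∧ ∫ s in (0:ℝ)..t, beta r (t - s) ≤ π := by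
  obtain ⟨h1, h2⟩ := beta_int r t hr ht
  constructor
  · have := (h1.comp_sub_left t).symm
    simpa using this
  · rw [intervalIntegral.integral_comp_sub_left (fun s => beta r s)]
    simpa using h2

lemma phi_nn (a t x y : ℝ) (hx : 0 < x) (hxa : x < a) (hy : 0 < y) (hya : y < a) (ht : 0 < t) :
    0 ≤ phi a t x y := by
  unfold phi
  have : 0 < a - x := by linarith
  have : 0 < a - y := by linarith
  positivity

lemma half_bd : ∃ C : ℝ, 0 < C ∧ ∀ a s t x y z : ℝ, 0 < a → 0 < s → 2*s ≤ t → t ≤ a^2 → 0 < x → x < a →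
    0 < y → y < a → 0 < z → z ≤ a/8 →
    pker a s x z * pker a (t-s) z y ≤ C * pker a t x y * ((1+z+z^2) * (beta 1 s + beta x s)) := by
  obtain ⟨k, K, hk, hK, hb⟩ := kernel_bd
  refine ⟨K*K*524288/k, by positivity, ?_⟩
  intro a s t x y z ha hs hst hta hx hxa hy hya hz hza
  have hza' : z < a := by linarith
  have h1 := (hb a s x z ha hs (by linarith) hx hxa hz hza').2
  have h2 := (hb a (t-s) z y ha (by linarith) (by linarith) hz hza' hy hya)
  have h3 := (hb a t x y ha (by linarith) hta hx hxa hy hya).1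
  have p1 := phi_nn a s x z hx hxa hz hza' hs
  have p2 := phi_nn a (t-s) z y hz hza' hy hya (by linarith)
  have p3 := phi_nn a t x y hx hxa hy hya (by linarith)
  have q2 : 0 ≤ pker a (t-s) z y := le_trans (by positivity) h2.1
  have b1 := beta_nonneg 1 s one_pos hs
  have b2 := beta_nonneg x s hx hs
  have hcore := phi_core a s t x y z hs hst hx hxa hy hya hz hza
  have hbr : (1/√s) * ((1+z^2)/(1+s) + x*z/(s+x^2)) ≤ (1+z+z^2) * (beta 1 s + beta x s) := by
    have e : (1/√s) * ((1+z^2)/(1+s) + x*z/(s+x^2)) = (1+z^2) * beta 1 s + z * beta x s := by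
      unfold beta; rw [one_pow, add_comm s 1]; ring
    rw [e]
    have := mul_nonneg hz.le b1
    have : 0 ≤ (1+z^2) * beta x s := by positivity
    nlinarith
  have hp : phi a t x y ≤ pker a t x y / k := by
    rw [le_div_iff₀ hk]; linarith
  have q3 : 0 ≤ pker a t x y / k := p3.trans hp
  calc pker a s x z * pker a (t-s) z y ≤ (K * phi a s x z) * (K * phi a (t-s) z y) :=
        mul_le_mul h1 h2.2 q2 (by positivity)
    _ = K*K*(phi a s x z * phi a (t-s) z y) := by ring
    _ ≤ K*K*(524288 * phi a t x y * ((1/√s) * ((1+z^2)/(1+s) + x*z/(s+x^2)))) := by gcongr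
    _ ≤ K*K*(524288 * (pker a t x y / k) * ((1+z+z^2) * (beta 1 s + beta x s))) := by gcongr
    _ = _ := by ring

lemma pker_nn (a t x y : ℝ) (ha : 0 < a) (ht : 0 < t) (hta : t ≤ a^2) (hx : 0 < x) (hxa : x < a)
    (hy : 0 < y) (hya : y < a) : 0 ≤ pker a t x y := by
  obtain ⟨k, K, hk, hK, hb⟩ := kernel_bd
  exact le_trans (mul_nonneg hk.le (phi_nn a t x y hx hxa hy hya ht)) (hb a t x y ha ht hta hx hxa hy hya).1

lemma small_z : ∃ C : ℝ, 0 < C ∧ ∀ a s t x y z : ℝ, 0 < a → 0 < s → s < t → t ≤ a^2 → 0 < x → x < a →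
    0 < y → y < a → 0 < z → z ≤ a/8 →
    pker a s x z * pker a (t-s) z y ≤ C * pker a t x y *
      ((1+z+z^2) * (beta 1 s + beta x s + beta 1 (t-s) + beta y (t-s))) := by
  obtain ⟨C, hC, h⟩ := half_bd
  refine ⟨C, hC, ?_⟩
  intro a s t x y z ha hs hst hta hx hxa hy hya hz hza
  have hp := pker_nn a t x y ha (by linarith) hta hx hxa hy hya
  have b1 := beta_nonneg 1 s one_pos hs
  have b2 := beta_nonneg x s hx hs
  have b3 := beta_nonneg 1 (t-s) one_pos (by linarith)
  have b4 := beta_nonneg y (t-s) hy (by linarith)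
  rcases le_total (2*s) t with h2 | h2
  · refine (h a s t x y z ha hs h2 hta hx hxa hy hya hz hza).trans ?_
    refine mul_le_mul_of_nonneg_left (mul_le_mul_of_nonneg_left ?_ (by positivity)) (by positivity)
    linarith
  · have := h a (t-s) t y x z ha (by linarith) (by linarith) hta hy hya hx hxa hz hza
    rw [sub_sub_cancel, pker_symm a (t-s) y z, pker_symm a s z x, pker_symm a t y x] at this
    rw [mul_comm]
    refine this.trans ?_
    refine mul_le_mul_of_nonneg_left (mul_le_mul_of_nonneg_left ?_ (by positivity)) (by positivity)
    linarith

lemma poly_exp (c z : ℝ) (hc : 0 < c) (hz : 0 < z) :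
    (1+z+z^2) * Real.exp (-c*z) ≤ (1+4/c+16/c^2) * Real.exp (-(c/2)*z) := by
  have hw := mulexp_le_one (c*z/4)
  have e0 : 0 < Real.exp (-(c*z/4)) := Real.exp_pos _
  have h1 : z * Real.exp (-(c*z/4)) ≤ 4/c := by
    rw [le_div_iff₀ hc]; nlinarith
  have h0 : Real.exp (-(c*z/4)) ≤ 1 := by
    rw [Real.exp_le_one_iff]
    have : 0 < c*z := by positivity
    linarith
  set E := Real.exp (-(c*z/4)) with hE
  have hs1 : Real.exp (-c*z) = E^2 * Real.exp (-(c/2)*z) := by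
    rw [hE, ← Real.exp_nat_mul, ← Real.exp_add]; congr 1; push_cast; ring
  rw [hs1, ← mul_assoc]
  gcongr
  have i1 : E^2 ≤ 1 := by nlinarith
  have i2 : z*E^2 ≤ 4/c := by
    have : z*E^2 = (z*E)*E := by ring
    have : 0 < z*E := by positivity
    nlinarith
  have i3 : z^2*E^2 ≤ 16/c^2 := by
    have : z^2*E^2 = (z*E)^2 := by ring
    rw [this, show 16/c^2 = (4/c)^2 by ring]
    gcongr
  nlinarith

lemma far_exp (c a t z : ℝ) (hc : 0 < c) (ha : 0 < a) (ht : 0 < t) (hta : t ≤ a^2) (hz : a/8 ≤ z) :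
    Real.exp (-c*z) ≤ 256/c^2/t := by
  have hw := mulexp_le_one (c*a/16)
  have e0 : 0 < Real.exp (-(c*a/16)) := Real.exp_pos _
  have h1 : Real.exp (-c*z) ≤ Real.exp (-(c*a/16))^2 := by
    rw [← Real.exp_nat_mul]
    apply Real.exp_le_exp.2
    push_cast
    nlinarith
  set E := Real.exp (-(c*a/16)) with hE
  rw [le_div_iff₀ ht, le_div_iff₀ (by positivity)]
  have h2 : (c*a/16*E)^2 ≤ 1 := by
    have : 0 < c*a/16*E := by positivity
    nlinarith
  calc Real.exp (-c*z) * t * c^2 ≤ E^2 * a^2 * c^2 := by gcongr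
    _ = 256 * (c*a/16*E)^2 := by ring
    _ ≤ _ := by linarith

lemma pointwise (c : ℝ) (hc : 0 < c) : ∃ C : ℝ, 0 < C ∧ ∀ a s t x y z : ℝ, 0 < a → 0 < s → s < t → t ≤ a^2 →
    0 < x → x < a → 0 < y → y < a → 0 < z → z < a →
    pker a s x z * Real.exp (-c*z) * pker a (t-s) z y ≤
      C * pker a t x y * (beta 1 s + beta x s + beta 1 (t-s) + beta y (t-s)) * Real.exp (-(c/2)*z)
      + 256/c^2/t * (pker a s x z * pker a (t-s) z y) := by
  obtain ⟨C, hC, h⟩ := small_z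
  refine ⟨C * (1+4/c+16/c^2), by positivity, ?_⟩
  intro a s t x y z ha hs hst hta hx hxa hy hya hz hza
  have ht : 0 < t := by linarith
  have hp := pker_nn a t x y ha ht hta hx hxa hy hya
  have hp1 := pker_nn a s x z ha hs (by linarith) hx hxa hz hza
  have hp2 := pker_nn a (t-s) z y ha (by linarith) (by linarith) hz hza hy hya
  have b1 := beta_nonneg 1 s one_pos hs
  have b2 := beta_nonneg x s hx hs
  have b3 := beta_nonneg 1 (t-s) one_pos (by linarith)
  have b4 := beta_nonneg y (t-s) hy (by linarith)
  set B := beta 1 s + beta x s + beta 1 (t-s) + beta y (t-s) with hB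
  have hB0 : 0 ≤ B := by positivity
  rcases le_total z (a/8) with h8 | h8
  · have n : 0 ≤ 256/c^2/t * (pker a s x z * pker a (t-s) z y) := by positivity
    have h' := h a s t x y z ha hs hst hta hx hxa hy hya hz h8
    have pe := poly_exp c z hc hz
    calc _ = (pker a s x z * pker a (t-s) z y) * Real.exp (-c*z) := by ring
      _ ≤ (C * pker a t x y * ((1+z+z^2) * B)) * Real.exp (-c*z) := by gcongr
      _ = (C * pker a t x y * B) * ((1+z+z^2) * Real.exp (-c*z)) := by ring
      _ ≤ (C * pker a t x y * B) * ((1+4/c+16/c^2) * Real.exp (-(c/2)*z)) := by gcongr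
      _ = C * (1+4/c+16/c^2) * pker a t x y * B * Real.exp (-(c/2)*z) := by ring
      _ ≤ _ := by linarith
  · have n : 0 ≤ C * (1+4/c+16/c^2) * pker a t x y * B * Real.exp (-(c/2)*z) := by positivity
    have fe := far_exp c a t z hc ha ht hta h8
    calc _ = Real.exp (-c*z) * (pker a s x z * pker a (t-s) z y) := by ring
      _ ≤ 256/c^2/t * (pker a s x z * pker a (t-s) z y) := by gcongr
      _ ≤ _ := by linarith

lemma int_exp_le (d a : ℝ) (hd : 0 < d) : ∫ z in (0:ℝ)..a, Real.exp (-d*z) ≤ 1/d := by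
  rw [intervalIntegral.integral_comp_mul_left (fun z => Real.exp z) (by linarith : -d ≠ 0), integral_exp]
  have := Real.exp_pos (-d*a)
  simp only [smul_eq_mul, mul_zero, Real.exp_zero]
  have e : (-d)⁻¹ * (Real.exp (-d*a) - 1) = (1 - Real.exp (-d*a))/d := by
    field_simp; ring
  rw [e]
  gcongr
  linarith

lemma inner_bd (c : ℝ) (hc : 0 < c) : ∃ C : ℝ, 0 < C ∧ ∀ a s t x y : ℝ, 0 < a → 0 < s → s < t → t ≤ a^2 →
    0 < x → x < a → 0 < y → y < a →
    ∫ z in (0:ℝ)..a, pker a s x z * Real.exp (-c*z) * pker a (t-s) z y ≤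
      C * pker a t x y * (beta 1 s + beta x s + beta 1 (t-s) + beta y (t-s))
      + 256/c^2/t * pker a t x y := by
  obtain ⟨C, hC, h⟩ := pointwise c hc
  refine ⟨C * (1/(c/2)), by positivity, ?_⟩
  intro a s t x y ha hs hst hta hx hxa hy hya
  have ht : 0 < t := by linarith
  have hts : 0 < t - s := by linarith
  have hp := pker_nn a t x y ha ht hta hx hxa hy hya
  have b1 := beta_nonneg 1 s one_pos hs
  have b2 := beta_nonneg x s hx hs
  have b3 := beta_nonneg 1 (t-s) one_pos hts
  have b4 := beta_nonneg y (t-s) hy hts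
  set B := beta 1 s + beta x s + beta 1 (t-s) + beta y (t-s) with hB
  have hB0 : 0 ≤ B := by positivity
  have c1 := pker_cont a s x ha hs
  have c2 : Continuous fun z => pker a (t-s) z y := by
    simp_rw [pker_symm a (t-s) _ y]; exact pker_cont a (t-s) y ha hts
  have i1 : Continuous fun z : ℝ => C * pker a t x y * B * Real.exp (-(c/2)*z) := by fun_prop
  have i2 : Continuous fun z : ℝ => 256/c^2/t * (pker a s x z * pker a (t-s) z y) := by fun_prop
  have i3 : Continuous fun z : ℝ => pker a s x z * Real.exp (-c*z) * pker a (t-s) z y := by fun_prop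
  have ck := chapman a s (t-s) x y ha hs hts
  rw [add_sub_cancel] at ck
  calc _ ≤ ∫ z in (0:ℝ)..a, (C * pker a t x y * B * Real.exp (-(c/2)*z)
        + 256/c^2/t * (pker a s x z * pker a (t-s) z y)) := by
        apply intervalIntegral.integral_mono_on_of_le_Ioo ha.le (i3.intervalIntegrable _ _)
          ((i1.add i2).intervalIntegrable _ _)
        intro z hz
        exact h a s t x y z ha hs hst hta hx hxa hy hya hz.1 hz.2
    _ = C * pker a t x y * B * (∫ z in (0:ℝ)..a, Real.exp (-(c/2)*z)) + 256/c^2/t * pker a t x y := by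
        rw [intervalIntegral.integral_add (i1.intervalIntegrable _ _) (i2.intervalIntegrable _ _),
          intervalIntegral.integral_const_mul, intervalIntegral.integral_const_mul, ck]
    _ ≤ C * pker a t x y * B * (1/(c/2)) + 256/c^2/t * pker a t x y := by
        have := int_exp_le (c/2) a (by positivity)
        gcongr
    _ = _ := by ring

theorem stmt12 (c : ℝ) (hc : 0 < c) :
    ∃ C : ℝ, 0 < C ∧ ∀ a : ℝ, 0 < a → ∀ x ∈ Set.Ioo (0:ℝ) a, ∀ y ∈ Set.Ioo (0:ℝ) a,
      ∀ t : ℝ, 0 < t → t ≤ a^2 →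
      (∫ s in (0:ℝ)..t, ∫ z in (0:ℝ)..a,
          pker a s x z * Real.exp (-c * z) * pker a (t - s) z y) ≤
        C * pker a t x y := by
  obtain ⟨C, hC, h⟩ := inner_bd c hc
  refine ⟨C * (4*π) + 256/c^2, by positivity, ?_⟩
  intro a ha x hx y hy t ht hta
  have hp := pker_nn a t x y ha ht hta hx.1 hx.2 hy.1 hy.2
  by_cases hF : IntervalIntegrable (fun s => ∫ z in (0:ℝ)..a,
          pker a s x z * Real.exp (-c * z) * pker a (t - s) z y) volume 0 t
  swap
  · rw [intervalIntegral.integral_undef hF]; positivity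
  obtain ⟨j1, k1⟩ := beta_int 1 t one_pos ht
  obtain ⟨j2, k2⟩ := beta_int x t hx.1 ht
  obtain ⟨j3, k3⟩ := beta_int' 1 t one_pos ht
  obtain ⟨j4, k4⟩ := beta_int' y t hy.1 ht
  have jB := ((j1.add j2).add j3).add j4
  have jc : IntervalIntegrable (fun _ : ℝ => 256/c^2/t * pker a t x y) volume 0 t := intervalIntegrable_const
  have jj := jB.const_mul (C * pker a t x y)
  calc _ ≤ ∫ s in (0:ℝ)..t, (C * pker a t x y * (beta 1 s + beta x s + beta 1 (t-s) + beta y (t-s))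
      + 256/c^2/t * pker a t x y) := by
        apply intervalIntegral.integral_mono_on_of_le_Ioo ht.le hF (jj.add jc)
        intro s hs
        exact h a s t x y ha hs.1 hs.2 hta hx.1 hx.2 hy.1 hy.2
    _ = C * pker a t x y * ((∫ s in (0:ℝ)..t, beta 1 s) + (∫ s in (0:ℝ)..t, beta x s)
        + (∫ s in (0:ℝ)..t, beta 1 (t-s)) + (∫ s in (0:ℝ)..t, beta y (t-s))) + 256/c^2 * pker a t x y := by
        rw [intervalIntegral.integral_add jj jc, intervalIntegral.integral_const_mul,
          intervalIntegral.integral_add ((j1.add j2).add j3) j4, intervalIntegral.integral_add (j1.add j2) j3,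
          intervalIntegral.integral_add j1 j2, intervalIntegral.integral_const]
        congr 1
        simp only [sub_zero, smul_eq_mul]
        field_simp
    _ ≤ C * pker a t x y * (π + π + π + π) + 256/c^2 * pker a t x y := by gcongr
    _ = _ := by ring
end

section
/- Let a ≥ π. For every t > 0 and every x ∈ [0,a]: ∫_0^a 𝔭_t(x,y)·w_Z(y) dy = w_Z(x). (This exact invariance expresses that the process Z_t = Σ_u w_Z(X_u(t)) over surviving particles is a martingale for the associated branching Brownian motion.) -/
open Real MeasureTheory Set Filter

/-- `μ = √(1 − π²/a²)`. -/
noncomputable def muFn (a : ℝ) : ℝ := Real.sqrt (1 - π^2 / a^2)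

/-- `w_Z(x) = a·e^{μ(x−a)}·sin(πx/a)`. -/
noncomputable def wZ (a x : ℝ) : ℝ := a * Real.exp (muFn a * (x - a)) * Real.sin (π * x / a)

/-- Density of the branching Brownian motion with drift `−μ` before absorption
at `0` and `a`: `𝔭_t(x,y) = e^{μ(x−y)+π²t/(2a²)}·p^a_t(x,y)`. -/
noncomputable def pdens (a t x y : ℝ) : ℝ :=
  Real.exp (muFn a * (x - y) + π^2 * t / (2 * a^2)) * pker a t x y

lemma cos_int_aux (a : ℝ) (ha : 0 < a) (m : ℕ) (hm : m ≠ 0) :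
    ∫ y in (0:ℝ)..a, Real.cos (π * (m : ℝ) / a * y) = 0 := by
  have hm' : (m : ℝ) ≠ 0 := by exact_mod_cast hm
  have hc : π * (m : ℝ) / a ≠ 0 := by positivity
  rw [intervalIntegral.integral_comp_mul_left (fun y => Real.cos y) hc, integral_cos]
  have : π * (m : ℝ) / a * a = m * π := by field_simp
  rw [this, Real.sin_nat_mul_pi]
  simp

lemma sin_orth_aux (a : ℝ) (ha : 0 < a) (n : ℕ) :
    ∫ y in (0:ℝ)..a, Real.sin (π * ((n : ℝ) + 1) * y / a) * Real.sin (π * y / a)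
      = if n = 0 then a / 2 else 0 := by
  have h : ∀ y : ℝ, Real.sin (π * ((n : ℝ) + 1) * y / a) * Real.sin (π * y / a)
      = (1/2) * Real.cos (π * (n : ℝ) / a * y)
        - (1/2) * Real.cos (π * ((n + 2 : ℕ) : ℝ) / a * y) := by
    intro y
    have e1 : π * (n : ℝ) / a * y = π * ((n : ℝ) + 1) * y / a - π * y / a := by ring
    have e2 : π * ((n + 2 : ℕ) : ℝ) / a * y = π * ((n : ℝ) + 1) * y / a + π * y / a := by
      push_cast; ring
    rw [e1, e2, Real.cos_sub, Real.cos_add]; ring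
  simp_rw [h]
  rw [intervalIntegral.integral_sub
      (Continuous.intervalIntegrable (by fun_prop) _ _)
      (Continuous.intervalIntegrable (by fun_prop) _ _),
    intervalIntegral.integral_const_mul, intervalIntegral.integral_const_mul,
    cos_int_aux a ha (n + 2) (by omega)]
  split_ifs with h0
  · subst h0
    simp
    ring
  · rw [cos_int_aux a ha n h0]; simp

lemma summable_aux (a t : ℝ) (ha : 0 < a) (ht : 0 < t) :
    Summable fun n : ℕ => Real.exp (-(π^2) * ((n : ℝ) + 1)^2 * t / (2 * a^2)) := by
  have hc : -(π^2 * t / (2 * a^2)) < 0 := by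
    have : 0 < π^2 * t / (2 * a^2) := by positivity
    linarith
  refine Summable.of_nonneg_of_le (fun n => (Real.exp_pos _).le) (fun n => ?_)
    (Real.summable_exp_nat_mul_iff.mpr hc)
  apply Real.exp_le_exp.mpr
  have h1 : -(π^2) * ((n : ℝ) + 1)^2 * t / (2 * a^2)
      = -(π^2 * t / (2 * a^2)) * ((n : ℝ) + 1)^2 := by ring
  rw [h1]
  have h2 : (n : ℝ) ≤ ((n : ℝ) + 1)^2 := by nlinarith [(Nat.cast_nonneg n : (0:ℝ) ≤ n)]
  nlinarith

/-- Exact invariance of `w_Z`: `∫_0^a 𝔭_t(x,y)·w_Z(y) dy = w_Z(x)` (martingale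
property of `Z_t`). -/
theorem stmt13 (a : ℝ) (ha : π ≤ a) (t : ℝ) (ht : 0 < t)
    (x : ℝ) (hx : x ∈ Set.Icc 0 a) :
    ∫ y in (0:ℝ)..a, pdens a t x y * wZ a y = wZ a x := by
  have ha0 : 0 < a := lt_of_lt_of_le Real.pi_pos ha
  set E : ℕ → ℝ := fun n => Real.exp (-(π^2) * ((n : ℝ) + 1)^2 * t / (2 * a^2)) with hE
  have hEs : Summable E := summable_aux a t ha0 ht
  set F : ℕ → ℝ → ℝ := fun n y => E n * Real.sin (π * ((n : ℝ) + 1) * x / a) *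
    (Real.sin (π * ((n : ℝ) + 1) * y / a) * Real.sin (π * y / a)) with hF
  have hb : ∀ n y, ‖F n y‖ ≤ E n := by
    intro n y
    have hp : 0 ≤ E n := (Real.exp_pos _).le
    simp only [hF, norm_mul, Real.norm_eq_abs, abs_of_nonneg hp]
    have h1 := Real.abs_sin_le_one (π * ((n : ℝ) + 1) * x / a)
    have h2 := Real.abs_sin_le_one (π * ((n : ℝ) + 1) * y / a)
    have h3 := Real.abs_sin_le_one (π * y / a)
    have h4 := mul_le_one₀ h2 (abs_nonneg _) h3
    have h5 := mul_le_one₀ h1 (by positivity) h4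
    calc _ = E n * (|Real.sin (π * ((n : ℝ) + 1) * x / a)| *
          (|Real.sin (π * ((n : ℝ) + 1) * y / a)| * |Real.sin (π * y / a)|)) := by ring
      _ ≤ E n * 1 := mul_le_mul_of_nonneg_left h5 hp
      _ = E n := mul_one _
  have hFs : ∀ y, Summable fun n => F n y := fun y =>
    Summable.of_norm_bounded hEs (fun n => hb n y)
  have key : HasSum (fun n => ∫ y in (0:ℝ)..a, F n y) (∫ y in (0:ℝ)..a, ∑' n, F n y) := by
    refine intervalIntegral.hasSum_integral_of_dominated_convergence (fun n _ => E n)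
      (fun n => ?_) (fun n => ?_) ?_ ?_ ?_
    · exact Continuous.aestronglyMeasurable (by fun_prop)
    · exact Eventually.of_forall fun y _ => hb n y
    · exact Eventually.of_forall fun y _ => hEs
    · exact intervalIntegrable_const
    · exact Eventually.of_forall fun y _ => (hFs y).hasSum
  have hint : ∀ n, ∫ y in (0:ℝ)..a, F n y
      = if n = 0 then E 0 * Real.sin (π * x / a) * (a / 2) else 0 := by
    intro n
    simp only [hF]
    rw [intervalIntegral.integral_const_mul, sin_orth_aux a ha0 n]
    split_ifs with h0
    · subst h0; simp
    · simp
  simp_rw [hint] at key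
  have hval := key.unique (hasSum_ite_eq 0 (E 0 * Real.sin (π * x / a) * (a / 2)))
  have hpt : ∀ y, pdens a t x y * wZ a y
      = (2 * Real.exp (muFn a * (x - a)) * Real.exp (π^2 * t / (2 * a^2))) * ∑' n, F n y := by
    intro y
    have hs : ∑' n, F n y = (∑' n : ℕ, Real.exp (-(π^2) * ((n : ℝ) + 1)^2 * t / (2 * a^2)) *
        Real.sin (π * ((n : ℝ) + 1) * x / a) * Real.sin (π * ((n : ℝ) + 1) * y / a))
        * Real.sin (π * y / a) := by
      rw [← tsum_mul_right]
      refine tsum_congr fun n => ?_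
      simp only [hF, hE]; ring
    have he : Real.exp (muFn a * (x - y) + π^2 * t / (2 * a^2)) * Real.exp (muFn a * (y - a))
        = Real.exp (muFn a * (x - a)) * Real.exp (π^2 * t / (2 * a^2)) := by
      rw [← Real.exp_add, ← Real.exp_add]; congr 1; ring
    rw [hs, mul_assoc 2, ← he]
    unfold pdens wZ pker
    field_simp
  simp_rw [hpt]
  rw [intervalIntegral.integral_const_mul, hval]
  have hE0 : Real.exp (π^2 * t / (2 * a^2)) * E 0 = 1 := by
    simp only [hE]
    rw [← Real.exp_add, Real.exp_eq_one_iff]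
    push_cast; ring
  unfold wZ
  linear_combination (Real.exp (muFn a * (x - a)) * a * Real.sin (π * x / a)) * hE0
end

section
/- There exists a universal constant C such that for every a ≥ π and every x ∈ [0,a]: (i) for every t > 0, ∫_0^a 𝔭_t(x,y)·w_Y(y) dy ≤ C·w_Y(x); and (ii) for every t ≥ a², ∫_0^a 𝔭_t(x,y)·w_Y(y) dy ≤ C·w_Z(x)/a. -/
open Real MeasureTheory Set Filter

/-- `w_Y(x) = e^{μ(x−a)}`. -/
noncomputable def wY (a x : ℝ) : ℝ := Real.exp (muFn a * (x - a))

lemma aux_sin_le (u : ℝ) (hu : 0 ≤ Real.sin u) (n : ℕ) : |Real.sin (n * u)| ≤ n * Real.sin u := by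
  induction n with
  | zero => simp
  | succ n ih =>
    have h : ((n + 1 : ℕ) : ℝ) * u = n * u + u := by push_cast; ring
    rw [h, Real.sin_add]
    have h1 := Real.abs_cos_le_one u
    have h2 := Real.abs_cos_le_one (n * u)
    calc |Real.sin (n * u) * Real.cos u + Real.cos (n * u) * Real.sin u|
        ≤ |Real.sin (n * u)| * |Real.cos u| + |Real.cos (n * u)| * |Real.sin u| := by
          rw [← abs_mul, ← abs_mul]; exact abs_add_le _ _
      _ ≤ |Real.sin (n * u)| * 1 + 1 * |Real.sin u| := by gcongr
      _ ≤ _ := by rw [abs_of_nonneg hu]; push_cast; linarith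

lemma aux_tail (u : ℝ) (c : ℕ → ℝ) (hc : Antitone c) (N j : ℕ) :
    Real.sin u * ∑ k ∈ Finset.range j, c (N + k) * Real.sin ((2 * ((N + k : ℕ) : ℝ) + 1) * u)
      ≤ c N - c (N + j) * (1 - Real.sin ((N + j : ℕ) * u) ^ 2) - c N * Real.sin (N * u) ^ 2 := by
  induction j with
  | zero => simp; linarith
  | succ j ih =>
    rw [Finset.sum_range_succ, mul_add]
    have key : Real.sin u * Real.sin ((2 * ((N + j : ℕ) : ℝ) + 1) * u)
        = Real.sin ((N + (j + 1) : ℕ) * u) ^ 2 - Real.sin ((N + j : ℕ) * u) ^ 2 := by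
      have e1 : (2 * ((N + j : ℕ) : ℝ) + 1) * u
        = ((N + j : ℕ) : ℝ) * u + (((N + j : ℕ) : ℝ) * u + u) := by ring
      have e2 : ((N + (j + 1) : ℕ) : ℝ) * u = ((N + j : ℕ) : ℝ) * u + u := by push_cast; ring
      rw [e1, e2]
      generalize ((N + j : ℕ) : ℝ) * u = A
      have e3 : Real.sin u = Real.sin ((A + u) - A) := by ring_nf
      rw [Real.sin_add A (A + u)]
      nth_rw 1 [e3]
      rw [Real.sin_sub]
      have p1 := Real.sin_sq_add_cos_sq A
      have p2 := Real.sin_sq_add_cos_sq (A + u)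
      generalize Real.sin (A + u) = S at *
      generalize Real.cos (A + u) = D at *
      have p1' : Real.cos A ^ 2 = 1 - Real.sin A ^ 2 := by linarith
      have p2' : D ^ 2 = 1 - S ^ 2 := by linarith
      ring_nf
      rw [p1', p2']; ring
    have h1 : c (N + (j + 1)) ≤ c (N + j) := hc (by omega)
    have h2 := Real.sin_sq_le_one ((N + (j + 1) : ℕ) * u)
    have h3 : Real.sin u * (c (N + j) * Real.sin ((2 * ((N + j : ℕ) : ℝ) + 1) * u))
      = c (N + j) * (Real.sin ((N + (j + 1) : ℕ) * u) ^ 2 - Real.sin ((N + j : ℕ) * u) ^ 2) := by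
      rw [← key]; ring
    rw [h3]
    nlinarith [mul_nonneg (sub_nonneg.2 h1) (sub_nonneg.2 h2)]

/-- the reduced partial sums -/
lemma aux_bound (κ : ℝ) (hκ : 0 ≤ κ) (u : ℝ) (hu : 0 ≤ Real.sin u) (K : ℕ) :
    ∑ k ∈ Finset.range K, Real.exp (-κ * (2 * (k:ℝ) + 1) ^ 2) / (2 * (k:ℝ) + 1) *
      Real.sin ((2 * (k : ℝ) + 1) * u) ≤ 2 := by
  set c : ℕ → ℝ := fun k => Real.exp (-κ * (2 * (k:ℝ) + 1) ^ 2) / (2 * (k:ℝ) + 1) with hcdef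
  have hc0 : ∀ k, 0 ≤ c k := fun k => by simp only [hcdef]; positivity
  have hc1 : ∀ k, c k ≤ 1 / (2 * (k:ℝ) + 1) := fun k => by
    simp only [hcdef]
    gcongr
    rw [Real.exp_le_one_iff]
    nlinarith [mul_nonneg hκ (sq_nonneg (2 * (k:ℝ) + 1))]
  have hanti : Antitone c := by
    intro i j hij
    have hij' : (i : ℝ) ≤ j := by exact_mod_cast hij
    simp only [hcdef]
    have : -κ * (2 * (j:ℝ) + 1) ^ 2 ≤ -κ * (2 * (i:ℝ) + 1) ^ 2 := by
      have : (2 * (i:ℝ) + 1) ^ 2 ≤ (2 * (j:ℝ) + 1) ^ 2 := by gcongr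
      nlinarith
    gcongr
  have hterm : ∀ k : ℕ, c k * Real.sin ((2 * (k : ℝ) + 1) * u) ≤ Real.sin u := fun k => by
    have h := le_trans (le_abs_self _) (aux_sin_le u hu (2 * k + 1))
    push_cast at h
    calc c k * Real.sin ((2 * (k : ℝ) + 1) * u)
        ≤ c k * ((2 * (k : ℝ) + 1) * Real.sin u) := mul_le_mul_of_nonneg_left h (hc0 k)
      _ ≤ 1 / (2 * (k:ℝ) + 1) * ((2 * (k : ℝ) + 1) * Real.sin u) :=
        mul_le_mul_of_nonneg_right (hc1 k) (by positivity)
      _ = Real.sin u := by field_simp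
  have hhead : ∀ M : ℕ, ∑ k ∈ Finset.range M, c k * Real.sin ((2 * (k : ℝ) + 1) * u)
      ≤ M * Real.sin u := fun M => by
    calc _ ≤ ∑ k ∈ Finset.range M, Real.sin u := Finset.sum_le_sum fun k _ => hterm k
      _ = _ := by simp
  rcases hu.eq_or_lt with h0 | hpos
  · have := hhead K
    rw [← h0] at this
    linarith
  set N := ⌊1 / Real.sin u⌋₊ with hN
  have hN1 : (N : ℝ) * Real.sin u ≤ 1 := by
    have := Nat.floor_le (a := 1 / Real.sin u) (by positivity)
    rwa [le_div_iff₀ hpos] at this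
  have hN2 : 1 < ((N : ℝ) + 1) * Real.sin u := by
    have := Nat.lt_floor_add_one (1 / Real.sin u)
    rwa [div_lt_iff₀ hpos] at this
  rcases le_total K N with hKN | hKN
  · have h1 := hhead K
    have : (K : ℝ) * Real.sin u ≤ N * Real.sin u := by gcongr
    linarith
  · obtain ⟨j, rfl⟩ := Nat.exists_eq_add_of_le hKN
    rw [Finset.sum_range_add]
    have h1 := hhead N
    have h2 := aux_tail u c hanti N j
    have h3 : Real.sin u * ∑ k ∈ Finset.range j, c (N + k) *
        Real.sin ((2 * ((N + k : ℕ) : ℝ) + 1) * u) ≤ c N := by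
      have a1 := Real.sin_sq_le_one ((N + j : ℕ) * u)
      have a2 := mul_nonneg (hc0 (N + j)) (sub_nonneg.2 a1)
      have a3 := mul_nonneg (hc0 N) (sq_nonneg (Real.sin (N * u)))
      linarith
    have h4 : c N ≤ Real.sin u * 1 := by
      refine (hc1 N).trans ?_
      rw [div_le_iff₀ (by positivity)]
      have : 0 ≤ (N : ℝ) * Real.sin u := by positivity
      nlinarith
    have h5 := le_of_mul_le_mul_left (h3.trans h4) hpos
    linarith

lemma aux_bound2 (κ : ℝ) (hκ : 1 ≤ κ) (u : ℝ) (hu : 0 ≤ Real.sin u) (K : ℕ) :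
    ∑ k ∈ Finset.range K, Real.exp (-κ * (2 * (k:ℝ) + 1) ^ 2) / (2 * (k:ℝ) + 1) *
      Real.sin ((2 * (k : ℝ) + 1) * u) ≤ 2 * Real.exp (-κ) * Real.sin u := by
  have hterm : ∀ k ∈ Finset.range K, Real.exp (-κ * (2 * (k:ℝ) + 1) ^ 2) / (2 * (k:ℝ) + 1) *
      Real.sin ((2 * (k : ℝ) + 1) * u) ≤ (1/2 : ℝ) ^ k * (Real.exp (-κ) * Real.sin u) := by
    intro k _
    have h := le_trans (le_abs_self _) (aux_sin_le u hu (2 * k + 1))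
    push_cast at h
    have he : Real.exp (-κ * (2 * (k:ℝ) + 1) ^ 2) ≤ (1/2 : ℝ) ^ k * Real.exp (-κ) := by
      have h1 : Real.exp (-1) ≤ 1 / 2 := by
        rw [Real.exp_neg, one_div]
        apply inv_anti₀ (by norm_num)
        linarith [Real.add_one_le_exp (1:ℝ)]
      calc Real.exp (-κ * (2 * (k:ℝ) + 1) ^ 2) ≤ Real.exp (k * (-1) + -κ) := by
            rw [Real.exp_le_exp]
            have hk : (0:ℝ) ≤ k := by positivity
            nlinarith [mul_nonneg hk hk, mul_nonneg (mul_nonneg hk hk) (sub_nonneg.2 hκ),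
              mul_nonneg hk (sub_nonneg.2 hκ)]
        _ = Real.exp (-1) ^ k * Real.exp (-κ) := by rw [Real.exp_add, Real.exp_nat_mul]
        _ ≤ _ := by gcongr
    calc _ ≤ Real.exp (-κ * (2 * (k:ℝ) + 1) ^ 2) / (2 * (k:ℝ) + 1) *
          ((2 * (k : ℝ) + 1) * Real.sin u) := by gcongr
      _ = Real.exp (-κ * (2 * (k:ℝ) + 1) ^ 2) * Real.sin u := by field_simp
      _ ≤ (1/2 : ℝ) ^ k * Real.exp (-κ) * Real.sin u := by gcongr
      _ = _ := by ring
  refine (Finset.sum_le_sum hterm).trans ?_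
  rw [← Finset.sum_mul]
  have h2 : ∑ k ∈ Finset.range K, (1/2 : ℝ) ^ k ≤ 2 := by
    have := (summable_geometric_two).sum_le_tsum (Finset.range K) (fun k _ => by positivity)
    rwa [tsum_geometric_two] at this
  have h3 : 0 ≤ Real.exp (-κ) * Real.sin u := by positivity
  nlinarith

lemma aux_int (a : ℝ) (ha : 0 < a) (n : ℕ) :
    ∫ y in (0:ℝ)..a, Real.sin (π * ((n : ℝ) + 1) * y / a)
      = a / (π * ((n : ℝ) + 1)) * (1 + (-1) ^ n) := by
  have hne : π * ((n : ℝ) + 1) / a ≠ 0 := by positivity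
  have e : ∀ y : ℝ, π * ((n : ℝ) + 1) * y / a = (π * ((n : ℝ) + 1) / a) * y := fun y => by ring
  simp_rw [e]
  rw [intervalIntegral.integral_comp_mul_left (fun y => Real.sin y) hne, integral_sin]
  have e2 : π * ((n : ℝ) + 1) / a * a = ((n + 1 : ℕ) : ℝ) * π := by push_cast; field_simp
  rw [e2, Real.cos_nat_mul_pi]
  simp [pow_succ]

lemma aux_hasSum (a : ℝ) (ha : 0 < a) (t : ℝ) (ht : 0 < t) (x : ℝ) :
    HasSum (fun n : ℕ => Real.exp (-(π^2) * ((n : ℝ) + 1)^2 * t / (2 * a^2)) *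
      Real.sin (π * ((n : ℝ) + 1) * x / a) * (a / (π * ((n : ℝ) + 1)) * (1 + (-1) ^ n)))
      (∫ y in (0:ℝ)..a, ∑' n : ℕ, Real.exp (-(π^2) * ((n : ℝ) + 1)^2 * t / (2 * a^2)) *
    Real.sin (π * ((n : ℝ) + 1) * x / a) * Real.sin (π * ((n : ℝ) + 1) * y / a)) := by
  set κ := π^2 * t / (2 * a^2) with hκ
  have hκ0 : 0 < κ := by positivity
  have hs : Summable (fun n : ℕ => Real.exp (-κ) ^ n) :=
    summable_geometric_of_lt_one (by positivity) (by rw [Real.exp_lt_one_iff]; linarith)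
  have hb : ∀ (n : ℕ) (y : ℝ), ‖Real.exp (-(π^2) * ((n : ℝ) + 1)^2 * t / (2 * a^2)) *
    Real.sin (π * ((n : ℝ) + 1) * x / a) * Real.sin (π * ((n : ℝ) + 1) * y / a)‖
      ≤ Real.exp (-κ) ^ n := by
    intro n y
    rw [norm_mul, norm_mul, Real.norm_eq_abs, Real.norm_eq_abs, Real.norm_eq_abs,
      abs_of_pos (Real.exp_pos _)]
    have e : -(π^2) * ((n : ℝ) + 1)^2 * t / (2 * a^2) = -κ * ((n : ℝ) + 1)^2 := by
      rw [hκ]; ring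
    rw [e]
    calc _ ≤ Real.exp (-κ * ((n : ℝ) + 1)^2) * 1 * 1 := by
          gcongr
          · exact Real.abs_sin_le_one _
          · exact Real.abs_sin_le_one _
      _ ≤ Real.exp (n * (-κ)) := by
          rw [mul_one, mul_one, Real.exp_le_exp]
          have hn : (0:ℝ) ≤ n := by positivity
          nlinarith [mul_nonneg hκ0.le hn, mul_nonneg hκ0.le (mul_nonneg hn hn)]
      _ = _ := by rw [Real.exp_nat_mul]
  have := intervalIntegral.hasSum_integral_of_dominated_convergence (μ := volume) (a := 0) (b := a)
    (F := fun (n : ℕ) y => Real.exp (-(π^2) * ((n : ℝ) + 1)^2 * t / (2 * a^2)) *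
    Real.sin (π * ((n : ℝ) + 1) * x / a) * Real.sin (π * ((n : ℝ) + 1) * y / a))
    (f := fun y => ∑' n : ℕ, Real.exp (-(π^2) * ((n : ℝ) + 1)^2 * t / (2 * a^2)) *
    Real.sin (π * ((n : ℝ) + 1) * x / a) * Real.sin (π * ((n : ℝ) + 1) * y / a))
    (bound := fun n _ => Real.exp (-κ) ^ n)
    (fun n => Continuous.aestronglyMeasurable (by fun_prop))
    (fun n => ae_of_all _ fun y _ => hb n y)
    (ae_of_all _ fun y _ => hs)
    (by simp)
    (ae_of_all _ fun y _ => (Summable.of_norm_bounded hs (fun n => hb n y)).hasSum)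
  simp only [intervalIntegral.integral_const_mul, aux_int a ha] at this
  exact this

lemma aux_le (a : ℝ) (ha : 0 < a) (t : ℝ) (ht : 0 < t) (x B : ℝ)
    (hB : ∀ K : ℕ, ∑ k ∈ Finset.range K,
      Real.exp (-(π^2 * t / (2 * a^2)) * (2 * (k:ℝ) + 1) ^ 2) / (2 * (k:ℝ) + 1) *
      Real.sin ((2 * (k : ℝ) + 1) * (π * x / a)) ≤ B) :
    (∫ y in (0:ℝ)..a, pker a t x y) ≤ 4 / π * B := by
  have h := (aux_hasSum a ha t ht x).tendsto_sum_nat.comp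
    (Filter.tendsto_id.const_mul_atTop' (r := 2) (by norm_num))
  unfold pker
  rw [intervalIntegral.integral_const_mul]
  have hle := le_of_tendsto' (b := 2 * a / π * B) h (fun K => by
    have e : ∀ K : ℕ, ∑ n ∈ Finset.range (2 * K),
        Real.exp (-(π^2) * ((n : ℝ) + 1)^2 * t / (2 * a^2)) *
        Real.sin (π * ((n : ℝ) + 1) * x / a) * (a / (π * ((n : ℝ) + 1)) * (1 + (-1) ^ n))
        = 2 * a / π * ∑ k ∈ Finset.range K,
      Real.exp (-(π^2 * t / (2 * a^2)) * (2 * (k:ℝ) + 1) ^ 2) / (2 * (k:ℝ) + 1) *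
      Real.sin ((2 * (k : ℝ) + 1) * (π * x / a)) := by
      intro K
      induction K with
      | zero => simp
      | succ K ih =>
        rw [show 2 * (K + 1) = 2 * K + 1 + 1 by ring, Finset.sum_range_succ,
          Finset.sum_range_succ, ih, Finset.sum_range_succ]
        have o1 : (-1 : ℝ) ^ (2 * K) = 1 := by simp
        have o2 : (-1 : ℝ) ^ (2 * K + 1) = -1 := by rw [pow_succ, o1]; ring
        rw [o1, o2]
        push_cast
        have e1 : -(π^2) * (2 * (K : ℝ) + 1)^2 * t / (2 * a^2)
          = -(π^2 * t / (2 * a^2)) * (2 * (K:ℝ) + 1) ^ 2 := by ring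
        have e2 : π * (2 * (K : ℝ) + 1) * x / a = (2 * (K : ℝ) + 1) * (π * x / a) := by ring
        rw [e1, e2]
        have : (2 * (K : ℝ) + 1) ≠ 0 := by positivity
        generalize (Finset.sum (Finset.range K) _ : ℝ) = S
        generalize Real.exp (-(π^2 * t / (2 * a^2)) * (2 * (K:ℝ) + 1) ^ 2) = E
        generalize Real.sin ((2 * (K : ℝ) + 1) * (π * x / a)) = Q
        rw [add_neg_cancel, mul_zero, mul_zero, add_zero]
        field_simp
        ring
    simp only [Function.comp_apply, id_eq]
    rw [e K]
    exact mul_le_mul_of_nonneg_left (hB K) (by positivity))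
  calc _ ≤ 2 / a * (2 * a / π * B) := by gcongr
    _ = 4 / π * B := by field_simp; ring

theorem stmt14 :
    ∃ C : ℝ, 0 < C ∧ ∀ a : ℝ, π ≤ a → ∀ x ∈ Set.Icc (0:ℝ) a,
      (∀ t : ℝ, 0 < t → (∫ y in (0:ℝ)..a, pdens a t x y * wY a y) ≤ C * wY a x) ∧
      (∀ t : ℝ, a^2 ≤ t → (∫ y in (0:ℝ)..a, pdens a t x y * wY a y) ≤ C * wZ a x / a) := by
  refine ⟨8 * Real.exp (π^2), by positivity, fun a hpa x hx => ?_⟩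
  have hπ := Real.pi_gt_three
  have ha : 0 < a := by linarith
  have hu : 0 ≤ Real.sin (π * x / a) := by
    apply Real.sin_nonneg_of_nonneg_of_le_pi
    · have := hx.1; positivity
    · rw [div_le_iff₀ ha]; exact mul_le_mul_of_nonneg_left hx.2 (by positivity)
  have hw : 0 < wY a x := Real.exp_pos _
  have hE : 1 ≤ Real.exp (π^2) := Real.one_le_exp (by positivity)
  have h4 : 4 / π ≤ 2 := by rw [div_le_iff₀ (by positivity)]; linarith
  have hI : ∀ t, (∫ y in (0:ℝ)..a, pdens a t x y * wY a y)
      = wY a x * (Real.exp (π^2 * t / (2 * a^2)) * ∫ y in (0:ℝ)..a, pker a t x y) := by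
    intro t
    rw [← mul_assoc, ← intervalIntegral.integral_const_mul]
    congr 1
    funext y
    unfold pdens wY
    rw [mul_right_comm, ← Real.exp_add, ← Real.exp_add]
    congr 2
    ring
  have hlarge : ∀ t, a^2 ≤ t → Real.exp (π^2 * t / (2 * a^2)) * (∫ y in (0:ℝ)..a, pker a t x y)
      ≤ 8 * Real.exp (π^2) * Real.sin (π * x / a) := by
    intro t ht
    have ht0 : 0 < t := lt_of_lt_of_le (by positivity) ht
    have hκ : 1 ≤ π^2 * t / (2 * a^2) := by
      rw [le_div_iff₀ (by positivity)]
      have h9 : 2 ≤ π^2 := by nlinarith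
      have : 2 * a^2 ≤ π^2 * t := mul_le_mul h9 ht (by positivity) (by positivity)
      linarith
    have h := aux_le a ha t ht0 x _ (fun K => aux_bound2 _ hκ _ hu K)
    calc _ ≤ Real.exp (π^2 * t / (2 * a^2)) *
          (4 / π * (2 * Real.exp (-(π^2 * t / (2 * a^2))) * Real.sin (π * x / a))) := by gcongr
      _ = 4 / π * 2 * Real.sin (π * x / a) := by
          rw [Real.exp_neg]; field_simp
      _ ≤ _ := mul_le_mul_of_nonneg_right (by linarith) hu
  refine ⟨fun t ht => ?_, fun t ht => ?_⟩
  · rw [hI t, mul_comm]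
    refine mul_le_mul_of_nonneg_right ?_ hw.le
    rcases le_total (a^2) t with h | h
    · refine (hlarge t h).trans ?_
      exact mul_le_of_le_one_right (by positivity) (Real.sin_le_one _)
    · have h1 := aux_le a ha t ht x _ (fun K => aux_bound _ (by positivity) _ hu K)
      have h2 : Real.exp (π^2 * t / (2 * a^2)) ≤ Real.exp (π^2) := by
        rw [Real.exp_le_exp, div_le_iff₀ (by positivity)]
        nlinarith [sq_nonneg π, sq_nonneg a, mul_nonneg (sq_nonneg π) (sub_nonneg.2 h),
          mul_nonneg (sq_nonneg π) (sq_nonneg a)]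
      calc _ ≤ Real.exp (π^2 * t / (2 * a^2)) * (4 / π * 2) := by gcongr
        _ ≤ Real.exp (π^2) * (2 * 2) := by gcongr
        _ ≤ _ := by linarith
  · rw [hI t]
    have e : 8 * Real.exp (π^2) * wZ a x / a
        = wY a x * (8 * Real.exp (π^2) * Real.sin (π * x / a)) := by
      unfold wZ wY; field_simp
    rw [e]
    exact mul_le_mul_of_nonneg_left (hlarge t ht) hw.le
end

section
/- There exists a universal constant C such that for every a ≥ π with μ = √(1 − π²/a²) ≥ 1/2, every t > 0, and all x, r ∈ [0,a] satisfying x ≥ r + a/20 whenever t ≤ a²: |∫_r^a 𝔭_t(x,y) dy − (1+μr)·e^{μ(x−r)}·(−2e^{π²t/(2a²)}/a²)·θ'(x/a, t/a²)| ≤ C·(1+μr)·e^{μ(x−r)}·(1+r²)·max( sin(πx/a), 1_{t ≤ a²} )/a⁴, where θ' is the partial derivative of θ in its first variable. -/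
open Real MeasureTheory Set Filter

/-- The Jacobi-theta-type function `θ(x,t) = 1/2 + ∑_{n≥1} exp(−π²n²t/2)·cos(πnx)`. -/
noncomputable def thetaFn (x t : ℝ) : ℝ :=
  1/2 + ∑' n : ℕ, Real.exp (-(π^2) * ((n : ℝ) + 1)^2 * t / 2) * Real.cos (π * ((n : ℝ) + 1) * x)

lemma aux_taylor3 (f f1 f2 f3 : ℝ → ℝ) (M x h : ℝ) (hh : 0 ≤ h)
    (h1 : ∀ z ∈ Icc (x-h) (x+h), HasDerivAt f (f1 z) z)
    (h2 : ∀ z ∈ Icc (x-h) (x+h), HasDerivAt f1 (f2 z) z)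
    (h3 : ∀ z ∈ Icc (x-h) (x+h), HasDerivAt f2 (f3 z) z)
    (hb : ∀ z ∈ Icc (x-h) (x+h), |f3 z| ≤ M) :
    |f (x-h) - f (x+h) + 2*h*f1 x| ≤ 4 * M*h^3 := by
  have hM : 0 ≤ M := le_trans (abs_nonneg _) (hb x ⟨by linarith, by linarith⟩)
  have mem1 : ∀ v ∈ Icc (0:ℝ) h, x - v ∈ Icc (x-h) (x+h) := fun v hv => ⟨by linarith [hv.2], by linarith [hv.1]⟩
  have mem2 : ∀ v ∈ Icc (0:ℝ) h, x + v ∈ Icc (x-h) (x+h) := fun v hv => ⟨by linarith [hv.1], by linarith [hv.2]⟩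
  have h0 : (0:ℝ) ∈ Icc (0:ℝ) h := ⟨le_refl _, hh⟩
  have d2 : ∀ v ∈ Icc (0:ℝ) h, |f2 (x-v) - f2 (x+v)| ≤ 2*M*h := by
    intro v hv
    have := Convex.norm_image_sub_le_of_norm_hasDerivWithin_le
      (f := f2) (f' := f3) (s := Icc (x-h) (x+h)) (C := M)
      (fun z hz => (h3 z hz).hasDerivWithinAt) (fun z hz => by simpa using hb z hz)
      (convex_Icc _ _) (mem2 v hv) (mem1 v hv)
    simp only [Real.norm_eq_abs] at this
    refine this.trans ?_
    have : |x - v - (x+v)| = 2*v := by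
      rw [show x - v - (x+v) = -(2*v) by ring, abs_neg, abs_of_nonneg (by linarith [hv.1])]
    rw [this]
    nlinarith [hv.2]
  have d1 : ∀ v ∈ Icc (0:ℝ) h, |2 * f1 x - f1 (x-v) - f1 (x+v)| ≤ 2*M*h*h := by
    intro v hv
    have := Convex.norm_image_sub_le_of_norm_hasDerivWithin_le
      (f := fun v => 2 * f1 x - f1 (x-v) - f1 (x+v)) (f' := fun v => f2 (x-v) - f2 (x+v))
      (s := Icc 0 h) (C := 2*M*h)
      (fun z hz => by
        have a1 := (h2 _ (mem1 z hz)).comp z ((hasDerivAt_id z).const_sub x)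
        have a2 := (h2 _ (mem2 z hz)).comp z ((hasDerivAt_id z).const_add x)
        have a3 := ((hasDerivAt_const z (2 * f1 x)).sub a1).sub a2
        exact (a3.congr_deriv (by ring)).hasDerivWithinAt) (fun z hz => by simpa using d2 z hz)
      (convex_Icc _ _) h0 hv
    simp only [Real.norm_eq_abs, sub_zero, add_zero] at this
    rw [show (2 * f1 x - f1 x - f1 x) = 0 by ring, sub_zero, abs_of_nonneg hv.1] at this
    refine this.trans ?_
    gcongr
    exact hv.2
  have := Convex.norm_image_sub_le_of_norm_hasDerivWithin_le
      (f := fun v => f (x-v) - f (x+v) + 2*v*f1 x) (f' := fun v => 2 * f1 x - f1 (x-v) - f1 (x+v))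
      (s := Icc 0 h) (C := 2*M*h*h)
      (fun z hz => by
        have a1 := (h1 _ (mem1 z hz)).comp z ((hasDerivAt_id z).const_sub x)
        have a2 := (h1 _ (mem2 z hz)).comp z ((hasDerivAt_id z).const_add x)
        have a3 := (a1.sub a2).add (((hasDerivAt_id z).const_mul 2).mul_const (f1 x))
        exact (a3.congr_deriv (by ring)).hasDerivWithinAt) (fun z hz => by simpa using d1 z hz)
      (convex_Icc _ _) h0 ⟨hh, le_refl _⟩
  simp only [Real.norm_eq_abs, sub_zero, add_zero, abs_of_nonneg hh] at this
  rw [show f x - f x + 2 * 0 * f1 x = 0 by ring, sub_zero] at this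
  refine this.trans ?_
  have : 0 ≤ M * h^3 := by positivity
  nlinarith

lemma aux_sin_sub (u : ℝ) (hu : 0 ≤ u) : |sin u - u| ≤ 2 * u^3 := by
  have := aux_taylor3 sin cos (fun x => - sin x) (fun x => - cos x) 1 0 u hu
    (fun z _ => hasDerivAt_sin z) (fun z _ => hasDerivAt_cos z) (fun z _ => (hasDerivAt_sin z).neg)
    (fun z _ => by simpa using abs_cos_le_one z)
  simp only [zero_sub, sin_neg, zero_add, cos_zero, mul_one] at this
  rw [show -sin u - sin u + 2*u = -2 * (sin u - u) by ring, abs_mul] at this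
  norm_num at this
  linarith

lemma aux_sin_mul (n : ℕ) (x : ℝ) : |sin (n * x)| ≤ n * |sin x| := by
  induction n with
  | zero => simp
  | succ k ih =>
    push_cast
    rw [add_mul, one_mul, sin_add]
    calc _ ≤ |sin (k*x) * cos x| + |cos (k*x) * sin x| := abs_add_le _ _
      _ = |sin (k*x)| * |cos x| + |cos (k*x)| * |sin x| := by rw [abs_mul, abs_mul]
      _ ≤ |sin (k*x)| * 1 + 1 * |sin x| := by
        gcongr
        · exact abs_cos_le_one _
        · exact abs_cos_le_one _
      _ ≤ _ := by linarith

lemma aux_summ (k : ℕ) (c : ℝ) (hc : 0 < c) :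
    Summable (fun n : ℕ => ((n:ℝ)+1)^k * exp (-c * ((n:ℝ)+1)^2)) := by
  have h := (summable_nat_add_iff 1).mpr (Real.summable_pow_mul_exp_neg_nat_mul k hc)
  refine Summable.of_nonneg_of_le (fun n => by positivity) (fun n => ?_) h
  push_cast
  have : (n:ℝ) + 1 ≤ ((n:ℝ)+1)^2 := by nlinarith [(Nat.cast_nonneg n : (0:ℝ) ≤ n)]
  gcongr ?_ * exp ?_
  nlinarith

lemma aux_cube_exp (u : ℝ) (hu : 0 ≤ u) : (1+u)^3 * exp (-(u/2)) ≤ 768 * exp (-(u/4)) := by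
  have h := Real.pow_div_factorial_le_exp (x := (1+u)/4) (by linarith) 3
  have h4 : exp ((1+u)/4) = exp (1/4) * exp (u/4) := by rw [← exp_add]; ring_nf
  have h5 : exp (1/4 : ℝ) ≤ 2 := by
    have : exp (1/4 : ℝ) ^ 4 = exp 1 := by rw [← exp_nat_mul]; norm_num
    have h3 := Real.exp_one_lt_d9
    by_contra hcon
    push Not at hcon
    have : (2:ℝ)^4 < exp (1/4 : ℝ) ^ 4 := by gcongr
    linarith
  have h6 : (1+u)^3 ≤ 768 * exp (u/4) := by
    have : ((3 : ℕ).factorial : ℝ) = 6 := by norm_num [Nat.factorial]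
    rw [this, h4] at h
    have : exp (1/4) * exp (u/4) ≤ 2 * exp (u/4) := by gcongr
    nlinarith
  calc (1+u)^3 * exp (-(u/2)) ≤ 768 * exp (u/4) * exp (-(u/2)) := by gcongr
    _ = 768 * exp (-(u/4)) := by rw [mul_assoc, ← exp_add]; ring_nf

lemma aux_core (a r b m A K : ℝ) (P : ℝ → ℝ) (ha : 0 < a) (hm1 : 1/2 ≤ m) (hm2 : m ≤ 1)
    (hma : m^2 = 1 - π^2/a^2) (hr : 0 ≤ r) (hrb : r ≤ b) (H : a ≤ 40*(1+r)*(1+(b-r)))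
    (hP : Continuous P) (hA : |A| ≤ K/a^2)
    (hPA : ∀ y ∈ Icc r b, |P y - A*y| ≤ K*y^3/a^4) :
    |(∫ y in r..b, exp (-(m*y)) * P y) - A*(1+m*r)*exp (-(m*r))|
      ≤ 20000000 * K*((1+m*r)*(1+r^2)*exp (-(m*r))/a^4) := by
  have hK : 0 ≤ K := by
    have : 0 ≤ K / a^2 := (abs_nonneg _).trans hA
    by_contra hcon
    push Not at hcon
    have := div_neg_of_neg_of_pos hcon (show 0 < a^2 by positivity)
    linarith
  have hm : 0 < m := by linarith
  set D := (1+m*r)*(1+r^2)*exp (-(m*r))/a^4 with hD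
  have hD0 : 0 ≤ D := by positivity
  have hr3 : (1+r)^3 ≤ 4*((1+m*r)*(1+r^2)) := by
    have e1 : (1+r)^2 ≤ 2*(1+r^2) := by nlinarith [sq_nonneg (1-r)]
    have e2 : 1 + r ≤ 2*(1+m*r) := by nlinarith
    calc (1+r)^3 = (1+r)*(1+r)^2 := by ring
      _ ≤ (2*(1+m*r))*(2*(1+r^2)) := by gcongr
      _ = _ := by ring
  have hprim : ∀ y, HasDerivAt (fun y => -((1+m*y)*exp (-(m*y))/m^2)) (exp (-(m*y)) * y) y := by
    intro y
    have h1 : HasDerivAt (fun y => -(m*y)) (-m) y := by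
      exact (((hasDerivAt_id y).const_mul m).neg).congr_deriv (by ring)
    have h2 : HasDerivAt (fun y => 1+m*y) m y := by
      simpa using ((hasDerivAt_id y).const_mul m).const_add 1
    refine HasDerivAt.congr_deriv (((h2.mul h1.exp).div_const (m^2)).neg) ?_
    field_simp
    ring
  have hint : ∫ y in r..b, exp (-(m*y)) * y = (1+m*r)*exp (-(m*r))/m^2 - (1+m*b)*exp (-(m*b))/m^2 := by
    rw [intervalIntegral.integral_eq_sub_of_hasDerivAt (fun y _ => hprim y)
      (by apply Continuous.intervalIntegrable; fun_prop)]
    ring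
  have hsplit : (∫ y in r..b, exp (-(m*y)) * P y) - A*(1+m*r)*exp (-(m*r))
      = (∫ y in r..b, exp (-(m*y)) * (P y - A*y)) + A*((1/m^2-1)*((1+m*r)*exp (-(m*r))))
        - A*((1+m*b)*exp (-(m*b))/m^2) := by
    have : ∫ y in r..b, exp (-(m*y)) * (P y - A*y)
        = (∫ y in r..b, exp (-(m*y)) * P y) - A * ∫ y in r..b, exp (-(m*y)) * y := by
      rw [← intervalIntegral.integral_const_mul, ← intervalIntegral.integral_sub]
      · congr 1; ext y; ring
      · apply Continuous.intervalIntegrable; fun_prop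
      · apply Continuous.intervalIntegrable; fun_prop
    rw [this, hint]
    ring
  -- the integral part
  have b1 : |∫ y in r..b, exp (-(m*y)) * (P y - A*y)| ≤ 12288 * K * D := by
    have hq : ∀ y, HasDerivAt (fun y => -(4*exp (-((y-r)/4)))) (exp (-((y-r)/4))) y := by
      intro y
      have h1 : HasDerivAt (fun y => -((y-r)/4)) (-(1/4)) y := by
        exact ((((hasDerivAt_id y).sub_const r).div_const 4).neg).congr_deriv (by ring)
      exact ((h1.exp.const_mul 4).neg).congr_deriv (by ring)
    have hI : ∫ y in r..b, exp (-((y-r)/4)) ≤ 4 := by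
      rw [intervalIntegral.integral_eq_sub_of_hasDerivAt (fun y _ => hq y)
        (by apply Continuous.intervalIntegrable; fun_prop)]
      simp
      positivity
    have := intervalIntegral.norm_integral_le_of_norm_le (μ := volume) (f := fun y => exp (-(m*y)) * (P y - A*y))
      (g := fun y => (3072*K*D) * exp (-((y-r)/4))) hrb
      (Eventually.of_forall fun y hy => by
        have hy' : y ∈ Icc r b := ⟨hy.1.le, hy.2⟩
        have hu : 0 ≤ y - r := by linarith [hy.1]
        have hy0 : 0 ≤ y := by linarith
        rw [Real.norm_eq_abs, abs_mul, abs_of_pos (exp_pos _)]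
        have e1 : exp (-(m*y)) ≤ exp (-(m*r)) * exp (-((y-r)/2)) := by
          rw [← exp_add]
          apply exp_le_exp.mpr
          nlinarith
        have e2 : y^3 ≤ (1+r)^3 * (1+(y-r))^3 := by
          rw [← mul_pow]
          gcongr
          nlinarith
        calc exp (-(m*y)) * |P y - A*y|
            ≤ (exp (-(m*r)) * exp (-((y-r)/2))) * (K*((1+r)^3 * (1+(y-r))^3)/a^4) := by
              gcongr
              exact (hPA y hy').trans (by gcongr)
          _ = K*exp (-(m*r))*(1+r)^3/a^4 * ((1+(y-r))^3*exp (-((y-r)/2))) := by ring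
          _ ≤ K*exp (-(m*r))*(4*((1+m*r)*(1+r^2)))/a^4 * (768*exp (-((y-r)/4))) := by
              gcongr ?_ * ?_
              · gcongr
              · exact aux_cube_exp _ hu
          _ = _ := by rw [hD]; ring)
      (by apply Continuous.intervalIntegrable; fun_prop)
    rw [intervalIntegral.integral_const_mul, Real.norm_eq_abs] at this
    refine this.trans ?_
    have : (3072*K*D) * ∫ y in r..b, exp (-((y-r)/4)) ≤ (3072*K*D) * 4 := by gcongr
    linarith
  have hm2inv : 1/m^2 ≤ 4 := by
    rw [div_le_iff₀ (by positivity)]; nlinarith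
  have b2 : |A*((1/m^2-1)*((1+m*r)*exp (-(m*r))))| ≤ 64 * K * D := by
    have e0 : 1/m^2 - 1 = (π^2/a^2) * (1/m^2) := by
      rw [show π^2/a^2 = 1 - m^2 by linarith]; field_simp
    have e1 : 1/m^2 - 1 ≤ 64/a^2 := by
      rw [e0]
      calc π^2/a^2 * (1/m^2) ≤ 4^2/a^2 * 4 := by
            gcongr
            exact Real.pi_le_four
        _ = _ := by ring
    have e2 : 0 ≤ 1/m^2 - 1 := by rw [e0]; positivity
    rw [abs_mul, abs_of_nonneg (by positivity : 0 ≤ (1/m^2-1)*((1+m*r)*exp (-(m*r))))]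
    calc |A| * ((1/m^2-1)*((1+m*r)*exp (-(m*r)))) ≤ K/a^2 * (64/a^2*((1+m*r)*exp (-(m*r)))) := by gcongr
      _ = 64*K*((1+m*r)*1*exp (-(m*r))/a^4) := by field_simp
      _ ≤ _ := by
        rw [hD]
        gcongr
        nlinarith
  have b3 : |A*((1+m*b)*exp (-(m*b))/m^2)| ≤ 19660800 * K * D := by
    have hb0 : 0 ≤ b := hr.trans hrb
    have hu : 0 ≤ b - r := by linarith
    rw [abs_mul, abs_of_nonneg (by positivity : 0 ≤ (1+m*b)*exp (-(m*b))/m^2)]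
    have e1 : exp (-(m*b)) ≤ exp (-(m*r)) * exp (-((b-r)/2)) := by
      rw [← exp_add]
      apply exp_le_exp.mpr
      nlinarith
    have e2 : 1 + m*b ≤ (1+r)*(1+(b-r)) := by nlinarith
    have e3 : a^2 ≤ (40*(1+r)*(1+(b-r)))^2 := by gcongr
    calc |A| * ((1+m*b)*exp (-(m*b))/m^2) ≤ K/a^2 * (((1+r)*(1+(b-r))) * (exp (-(m*r)) * exp (-((b-r)/2))) * 4) := by
          rw [div_eq_mul_one_div ((1+m*b)*exp (-(m*b)))]
          gcongr
      _ = K/a^4 * a^2 * (((1+r)*(1+(b-r))) * (exp (-(m*r)) * exp (-((b-r)/2))) * 4) := by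
          congr 1; field_simp
      _ ≤ K/a^4 * (40*(1+r)*(1+(b-r)))^2 * (((1+r)*(1+(b-r))) * (exp (-(m*r)) * exp (-((b-r)/2))) * 4) := by
          gcongr
      _ = 6400 * K/a^4 * (1+r)^3 * exp (-(m*r)) * ((1+(b-r))^3 * exp (-((b-r)/2))) := by ring
      _ ≤ 6400 * K/a^4 * (4*((1+m*r)*(1+r^2))) * exp (-(m*r)) * (768*1) := by
          gcongr 6400 * K/a^4 * ?_ * exp (-(m*r)) * ?_
          refine (aux_cube_exp _ hu).trans ?_
          gcongr
          exact exp_le_one_iff.mpr (by linarith)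
      _ = _ := by rw [hD]; ring
  rw [hsplit]
  have t1 := abs_sub ((∫ y in r..b, exp (-(m*y)) * (P y - A*y)) + A*((1/m^2-1)*((1+m*r)*exp (-(m*r))))) (A*((1+m*b)*exp (-(m*b))/m^2))
  have t2 := abs_add_le (∫ y in r..b, exp (-(m*y)) * (P y - A*y)) (A*((1/m^2-1)*((1+m*r)*exp (-(m*r)))))
  have : 0 ≤ K * D := by positivity
  linarith

lemma aux_summ' (k : ℕ) (s : ℝ) (hs : 0 < s) :
    Summable (fun n : ℕ => ((n:ℝ)+1)^k * exp (-(π^2) * ((n:ℝ)+1)^2 * s / 2)) := by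
  have := aux_summ k (π^2*s/2) (by positivity)
  refine this.congr (fun n => ?_)
  congr 2; ring

lemma aux_summ0 (s : ℝ) (hs : 0 < s) :
    Summable (fun n : ℕ => exp (-(π^2) * ((n:ℝ)+1)^2 * s / 2)) := by
  simpa using aux_summ' 0 s hs

lemma aux_summ_cos (s : ℝ) (hs : 0 < s) (z : ℝ) :
    Summable (fun n : ℕ => exp (-(π^2) * ((n:ℝ)+1)^2 * s / 2) * cos (π * ((n:ℝ)+1) * z)) := by
  refine Summable.of_norm_bounded (aux_summ0 s hs) (fun n => ?_)
  rw [norm_mul, Real.norm_eq_abs, Real.norm_eq_abs, abs_of_pos (exp_pos _)]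
  exact mul_le_of_le_one_right (exp_pos _).le (abs_cos_le_one _)

lemma aux_theta_deriv (s : ℝ) (hs : 0 < s) (z : ℝ) :
    HasDerivAt (fun z => thetaFn z s)
      (∑' n : ℕ, exp (-(π^2) * ((n:ℝ)+1)^2 * s / 2) * (-(sin (π * ((n:ℝ)+1) * z) * (π * ((n:ℝ)+1))))) z := by
  have h := hasDerivAt_tsum (𝕜 := ℝ) (F := ℝ) (y₀ := 0)
    (u := fun n : ℕ => π * (((n:ℝ)+1)^1 * exp (-(π^2) * ((n:ℝ)+1)^2 * s / 2)))
    (g := fun (n : ℕ) z => exp (-(π^2) * ((n:ℝ)+1)^2 * s / 2) * cos (π * ((n:ℝ)+1) * z))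
    (g' := fun (n : ℕ) z => exp (-(π^2) * ((n:ℝ)+1)^2 * s / 2) * (-(sin (π * ((n:ℝ)+1) * z) * (π * ((n:ℝ)+1)))))
    ((aux_summ' 1 s hs).mul_left π)
    (fun n y => by
      have h1 : HasDerivAt (fun z => π * ((n:ℝ)+1) * z) (π * ((n:ℝ)+1)) y :=
        ((hasDerivAt_id y).const_mul (π * ((n:ℝ)+1))).congr_deriv (by ring)
      exact (h1.cos.const_mul _).congr_deriv (by ring))
    (fun n y => by
      rw [norm_mul, norm_neg, norm_mul, Real.norm_eq_abs, Real.norm_eq_abs, Real.norm_eq_abs, abs_of_pos (exp_pos _),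
        abs_of_pos (by positivity : 0 < π * ((n:ℝ)+1))]
      calc _ ≤ exp (-(π^2) * ((n:ℝ)+1)^2 * s / 2) * (1 * (π * ((n:ℝ)+1))) := by
            gcongr
            exact abs_sin_le_one _
        _ = _ := by ring)
    (aux_summ_cos s hs 0) z
  exact h.const_add (1/2)

lemma aux_theta_cont (s : ℝ) (hs : 0 < s) : Continuous (fun z => thetaFn z s) :=
  continuous_iff_continuousAt.mpr fun z => (aux_theta_deriv s hs z).continuousAt

lemma aux_theta_int (s : ℝ) (hs : 0 < s) (x : ℝ) : ∫ z in (x-1)..(x+1), thetaFn z s = 1 := by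
  have h : ∀ z, HasDerivAt (fun z => z/2 + ∑' n : ℕ, exp (-(π^2) * ((n:ℝ)+1)^2 * s / 2) * (sin (π * ((n:ℝ)+1) * z) / (π * ((n:ℝ)+1))))
      (thetaFn z s) z := by
    intro z
    have h := hasDerivAt_tsum (𝕜 := ℝ) (F := ℝ) (y₀ := 0)
      (u := fun n : ℕ => exp (-(π^2) * ((n:ℝ)+1)^2 * s / 2))
      (g := fun (n : ℕ) z => exp (-(π^2) * ((n:ℝ)+1)^2 * s / 2) * (sin (π * ((n:ℝ)+1) * z) / (π * ((n:ℝ)+1))))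
      (g' := fun (n : ℕ) z => exp (-(π^2) * ((n:ℝ)+1)^2 * s / 2) * cos (π * ((n:ℝ)+1) * z))
      (aux_summ0 s hs)
      (fun n y => by
        have h1 : HasDerivAt (fun z => π * ((n:ℝ)+1) * z) (π * ((n:ℝ)+1)) y :=
          ((hasDerivAt_id y).const_mul (π * ((n:ℝ)+1))).congr_deriv (by ring)
        have h2 : π * ((n:ℝ)+1) ≠ 0 := by positivity
        refine ((h1.sin.div_const (π * ((n:ℝ)+1))).const_mul _).congr_deriv ?_
        rw [mul_div_cancel_right₀ _ h2])
      (fun n y => by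
        rw [norm_mul, Real.norm_eq_abs, Real.norm_eq_abs, abs_of_pos (exp_pos _)]
        exact mul_le_of_le_one_right (exp_pos _).le (abs_cos_le_one _))
      (by simp) z
    exact ((hasDerivAt_id z).div_const 2).add h
  rw [intervalIntegral.integral_eq_sub_of_hasDerivAt (fun z _ => h z)
    ((aux_theta_cont s hs).intervalIntegrable _ _)]
  have : ∀ n : ℕ, sin (π * ((n:ℝ)+1) * (x+1)) = sin (π * ((n:ℝ)+1) * (x-1)) := by
    intro n
    have := Real.sin_add_nat_mul_two_pi (π * ((n:ℝ)+1) * (x-1)) (n+1)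
    rw [← this]
    congr 1
    push_cast
    ring
  simp only [this]
  ring

lemma aux_pker_eq (a t x y : ℝ) (ha : 0 < a) (ht : 0 < t) :
    pker a t x y = (1/a) * (thetaFn (x/a - y/a) (t/a^2) - thetaFn (x/a + y/a) (t/a^2)) := by
  have hs : 0 < t/a^2 := by positivity
  unfold pker thetaFn
  rw [add_sub_add_left_eq_sub, ← Summable.tsum_sub (aux_summ_cos _ hs _) (aux_summ_cos _ hs _),
    show (2/a) = (1/a)*2 by ring, mul_assoc (1/a), ← tsum_mul_left]
  congr 2
  ext n
  rw [← mul_sub, Real.cos_sub_cos]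
  rw [show (π * ((n:ℝ)+1) * (x/a - y/a) + π * ((n:ℝ)+1) * (x/a + y/a))/2 = π * ((n:ℝ)+1)*x/a by ring,
    show (π * ((n:ℝ)+1) * (x/a - y/a) - π * ((n:ℝ)+1) * (x/a + y/a))/2 = -(π * ((n:ℝ)+1)*y/a) by ring, sin_neg,
    show -(π^2) * ((n:ℝ)+1)^2 * (t/a^2)/2 = -(π^2) * ((n:ℝ)+1)^2 * t/(2*a^2) by ring]
  ring

noncomputable def auxT (s x h : ℝ) : ℝ :=
  thetaFn (x-h) s - thetaFn (x+h) s + 2*h*deriv (fun z => thetaFn z s) x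

lemma aux_large : ∃ K : ℝ, 0 < K ∧ ∀ s x : ℝ, 1 ≤ s → 0 ≤ sin (π*x) →
    exp (π^2*s/2) * |deriv (fun z => thetaFn z s) x| ≤ K * sin (π*x) ∧
    ∀ h, 0 ≤ h → exp (π^2*s/2) * |auxT s x h| ≤ K * sin (π*x) * h^3 := by
  set W := ∑' n : ℕ, ((n:ℝ)+1)^4 * exp (-(π^2) * ((n:ℝ)+1)^2 * 1 / 2) with hW
  have hWs := aux_summ' 4 1 one_pos
  have hW0 : 0 ≤ W := tsum_nonneg fun n => by positivity
  refine ⟨256 * exp (π^2/2) * W + 1, by positivity, fun s x hs hsin => ?_⟩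
  have hs0 : 0 < s := by linarith
  have hpi := Real.pi_le_four
  have hpi0 := Real.pi_pos
  have hE : ∀ n : ℕ, exp (π^2*s/2) * exp (-(π^2) * ((n:ℝ)+1)^2 * s / 2)
      ≤ exp (π^2/2) * exp (-(π^2) * ((n:ℝ)+1)^2 * 1 / 2) := by
    intro n
    rw [← exp_add, ← exp_add]
    apply exp_le_exp.mpr
    have h1 : 0 ≤ ((n:ℝ)+1)^2 - 1 := by nlinarith [(Nat.cast_nonneg n : (0:ℝ) ≤ n)]
    have h2 : 0 ≤ π^2 * (((n:ℝ)+1)^2 - 1) * (s - 1) := by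
      have : 0 ≤ s - 1 := by linarith
      positivity
    nlinarith
  have hS : ∀ n : ℕ, |sin (π * ((n:ℝ)+1) * x)| ≤ ((n:ℝ)+1) * sin (π*x) := by
    intro n
    have := aux_sin_mul (n+1) (π*x)
    rw [abs_of_nonneg hsin] at this
    push_cast at this
    rwa [show π * ((n:ℝ)+1) * x = ((n:ℝ)+1) * (π*x) by ring]
  have hD := (aux_theta_deriv s hs0 x).deriv
  refine ⟨?_, fun h hh => ?_⟩
  · rw [hD, ← abs_of_pos (exp_pos (π^2*s/2)), ← abs_mul, ← tsum_mul_left, ← Real.norm_eq_abs]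
    refine (tsum_of_norm_bounded (g := fun n : ℕ => (4 * exp (π^2/2) * sin (π*x)) * (((n:ℝ)+1)^4 * exp (-(π^2) * ((n:ℝ)+1)^2 * 1 / 2)))
      ((hWs.hasSum).mul_left _) (fun n => ?_)).trans ?_
    · rw [Real.norm_eq_abs, ← mul_assoc, abs_mul _ (-_), abs_neg, abs_mul (sin _),
        abs_of_pos (mul_pos (exp_pos _) (exp_pos _)), abs_of_pos (by positivity : 0 < π * ((n:ℝ)+1))]
      have h1 : (1:ℝ) ≤ (n:ℝ) + 1 := by linarith [(Nat.cast_nonneg n : (0:ℝ) ≤ n)]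
      calc _ ≤ (exp (π^2/2) * exp (-(π^2) * ((n:ℝ)+1)^2 * 1 / 2)) * ((((n:ℝ)+1) * sin (π*x)) * (4 * ((n:ℝ)+1))) := by
            refine mul_le_mul (hE n) ?_ (by positivity) (by positivity)
            gcongr
            exact hS n
        _ = (4 * exp (π^2/2) * sin (π*x)) * (((n:ℝ)+1)^2 * exp (-(π^2) * ((n:ℝ)+1)^2 * 1 / 2)) := by ring
        _ ≤ _ := by
            gcongr
            · norm_num
    · rw [← hW]
      have : 0 ≤ exp (π^2/2) * W * sin (π*x) := by positivity
      nlinarith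
  · have hT : auxT s x h = ∑' n : ℕ, exp (-(π^2) * ((n:ℝ)+1)^2 * s / 2) * (2 * sin (π * ((n:ℝ)+1) * x) * (sin (π * ((n:ℝ)+1) * h) - π * ((n:ℝ)+1) * h)) := by
      unfold auxT
      have hds : Summable (fun n : ℕ => exp (-(π^2) * ((n:ℝ)+1)^2 * s / 2) * (-(sin (π * ((n:ℝ)+1) * x) * (π * ((n:ℝ)+1))))) := by
        refine Summable.of_norm_bounded ((aux_summ' 1 s hs0).mul_left π) (fun n => ?_)
        rw [norm_mul, norm_neg, norm_mul, Real.norm_eq_abs, Real.norm_eq_abs, Real.norm_eq_abs, abs_of_pos (exp_pos _),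
          abs_of_pos (by positivity : 0 < π * ((n:ℝ)+1))]
        calc _ ≤ exp (-(π^2) * ((n:ℝ)+1)^2 * s / 2) * (1 * (π * ((n:ℝ)+1))) := by
              gcongr
              exact abs_sin_le_one _
          _ = _ := by ring
      rw [hD]
      unfold thetaFn
      rw [add_sub_add_left_eq_sub, ← Summable.tsum_sub (aux_summ_cos _ hs0 _) (aux_summ_cos _ hs0 _),
        ← tsum_mul_left, ← Summable.tsum_add ((aux_summ_cos _ hs0 _).sub (aux_summ_cos _ hs0 _)) (hds.mul_left _)]
      congr 1
      ext n
      rw [← mul_sub, Real.cos_sub_cos]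
      rw [show (π * ((n:ℝ)+1) * (x - h) + π * ((n:ℝ)+1) * (x + h))/2 = π * ((n:ℝ)+1)*x by ring,
        show (π * ((n:ℝ)+1) * (x - h) - π * ((n:ℝ)+1) * (x + h))/2 = -(π * ((n:ℝ)+1)*h) by ring, sin_neg]
      ring
    rw [hT, ← abs_of_pos (exp_pos (π^2*s/2)), ← abs_mul, ← tsum_mul_left, ← Real.norm_eq_abs]
    refine (tsum_of_norm_bounded (g := fun n : ℕ => (4 * 4^3 * exp (π^2/2) * sin (π*x) * h^3) * (((n:ℝ)+1)^4 * exp (-(π^2) * ((n:ℝ)+1)^2 * 1 / 2)))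
      ((hWs.hasSum).mul_left _) (fun n => ?_)).trans ?_
    · rw [Real.norm_eq_abs, ← mul_assoc, abs_mul, abs_mul (2 * sin _), abs_mul 2,
        abs_of_pos (mul_pos (exp_pos _) (exp_pos _)), abs_of_pos (two_pos : (0:ℝ) < 2)]
      calc _ ≤ (exp (π^2/2) * exp (-(π^2) * ((n:ℝ)+1)^2 * 1 / 2)) * ((2 * (((n:ℝ)+1) * sin (π*x))) * (2*(4 * ((n:ℝ)+1)*h)^3)) := by
            refine mul_le_mul (hE n) ?_ (by positivity) (by positivity)
            gcongr ?_ * ?_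
            · gcongr
              exact hS n
            · refine (aux_sin_sub _ (by positivity)).trans ?_
              gcongr
        _ = _ := by ring
    · rw [← hW]
      have : 0 ≤ sin (π*x) * h^3 := by positivity
      nlinarith

noncomputable def auxg (s w : ℝ) : ℝ := (1/(2*sqrt (π*s/2))) * exp (-(w^2/(2*s)))

lemma aux_poisson (s : ℝ) (hs : 0 < s) (z : ℝ) :
    thetaFn z s = ∑' k : ℤ, auxg s (z + 2*k) := by
  have hq : 0 < π*s/2 := by positivity
  have key := Complex.tsum_exp_neg_quadratic (a := ((π*s/2 : ℝ) : ℂ)) (by rw [Complex.ofReal_re]; exact hq)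
    (Complex.I * z / 2)
  set F : ℤ → ℂ := fun n => Complex.exp (-π * ((π*s/2 : ℝ) : ℂ) * n ^ 2 + 2 * π * (Complex.I * z / 2) * n) with hF
  have hnorm : ∀ n : ℤ, ‖F n‖ = exp (-(π^2) * (n:ℝ)^2 * s/2) := by
    intro n
    rw [hF]
    simp only [Complex.norm_exp]
    congr 1
    have : -π * ((π*s/2 : ℝ) : ℂ) * n ^ 2 + 2 * π * (Complex.I * z / 2) * n
       = ((-(π^2) * (n:ℝ)^2 * s/2 : ℝ) : ℂ) + ((π * z * n : ℝ) : ℂ) * Complex.I := by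
      push_cast; ring
    rw [this, Complex.add_re, Complex.re_ofReal_mul, Complex.I_re, mul_zero, add_zero, Complex.ofReal_re]
  have s1 : Summable (fun n : ℕ => F ((n:ℤ)+1)) := by
    refine Summable.of_norm ((aux_summ0 s hs).congr fun n => ?_)
    rw [hnorm]; push_cast; rfl
  have s2 : Summable (fun n : ℕ => F (-((n:ℤ)+1))) := by
    refine Summable.of_norm ((aux_summ0 s hs).congr fun n => ?_)
    rw [hnorm]; push_cast; congr 1; ring
  have hL : ∑' n : ℤ, F n = ((2 * thetaFn z s : ℝ) : ℂ) := by
    rw [tsum_of_add_one_of_neg_add_one s1 s2, add_right_comm, ← Summable.tsum_add s1 s2]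
    unfold thetaFn
    push_cast
    rw [mul_add, ← tsum_mul_left, add_comm]
    congr 1
    · simp [hF]
    · congr 1
      ext n
      rw [hF]
      simp only
      rw [Complex.cos]
      push_cast
      rw [show -(π:ℂ) * (π*s/2) * ((n:ℂ)+1)^2 + 2*π*(Complex.I * z/2) * ((n:ℂ)+1)
          = -(π:ℂ)^2 * ((n:ℂ)+1)^2 * s/2 + π * ((n:ℂ)+1) * z * Complex.I by ring,
        show -(π:ℂ) * (π*s/2) * (-((n:ℂ)+1))^2 + 2*π*(Complex.I * z/2) * (-((n:ℂ)+1))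
          = -(π:ℂ)^2 * ((n:ℂ)+1)^2 * s/2 + -(π * ((n:ℂ)+1) * z) * Complex.I by ring,
        Complex.exp_add, Complex.exp_add]
      ring
  have hR : 1 / ((π*s/2 : ℝ) : ℂ) ^ (1/2 : ℂ) * ∑' n : ℤ, Complex.exp (-π / ((π*s/2 : ℝ) : ℂ) * (n + Complex.I * (Complex.I * z / 2))^2)
      = ((1/sqrt (π*s/2) * ∑' k : ℤ, exp (-((z+2*k)^2/(2*s))) : ℝ) : ℂ) := by
    rw [← (Equiv.neg ℤ).tsum_eq]
    push_cast
    congr 1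
    · rw [Real.sqrt_eq_rpow, Complex.ofReal_cpow hq.le]
      push_cast
      rfl
    · congr 1
      ext n
      congr 1
      have e1 : Complex.I * (Complex.I * z / 2) = -(z/2 : ℂ) := by
        rw [← mul_div_assoc, ← mul_assoc, Complex.I_mul_I]; ring
      rw [e1]
      have h1 : (s:ℂ) ≠ 0 := by exact_mod_cast hs.ne'
      have h2 : (π:ℂ) ≠ 0 := by exact_mod_cast pi_ne_zero
      simp only [Equiv.neg_apply]
      push_cast
      field_simp
      ring
  rw [hL, hR] at key
  have key' := Complex.ofReal_injective key
  have : thetaFn z s = (1/2) * (2 * thetaFn z s) := by ring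
  rw [this, key']
  unfold auxg
  rw [tsum_mul_left]
  have : sqrt (π*s/2) ≠ 0 := (Real.sqrt_pos.mpr hq).ne'
  field_simp

lemma aux_theta_nonneg (s : ℝ) (hs : 0 < s) (z : ℝ) : 0 ≤ thetaFn z s := by
  rw [aux_poisson s hs]
  exact tsum_nonneg fun k => by unfold auxg; positivity

noncomputable def auxv (k : ℤ) : ℝ := 1/(k:ℝ)^2 + 1/((k:ℝ)+1)^2

lemma auxv_summable : Summable auxv := by
  have h1 : Summable (fun k : ℤ => 1/(k:ℝ)^2) := Real.summable_one_div_int_pow.mpr (by norm_num)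
  have h2 := h1.comp_injective (add_left_injective (1:ℤ))
  refine h1.add (h2.congr fun k => ?_)
  simp

lemma auxv_bound (z : ℝ) (hz : z ∈ Icc (1/40 : ℝ) (79/40)) (k : ℤ) :
    1/40 ≤ |z + 2*k| ∧ 1/(z+2*k)^2 ≤ 1600 * auxv k := by
  obtain ⟨z1, z2⟩ := hz
  have p1 : 0 ≤ 1/(k:ℝ)^2 := by positivity
  have p2 : 0 ≤ 1/((k:ℝ)+1)^2 := by positivity
  have small : ∀ w : ℝ, 1/40 ≤ |w| → 1/w^2 ≤ 1600 := by
    intro w hw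
    rw [← sq_abs]
    calc 1/|w|^2 ≤ 1/(1/40)^2 := by gcongr
      _ = 1600 := by norm_num
  rcases lt_trichotomy k (-1) with h | h | h
  · have hk : (k:ℝ) ≤ -2 := by exact_mod_cast (by omega : k ≤ -2)
    have : 1/(z+2*k)^2 ≤ 1/((k:ℝ)+1)^2 := by
      apply one_div_le_one_div_of_le
      · have : (k:ℝ) + 1 ≠ 0 := by linarith
        positivity
      · nlinarith
    refine ⟨?_, ?_⟩
    · rw [abs_of_neg (by linarith)]; linarith
    · unfold auxv; linarith
  · subst h
    have : 1/40 ≤ |z + 2*((-1:ℤ):ℝ)| := by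
      push_cast
      rw [abs_of_neg (by linarith)]; linarith
    refine ⟨this, (small _ this).trans ?_⟩
    unfold auxv; norm_num
  · rcases eq_or_lt_of_le (show 0 ≤ k by omega) with h0 | h0
    · subst h0
      have : 1/40 ≤ |z + 2*((0:ℤ):ℝ)| := by
        push_cast
        rw [abs_of_pos (by linarith)]; linarith
      refine ⟨this, (small _ this).trans ?_⟩
      unfold auxv; norm_num
    · have hk : (1:ℝ) ≤ k := by exact_mod_cast h0
      have : 1/(z+2*k)^2 ≤ 1/(k:ℝ)^2 := by
        apply one_div_le_one_div_of_le
        · positivity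
        · nlinarith
      refine ⟨?_, ?_⟩
      · rw [abs_of_pos (by linarith)]; linarith
      · unfold auxv; linarith

noncomputable def auxg1 (s w : ℝ) : ℝ := auxg s w * (-(w/s))
noncomputable def auxg2 (s w : ℝ) : ℝ := auxg s w * (w^2/s^2 - 1/s)
noncomputable def auxg3 (s w : ℝ) : ℝ := auxg s w * (3*w/s^2 - w^3/s^3)

lemma auxg_deriv (s w : ℝ) (hs : 0 < s) : HasDerivAt (auxg s) (auxg1 s w) w := by
  have h1 : HasDerivAt (fun w : ℝ => -(w^2/(2*s))) (-(w/s)) w := by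
    refine (((hasDerivAt_pow 2 w).div_const (2*s)).neg).congr_deriv ?_
    field_simp; norm_num
  refine (h1.exp.const_mul (1/(2*sqrt (π*s/2)))).congr_deriv ?_
  unfold auxg1 auxg; ring

lemma auxg1_deriv (s w : ℝ) (hs : 0 < s) : HasDerivAt (auxg1 s) (auxg2 s w) w := by
  have h1 : HasDerivAt (fun w : ℝ => -(w/s)) (-(1/s)) w :=
    ((hasDerivAt_id w).div_const s).neg
  refine ((auxg_deriv s w hs).mul h1).congr_deriv ?_
  unfold auxg2 auxg1; field_simp; ring

lemma auxg2_deriv (s w : ℝ) (hs : 0 < s) : HasDerivAt (auxg2 s) (auxg3 s w) w := by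
  have h1 : HasDerivAt (fun w : ℝ => w^2/s^2 - 1/s) (2*w/s^2) w :=
    (((hasDerivAt_pow 2 w).div_const (s^2)).sub_const (1/s)).congr_deriv (by norm_num)
  refine ((auxg_deriv s w hs).mul h1).congr_deriv ?_
  unfold auxg3 auxg1; field_simp; ring

lemma auxg_bound (s w : ℝ) (hs : 0 < s) (hs1 : s ≤ 1) (hw : 1/40 ≤ |w|) :
    0 ≤ auxg s w ∧ auxg s w ≤ 384 * s^3 / w^8 := by
  have hw2 : 0 < w^2 := by rw [← sq_abs]; positivity
  have hw0 : w ≠ 0 := by rintro rfl; norm_num at hw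
  have h1 : 1/(2*sqrt (π*s/2)) ≤ 1/s := by
    apply one_div_le_one_div_of_le hs
    have : s ≤ sqrt (π*s/2) := by
      apply Real.le_sqrt_of_sq_le
      nlinarith [Real.pi_gt_three]
    linarith
  have h2 : exp (-(w^2/(2*s))) ≤ 384 * s^4/w^8 := by
    have := Real.pow_div_factorial_le_exp (x := w^2/(2*s)) (by positivity) 4
    have h24 : ((4 : ℕ).factorial : ℝ) = 24 := by norm_num [Nat.factorial]
    rw [h24] at this
    rw [exp_neg]
    calc (exp (w^2/(2*s)))⁻¹ ≤ ((w^2/(2*s))^4/24)⁻¹ := by gcongr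
      _ = _ := by field_simp; norm_num
  refine ⟨by unfold auxg; positivity, ?_⟩
  unfold auxg
  calc _ ≤ (1/s) * (384 * s^4/w^8) := by gcongr
    _ = _ := by field_simp

lemma aux_inv_pow (w : ℝ) (hw : 1/40 ≤ |w|) (n : ℕ) : 1/|w|^(n+2) ≤ 40^n * (1/w^2) := by
  have hw0 : 0 < |w| := by linarith
  rw [← sq_abs w, pow_add]
  have : 1/|w|^n ≤ 40^n := by
    calc 1/|w|^n ≤ 1/(1/40)^n := by gcongr
      _ = 40^n := by rw [one_div_pow, one_div_one_div]
  calc 1/(|w|^n*|w|^2) = 1/|w|^n * (1/|w|^2) := by field_simp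
    _ ≤ _ := by gcongr

lemma auxg_bounds (s w : ℝ) (hs : 0 < s) (hs1 : s ≤ 1) (hw : 1/40 ≤ |w|) :
    |auxg s w| ≤ 384*4*40^6 * (1/w^2) ∧ |auxg1 s w| ≤ 384*4*40^6 * (1/w^2)
    ∧ |auxg3 s w| ≤ 384*4*40^6 * (1/w^2) := by
  obtain ⟨h0, h1⟩ := auxg_bound s w hs hs1 hw
  have hw0 : 0 < |w| := by linarith
  have h8 : w^8 = |w|^8 := by rw [← abs_pow]; exact (abs_of_nonneg (by positivity)).symm
  rw [h8] at h1
  have i6 := aux_inv_pow w hw 6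
  have i5 := aux_inv_pow w hw 5
  have i3 := aux_inv_pow w hw 3
  norm_num only at i6 i5 i3
  have q : 0 ≤ 1/w^2 := by positivity
  refine ⟨?_, ?_, ?_⟩
  · rw [abs_of_nonneg h0]
    calc auxg s w ≤ 384 * s^3/|w|^8 := h1
      _ ≤ 384 * 1^3/|w|^8 := by gcongr
      _ = 384 * (1/|w|^8) := by ring
      _ ≤ _ := by linarith
  · unfold auxg1
    rw [abs_mul, abs_of_nonneg h0, abs_neg, abs_div, abs_of_pos hs]
    calc auxg s w * (|w|/s) ≤ 384 * s^3/|w|^8 * (|w|/s) := by gcongr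
      _ = 384 * s^2/|w|^7 := by field_simp
      _ ≤ 384 * 1^2/|w|^7 := by gcongr
      _ = 384 * (1/|w|^7) := by ring
      _ ≤ _ := by linarith
  · unfold auxg3
    rw [abs_mul, abs_of_nonneg h0]
    have : |3*w/s^2 - w^3/s^3| ≤ 3*|w|/s^2 + |w|^3/s^3 := by
      refine (abs_sub _ _).trans (le_of_eq ?_)
      rw [abs_div, abs_div, abs_mul, abs_pow, abs_pow, abs_pow, abs_of_pos hs, abs_of_pos (by norm_num : (0:ℝ)<3)]
    calc auxg s w * |3*w/s^2 - w^3/s^3| ≤ 384 * s^3/|w|^8 * (3*|w|/s^2 + |w|^3/s^3) := by gcongr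
      _ = 384 * (3*s/|w|^7 + 1/|w|^5) := by field_simp
      _ ≤ 384 * (3*1/|w|^7 + 1/|w|^5) := by gcongr
      _ = 384 * (3*(1/|w|^7) + 1/|w|^5) := by ring
      _ ≤ _ := by linarith

lemma aux_small : ∃ K : ℝ, 0 < K ∧ ∀ s x : ℝ, 0 < s → s ≤ 1 → x ∈ Icc (1/20 : ℝ) 1 →
    |deriv (fun z => thetaFn z s) x| ≤ K ∧
    ∀ h, 0 ≤ h → h ≤ x - 1/40 → |auxT s x h| ≤ K * h^3 := by
  set V := ∑' k, auxv k with hV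
  have hV0 : 0 ≤ V := tsum_nonneg fun k => by unfold auxv; positivity
  set M : ℝ := 384*4*40^6 * 1600 with hM
  have hM0 : 0 < M := by norm_num [hM]
  refine ⟨4 * M * V + 1, by positivity, fun s x hs hs1 hx => ?_⟩
  have hb : ∀ z ∈ Icc (1/40 : ℝ) (79/40), ∀ k : ℤ, |auxg s (z+2*k)| ≤ M * auxv k ∧
      |auxg1 s (z+2*k)| ≤ M * auxv k ∧ |auxg3 s (z+2*k)| ≤ M * auxv k := by
    intro z hz k
    obtain ⟨h1, h2⟩ := auxv_bound z hz k
    obtain ⟨a1, a2, a3⟩ := auxg_bounds s _ hs hs1 h1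
    have : 384*4*40^6 * (1/(z+2*k)^2) ≤ M * auxv k := by
      rw [hM]; linarith
    exact ⟨a1.trans this, a2.trans this, a3.trans this⟩
  have hMs : Summable (fun k => M * auxv k) := auxv_summable.mul_left M
  have hsg : ∀ z ∈ Icc (1/40 : ℝ) (79/40), Summable (fun k : ℤ => auxg s (z+2*k)) := fun z hz =>
    Summable.of_norm_bounded hMs fun k => (hb z hz k).1
  have hsg1 : ∀ z ∈ Icc (1/40 : ℝ) (79/40), Summable (fun k : ℤ => auxg1 s (z+2*k)) := fun z hz =>
    Summable.of_norm_bounded hMs fun k => (hb z hz k).2.1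
  have hx' : x ∈ Ioo (1/40 : ℝ) (79/40) := ⟨by linarith [hx.1], by linarith [hx.2]⟩
  have hxc := Ioo_subset_Icc_self hx'
  have hD : deriv (fun z => thetaFn z s) x = ∑' k : ℤ, auxg1 s (x+2*k) := by
    have h := hasDerivAt_tsum_of_isPreconnected (𝕜 := ℝ) (F := ℝ) (u := fun k => M * auxv k)
      (g := fun (k:ℤ) z => auxg s (z+2*k)) (g' := fun (k:ℤ) z => auxg1 s (z+2*k)) hMs isOpen_Ioo
      (isPreconnected_Ioo) (fun k z _ => (auxg_deriv s (z+2*k) hs).comp_add_const z (2*(k:ℝ)))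
      (fun k z hz => (hb z (Ioo_subset_Icc_self hz) k).2.1) hx' (hsg x hxc) hx'
    have : (fun z => thetaFn z s) = fun z => ∑' k : ℤ, auxg s (z+2*k) := by
      ext z; exact aux_poisson s hs z
    rw [this]
    exact h.deriv
  have hMV : HasSum (fun k => M * auxv k) (M * V) := auxv_summable.hasSum.mul_left M
  have hMV0 : 0 ≤ M * V := by positivity
  refine ⟨?_, fun h hh hhx => ?_⟩
  · rw [hD, ← Real.norm_eq_abs]
    refine (tsum_of_norm_bounded hMV (fun k => (hb x hxc k).2.1)).trans ?_
    linarith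
  · have hsub : Icc (x-h) (x+h) ⊆ Icc (1/40 : ℝ) (79/40) :=
      Icc_subset_Icc (by linarith) (by linarith [hx.2])
    have m1 := hsub (left_mem_Icc.mpr (by linarith : x-h ≤ x+h))
    have m2 := hsub (right_mem_Icc.mpr (by linarith : x-h ≤ x+h))
    unfold auxT
    rw [hD, aux_poisson s hs, aux_poisson s hs, ← Summable.tsum_sub (hsg _ m1) (hsg _ m2), ← tsum_mul_left,
      ← Summable.tsum_add ((hsg _ m1).sub (hsg _ m2)) ((hsg1 x hxc).mul_left _), ← Real.norm_eq_abs]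
    refine (tsum_of_norm_bounded (g := fun k => (4*h^3) * (M * auxv k)) (hMV.mul_left _) (fun k => ?_)).trans ?_
    · have := aux_taylor3 (fun z => auxg s (z+2*k)) (fun z => auxg1 s (z+2*k)) (fun z => auxg2 s (z+2*k))
        (fun z => auxg3 s (z+2*k)) (M * auxv k) x h hh
        (fun z _ => (auxg_deriv s (z+2*k) hs).comp_add_const z (2*(k:ℝ)))
        (fun z _ => (auxg1_deriv s (z+2*k) hs).comp_add_const z (2*(k:ℝ)))
        (fun z _ => (auxg2_deriv s (z+2*k) hs).comp_add_const z (2*(k:ℝ)))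
        (fun z hz => (hb z (hsub hz) k).2.2)
      rw [Real.norm_eq_abs]
      refine this.trans (le_of_eq ?_)
      ring
    · have : 0 ≤ h^3 := by positivity
      nlinarith

lemma aux_conv (a t x y : ℝ) (ha : 0 < a) (ht : 0 < t) :
    exp (π^2*t/(2*a^2)) * pker a t x y
      - (-(2 * exp (π^2*t/(2*a^2)) / a^2) * deriv (fun z => thetaFn z (t / a^2)) (x / a)) * y
    = exp (π^2*t/(2*a^2)) / a * auxT (t/a^2) (x/a) (y/a) := by
  rw [aux_pker_eq a t x y ha ht]
  unfold auxT
  ring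

lemma aux_pker_cont (a t x : ℝ) (ha : 0 < a) (ht : 0 < t) : Continuous (fun y => pker a t x y) := by
  have hs : 0 < t/a^2 := by positivity
  have : (fun y => pker a t x y) = fun y => (1/a) * (thetaFn (x/a - y/a) (t/a^2) - thetaFn (x/a + y/a) (t/a^2)) := by
    ext y; exact aux_pker_eq a t x y ha ht
  rw [this]
  have hc := aux_theta_cont _ hs
  have h1 : Continuous (fun y => thetaFn (x/a - y/a) (t/a^2)) := hc.comp (by fun_prop : Continuous fun y => x/a - y/a)
  have h2 : Continuous (fun y => thetaFn (x/a + y/a) (t/a^2)) := hc.comp (by fun_prop : Continuous fun y => x/a + y/a)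
  exact continuous_const.mul (h1.sub h2)

lemma aux_pker_int (a t x b : ℝ) (ha : 0 < a) (ht : 0 < t) (hb0 : 0 ≤ b) (hba : b ≤ a) :
    ∫ y in b..a, |pker a t x y| ≤ 1 := by
  have hs : 0 < t/a^2 := by positivity
  have hc := aux_theta_cont _ hs
  have h1 : Continuous (fun y => thetaFn (x/a - y/a) (t/a^2)) := hc.comp (by fun_prop : Continuous fun y => x/a - y/a)
  have h2 : Continuous (fun y => thetaFn (x/a + y/a) (t/a^2)) := hc.comp (by fun_prop : Continuous fun y => x/a + y/a)
  have h3 : Continuous (fun y => |pker a t x y|) := (aux_pker_cont a t x ha ht).abs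
  have h4 : Continuous (fun y => (1/a) * (thetaFn (x/a - y/a) (t/a^2) + thetaFn (x/a + y/a) (t/a^2))) :=
    continuous_const.mul (h1.add h2)
  have hle : ∀ y, |pker a t x y| ≤ (1/a) * (thetaFn (x/a - y/a) (t/a^2) + thetaFn (x/a + y/a) (t/a^2)) := by
    intro y
    rw [aux_pker_eq a t x y ha ht, abs_mul, abs_of_pos (by positivity : 0 < 1/a)]
    gcongr
    have p1 := aux_theta_nonneg _ hs (x/a - y/a)
    have p2 := aux_theta_nonneg _ hs (x/a + y/a)
    rw [abs_le]; constructor <;> linarith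
  calc ∫ y in b..a, |pker a t x y| ≤ ∫ y in (0:ℝ)..a, |pker a t x y| :=
        intervalIntegral.integral_mono_interval hb0 hba le_rfl
          (Eventually.of_forall fun y => abs_nonneg _) (h3.intervalIntegrable _ _)
    _ ≤ ∫ y in (0:ℝ)..a, (1/a) * (thetaFn (x/a - y/a) (t/a^2) + thetaFn (x/a + y/a) (t/a^2)) :=
        intervalIntegral.integral_mono_on ha.le (h3.intervalIntegrable _ _) (h4.intervalIntegrable _ _)
          (fun y _ => hle y)
    _ = 1 := by
        rw [intervalIntegral.integral_const_mul, intervalIntegral.integral_add (h1.intervalIntegrable _ _) (h2.intervalIntegrable _ _),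
          intervalIntegral.integral_comp_sub_div (fun z => thetaFn z (t/a^2)) ha.ne',
          intervalIntegral.integral_comp_add_div (fun z => thetaFn z (t/a^2)) ha.ne', div_self ha.ne', zero_div, sub_zero, add_zero,
          ← smul_add, intervalIntegral.integral_add_adjacent_intervals (hc.intervalIntegrable _ _) (hc.intervalIntegrable _ _),
          aux_theta_int _ hs]
        simp [ha.ne']

set_option maxHeartbeats 1000000

/-- Sharp first-moment formula for the expected number of particles in `[r,a]`
at time `t`, in terms of `θ'` (partial derivative of θ in its first variable). -/
theorem stmt16 :
    ∃ C : ℝ, 0 < C ∧ ∀ a : ℝ, π ≤ a → (1/2 : ℝ) ≤ muFn a →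
      ∀ t : ℝ, 0 < t → ∀ x ∈ Set.Icc (0:ℝ) a, ∀ r ∈ Set.Icc (0:ℝ) a,
      (t ≤ a^2 → r + a/20 ≤ x) →
      |(∫ y in r..a, pdens a t x y) -
          (1 + muFn a * r) * Real.exp (muFn a * (x - r)) *
            (-(2 * Real.exp (π^2 * t / (2 * a^2)) / a^2) *
              deriv (fun z => thetaFn z (t / a^2)) (x / a))| ≤
        C * (1 + muFn a * r) * Real.exp (muFn a * (x - r)) * (1 + r^2) *
          max (Real.sin (π * x / a)) (if t ≤ a^2 then 1 else 0) / a^4 := by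
  obtain ⟨K1, hK1, large⟩ := aux_large
  obtain ⟨K2, hK2, small⟩ := aux_small
  set E0 := Real.exp (π^2/2) with hE0
  have hE0p : 0 < E0 := Real.exp_pos _
  refine ⟨20000000*(2*K1) + (20000000*(2*K2*E0) + E0*(24*80^4)), by positivity, ?_⟩
  intro a hpa hmu t ht x hx r hr hcond
  have ha : 0 < a := lt_of_lt_of_le Real.pi_pos hpa
  have hq : 0 ≤ 1 - π^2/a^2 := by
    have : π^2/a^2 ≤ 1 := by
      rw [div_le_one (by positivity)]
      exact pow_le_pow_left₀ Real.pi_pos.le hpa 2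
    linarith
  have hma : (muFn a)^2 = 1 - π^2/a^2 := Real.sq_sqrt hq
  have hm1 : muFn a ≤ 1 := by
    have : 0 ≤ π^2/a^2 := by positivity
    by_contra hcon
    push Not at hcon
    nlinarith
  set m := muFn a with hm
  have hm0 : 0 < m := by linarith
  have hs : 0 < t/a^2 := by positivity
  set E := Real.exp (π^2*t/(2*a^2)) with hE
  have hEp : 0 < E := Real.exp_pos _
  have hE' : Real.exp (π^2*(t/a^2)/2) = E := by rw [hE]; congr 1; ring
  set A := -(2 * E / a^2) * deriv (fun z => thetaFn z (t / a^2)) (x / a) with hA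
  have hAabs : |A| = 2 * (E * |deriv (fun z => thetaFn z (t / a^2)) (x / a)|) / a^2 := by
    rw [hA, abs_mul, abs_neg, abs_of_pos (by positivity : 0 < 2*E/a^2)]; ring
  set P : ℝ → ℝ := fun y => E * pker a t x y with hP
  have hPc : Continuous P := continuous_const.mul (aux_pker_cont a t x ha ht)
  have hconv : ∀ y, P y - A*y = E / a * auxT (t/a^2) (x/a) (y/a) := fun y => aux_conv a t x y ha ht
  have hPabs : ∀ y, |P y - A*y| = E * |auxT (t/a^2) (x/a) (y/a)| / a := by
    intro y
    rw [hconv, abs_mul, abs_of_pos (by positivity : 0 < E/a)]; ring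
  have hsin : 0 ≤ Real.sin (π*(x/a)) := by
    apply Real.sin_nonneg_of_nonneg_of_le_pi
    · have := hx.1; positivity
    · have : x/a ≤ 1 := (div_le_one ha).mpr hx.2
      nlinarith [Real.pi_pos]
  have hsx : Real.sin (π * x / a) = Real.sin (π*(x/a)) := by rw [mul_div_assoc]
  have hQc : Continuous (fun y => Real.exp (-(m*y)) * P y) := by fun_prop
  have hint : ∫ y in r..a, pdens a t x y = Real.exp (m*x) * ∫ y in r..a, Real.exp (-(m*y)) * P y := by
    rw [← intervalIntegral.integral_const_mul]
    congr 1
    ext y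
    unfold pdens
    rw [Real.exp_add, ← hm, hP, show m*(x-y) = m*x + -(m*y) by ring, Real.exp_add]
    ring
  have hexp : Real.exp (m*(x-r)) = Real.exp (m*x) * Real.exp (-(m*r)) := by
    rw [← Real.exp_add]; ring_nf
  set D := (1+m*r)*(1+r^2)*Real.exp (-(m*r))/a^4 with hD
  have hr0 := hr.1
  have hD0 : 0 ≤ D := by positivity
  set mx := max (Real.sin (π * x / a)) (if t ≤ a^2 then (1:ℝ) else 0) with hmx
  have hmx0 : 0 ≤ mx := le_max_of_le_left (by rw [hsx]; exact hsin)
  -- reduction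
  suffices hmain : |(∫ y in r..a, Real.exp (-(m*y)) * P y) - A*(1+m*r)*Real.exp (-(m*r))|
      ≤ (20000000*(2*K1) + (20000000*(2*K2*E0) + E0*(24*80^4))) * D * mx by
    rw [hint, hexp, show Real.exp (m*x) * (∫ y in r..a, Real.exp (-(m*y)) * P y)
        - (1+m*r) * (Real.exp (m*x) * Real.exp (-(m*r))) * A
      = Real.exp (m*x) * ((∫ y in r..a, Real.exp (-(m*y)) * P y) - A*(1+m*r)*Real.exp (-(m*r))) by ring,
      abs_mul, abs_of_pos (Real.exp_pos _)]
    refine (mul_le_mul_of_nonneg_left hmain (Real.exp_pos _).le).trans (le_of_eq ?_)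
    rw [hD]; ring
  by_cases hta : t ≤ a^2
  · have hmx1 : 1 ≤ mx := le_max_of_le_right (by rw [if_pos hta])
    have hs1 : t/a^2 ≤ 1 := (div_le_one (by positivity)).mpr hta
    have hxr := hcond hta
    have hEE0 : E ≤ E0 := by
      rw [← hE', hE0]
      apply Real.exp_le_exp.mpr
      have : 0 < π^2 := by positivity
      nlinarith
    have hxi : x/a ∈ Set.Icc (1/20 : ℝ) 1 :=
      ⟨by rw [le_div_iff₀ ha]; linarith, (div_le_one ha).mpr hx.2⟩
    obtain ⟨s1, s2⟩ := small (t/a^2) (x/a) hs hs1 hxi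
    set b := r + a/40 with hb
    have hba : b ≤ a := by linarith [hx.2]
    have hrb : r ≤ b := by linarith
    have core := aux_core a r b m A (2*K2*E0) P ha hmu hm1 hma hr0 hrb
      (by rw [hb]; nlinarith) hPc
      (by
        rw [hAabs]
        have : E * |deriv (fun z => thetaFn z (t / a^2)) (x / a)| ≤ E0 * K2 := by gcongr
        apply div_le_div_of_nonneg_right _ (by positivity)
        linarith)
      (fun y hy => by
        have hy0 : 0 ≤ y := hr0.trans hy.1
        have h1 := s2 (y/a) (by positivity) (by
          rw [div_le_iff₀ ha, sub_mul, div_mul_cancel₀ _ ha.ne']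
          linarith [hy.2])
        rw [hPabs]
        calc E * |auxT (t/a^2) (x/a) (y/a)| / a ≤ E0 * (K2 * (y/a)^3) / a := by gcongr
          _ = (K2*E0)*y^3/a^4 := by field_simp
          _ ≤ _ := by
            have : 0 ≤ K2*E0 := by positivity
            gcongr
            linarith)
    have tail : |∫ y in b..a, Real.exp (-(m*y)) * P y| ≤ E0*(24*80^4) * D := by
      have h1 : |∫ y in b..a, Real.exp (-(m*y)) * P y| ≤ ∫ y in b..a, (Real.exp (-(m*b)) * E0) * |pker a t x y| := by
        refine (intervalIntegral.abs_integral_le_integral_abs hba).trans ?_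
        refine intervalIntegral.integral_mono_on hba (hQc.abs.intervalIntegrable _ _)
          ((continuous_const.mul (aux_pker_cont a t x ha ht).abs).intervalIntegrable _ _) ?_
        intro y hy
        rw [hP]
        simp only
        rw [abs_mul, abs_mul, abs_of_pos (Real.exp_pos _), abs_of_pos hEp, ← mul_assoc]
        gcongr
        exact hy.1
      rw [intervalIntegral.integral_const_mul] at h1
      have h2 := aux_pker_int a t x b ha ht (hr0.trans hrb) hba
      have h3 : Real.exp (-(m*b)) ≤ Real.exp (-(m*r)) * (24*80^4/a^4) := by
        have e1 : Real.exp (-(m*b)) ≤ Real.exp (-(m*r)) * Real.exp (-(a/80)) := by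
          rw [← Real.exp_add]
          apply Real.exp_le_exp.mpr
          have := mul_le_mul_of_nonneg_right hmu ha.le
          rw [hb]; linarith
        have e2 : Real.exp (-(a/80)) ≤ 24*80^4/a^4 := by
          have := Real.pow_div_factorial_le_exp (x := a/80) (by positivity) 4
          have h24 : ((4 : ℕ).factorial : ℝ) = 24 := by norm_num [Nat.factorial]
          rw [h24] at this
          rw [Real.exp_neg]
          calc (Real.exp (a/80))⁻¹ ≤ ((a/80)^4/24)⁻¹ := by gcongr
            _ = _ := by field_simp
        exact e1.trans (by gcongr)
      have h4 : 1 ≤ (1+m*r)*(1+r^2) := by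
        have p1 : 0 ≤ m*r := by positivity
        have p2 : 0 ≤ r^2 := by positivity
        nlinarith [mul_nonneg p1 p2]
      calc |∫ y in b..a, Real.exp (-(m*y)) * P y| ≤ (Real.exp (-(m*b)) * E0) * 1 :=
            h1.trans (by gcongr)
        _ ≤ (Real.exp (-(m*r)) * (24*80^4/a^4) * E0) * ((1+m*r)*(1+r^2)) := by gcongr
        _ = _ := by rw [hD]; ring
    have hsplit : ∫ y in r..a, Real.exp (-(m*y)) * P y
        = (∫ y in r..b, Real.exp (-(m*y)) * P y) + ∫ y in b..a, Real.exp (-(m*y)) * P y :=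
      (intervalIntegral.integral_add_adjacent_intervals (hQc.intervalIntegrable _ _) (hQc.intervalIntegrable _ _)).symm
    rw [hsplit]
    have tri := abs_add_le ((∫ y in r..b, Real.exp (-(m*y)) * P y) - A*(1+m*r)*Real.exp (-(m*r)))
      (∫ y in b..a, Real.exp (-(m*y)) * P y)
    rw [show (∫ y in r..b, Real.exp (-(m*y)) * P y) + (∫ y in b..a, Real.exp (-(m*y)) * P y) - A*(1+m*r)*Real.exp (-(m*r))
      = ((∫ y in r..b, Real.exp (-(m*y)) * P y) - A*(1+m*r)*Real.exp (-(m*r))) + ∫ y in b..a, Real.exp (-(m*y)) * P y by ring]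
    have hk : 0 ≤ K1 * D := by positivity
    calc _ ≤ (20000000*(2*K1) + (20000000*(2*K2*E0) + E0*(24*80^4))) * D * 1 := by
          linarith
      _ ≤ _ := by gcongr
  · have hs1 : 1 ≤ t/a^2 := (one_le_div (by positivity)).mpr (by linarith)
    obtain ⟨l1, l2⟩ := large (t/a^2) (x/a) hs1 hsin
    rw [hE'] at l1 l2
    have core := aux_core a r a m A (2*(K1*Real.sin (π*(x/a)))) P ha hmu hm1 hma hr0 hr.2
      (by nlinarith [hr.2, mul_nonneg hr0 (sub_nonneg.mpr hr.2)]) hPc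
      (by rw [hAabs]; gcongr)
      (fun y hy => by
        have hy0 : 0 ≤ y := hr0.trans hy.1
        have h1 := l2 (y/a) (by positivity)
        rw [hPabs]
        calc E * |auxT (t/a^2) (x/a) (y/a)| / a ≤ K1 * Real.sin (π*(x/a)) * (y/a)^3 / a := by gcongr
          _ = (K1*Real.sin (π*(x/a)))*y^3/a^4 := by field_simp
          _ ≤ _ := by
            have : 0 ≤ K1*Real.sin (π*(x/a)) * y^3 := by positivity
            apply div_le_div_of_nonneg_right _ (by positivity)
            linarith)
    refine core.trans ?_
    have hle : Real.sin (π*(x/a)) ≤ mx := by rw [← hsx]; exact le_max_left _ _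
    calc _ = 20000000*(2*K1) * D * Real.sin (π*(x/a)) := by rw [hD]; ring
      _ ≤ 20000000*(2*K1) * D * mx := by gcongr
      _ ≤ _ := by
        gcongr
        have : 0 ≤ 20000000*(2*K2*E0) + E0*(24*80^4) := by positivity
        linarith
end
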